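/- arXiv:1007.0157 — 5 statements merged into one kernel-verified Lean document; each statement's English description precedes it below -/
import Mathlib

section
/- Let F be a free group of finite rank, and let u₁, ..., u_k, v be nontrivial elements of F such that for each i, the elements v and u_i do not lie in conjugate cyclic subgroups. Then for every sufficiently large prime p and every natural number N, there exists a homomorphism φ from F onto a finite p-group such that |φ(u₁)| = |φ(u₂)| = ... = |φ(u_k)| > |φ(v)| > 1 and |φ(u₁)| > N. -/
open Subgroup

/-- `x` and `y` lie in conjugate cyclic subgroups: some conjugate of `⟨x⟩`
and `⟨y⟩` are contained in a common cyclic subgroup. -/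
def InConjCyclic {G : Type} [Group G] (x y : G) : Prop :=
  ∃ (g z : G), (Subgroup.zpowers x).map (MulAut.conj g).toMonoidHom ≤ Subgroup.zpowers z ∧
    Subgroup.zpowers y ≤ Subgroup.zpowers z

/-- Matrices supported on or above the `k`-th superdiagonal. -/
def Lv {m : ℕ} {R : Type} [CommRing R] (k : ℕ) (A : Matrix (Fin m) (Fin m) R) : Prop :=
  ∀ i j : Fin m, (j : ℕ) < i + k → A i j = 0

section LvSec
variable {m : ℕ} {R : Type} [CommRing R]

theorem Lv.mul {a b : ℕ} {A B : Matrix (Fin m) (Fin m) R} (hA : Lv a A) (hB : Lv b B) :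
    Lv (a + b) (A * B) := by
  intro i j hij
  rw [Matrix.mul_apply]
  apply Finset.sum_eq_zero
  intro x _
  by_cases h : (x : ℕ) < i + a
  · rw [hA i x h, zero_mul]
  · rw [hB x j (by omega), mul_zero]

theorem Lv.add {a : ℕ} {A B : Matrix (Fin m) (Fin m) R} (hA : Lv a A) (hB : Lv a B) :
    Lv a (A + B) := by
  intro i j hij
  rw [Matrix.add_apply, hA i j hij, hB i j hij, add_zero]

theorem Lv.mono {a b : ℕ} (h : b ≤ a) {A : Matrix (Fin m) (Fin m) R} (hA : Lv a A) :
    Lv b A := fun i j hij => hA i j (by omega)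

theorem Lv.neg {a : ℕ} {A : Matrix (Fin m) (Fin m) R} (hA : Lv a A) : Lv a (-A) := by
  intro i j hij
  rw [Matrix.neg_apply, hA i j hij, neg_zero]

theorem Lv.one_pow : ∀ (k : ℕ) {A : Matrix (Fin m) (Fin m) R}, Lv 1 A → Lv k (A ^ k)
  | 0, A, _ => by
      intro i j hij
      rw [pow_zero, Matrix.one_apply_ne]
      intro h; subst h; omega
  | k + 1, A, h => by
      rw [pow_succ]
      exact (Lv.one_pow k h).mul h

theorem Lv.eq_zero {a : ℕ} (h : m ≤ a) {A : Matrix (Fin m) (Fin m) R} (hA : Lv a A) : A = 0 := by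
  ext i j
  exact hA i j (by omega)

theorem Lv.mul_diag {a b : ℕ} {A B : Matrix (Fin m) (Fin m) R} (hA : Lv a A) (hB : Lv b B)
    (i x j : Fin m) (hx : (x : ℕ) = i + a) (hj : (j : ℕ) = x + b) :
    (A * B) i j = A i x * B x j := by
  rw [Matrix.mul_apply]
  apply Finset.sum_eq_single x
  · intro y _ hy
    by_cases h : (y : ℕ) < i + a
    · rw [hA i y h, zero_mul]
    · have : (y : ℕ) ≠ x := fun h => hy (Fin.ext h)
      rw [hB y j (by omega), mul_zero]
  · intro h; exact absurd (Finset.mem_univ _) h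

theorem Lv.corner {q : ℕ} {A : Matrix (Fin (q + 1)) (Fin (q + 1)) R} (hA : Lv 1 A) :
    ∀ (k : ℕ) (hk : k ≤ q), (A ^ k) 0 ⟨k, by omega⟩ =
      ∏ l : Fin k, A ⟨l, by omega⟩ ⟨l + 1, by omega⟩
  | 0, _ => by simp
  | k + 1, hk => by
      rw [pow_succ, (hA.one_pow k).mul_diag hA 0 ⟨k, by omega⟩ ⟨k + 1, by omega⟩ (by simp) (by simp),
        Lv.corner hA k (by omega), Fin.prod_univ_castSucc]
      simp

end LvSec

/-- The unitriangular group. -/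
def UT (p m : ℕ) [NeZero p] : Subgroup (Matrix (Fin m) (Fin m) (ZMod p))ˣ where
  carrier := {A | Lv 1 (A.val - 1)}
  one_mem' := by
    intro i j _
    simp
  mul_mem' := by
    intro A B hA hB
    have : ((A * B).val - 1) = (A.val - 1) * (B.val - 1) + (A.val - 1) + (B.val - 1) := by
      rw [Units.val_mul]; noncomm_ring
    show Lv 1 _
    rw [this]
    exact (((Lv.mul hA hB).mono (by omega)).add hA).add hB
  inv_mem' := by
    intro A hA
    have h1 : A⁻¹ ∈ Submonoid.powers A := by
      rw [mem_powers_iff_mem_zpowers]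
      exact Subgroup.inv_mem _ (Subgroup.mem_zpowers A)
    obtain ⟨k, hk⟩ := h1
    show Lv 1 _
    rw [← hk]
    simp only
    clear hk
    induction k with
    | zero => intro i j _; simp
    | succ k ih =>
      have : ((A ^ (k + 1)).val - 1) = ((A ^ k).val - 1) * (A.val - 1) + ((A ^ k).val - 1) + (A.val - 1) := by
        rw [pow_succ, Units.val_mul]; noncomm_ring
      rw [this]
      exact (((Lv.mul ih hA).mono (by omega)).add ih).add hA

theorem UT.pow_eq {p m : ℕ} [Fact p.Prime] (A : UT p m) (e : ℕ) :
    (A ^ p ^ e).val.val = 1 + (A.val.val - 1) ^ p ^ e := by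
  rcases Nat.eq_zero_or_pos m with h | h
  · subst h
    ext i; exact i.elim0
  haveI : Nonempty (Fin m) := ⟨⟨0, h⟩⟩
  have : (A ^ p ^ e).val.val = (1 + (A.val.val - 1)) ^ p ^ e := by
    simp
  rw [this, add_pow_char_pow_of_commute p (n := e), one_pow]
  exact Commute.one_left _

theorem UT.pow_one {p m : ℕ} [Fact p.Prime] (A : UT p m) (e : ℕ) (h : m ≤ p ^ e) :
    A ^ p ^ e = 1 := by
  apply Subtype.ext
  apply Units.ext
  rw [UT.pow_eq, ((Lv.one_pow (p ^ e) A.2).eq_zero h)]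
  simp

/-- A strictly upper triangular matrix gives an element. -/
theorem UT.exists_of {p m : ℕ} [NeZero p] (N : Matrix (Fin m) (Fin m) (ZMod p)) (hN : Lv 1 N) :
    ∃ A : UT p m, A.val.val = 1 + N := by
  have hnil : IsNilpotent N := ⟨m, (Lv.one_pow m hN).eq_zero le_rfl⟩
  obtain ⟨A, hA⟩ := hnil.isUnit_one_add
  refine ⟨⟨A, ?_⟩, hA⟩
  show Lv 1 _
  rw [hA]
  simpa using hN

theorem lemmaT (p e : ℕ) [Fact p.Prime] : ∃ (T : Type) (_ : Group T) (_ : Finite T)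
    (σ : Fin (p ^ e) → (T →* Multiplicative (ZMod p))),
    (∀ a : Fin (p ^ e) → ZMod p, ∃ t : T, ∀ l, σ l t = Multiplicative.ofAdd (a l)) ∧
    (∀ t : T, t ^ p ^ (e + 1) = 1) ∧
    (∀ t : T, t ^ p ^ e = 1 ↔ ∃ l, σ l t = 1) := by
  have hp1 : 1 < p := (Fact.out : p.Prime).one_lt
  refine ⟨UT p (p ^ e + 1), inferInstance, inferInstance, fun l =>
    { toFun := fun A => Multiplicative.ofAdd ((A.val.val - 1) l.castSucc l.succ)
      map_one' := by simp
      map_mul' := ?_ }, ?_, ?_, ?_⟩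
  · intro A B
    rw [← ofAdd_add]
    congr 1
    have : ((A * B).val.val - 1) = (A.val.val - 1) * (B.val.val - 1) + (A.val.val - 1) + (B.val.val - 1) := by
      rw [Subgroup.coe_mul, Units.val_mul]; noncomm_ring
    rw [this, Matrix.add_apply, Matrix.add_apply, (Lv.mul A.2 B.2) _ _ (by simp), zero_add]
  · intro a
    obtain ⟨A, hA⟩ := UT.exists_of (p := p) (m := p ^ e + 1)
      (Matrix.of fun i j => if h : (i : ℕ) < p ^ e then (if (j : ℕ) = i + 1 then a ⟨i, h⟩ else 0) else 0)
      (by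
        intro i j hij
        simp only [Matrix.of_apply]
        split_ifs <;> first | rfl | omega)
    refine ⟨A, fun l => ?_⟩
    simp [hA]
  · intro t
    apply UT.pow_one
    rw [pow_succ]
    have : 0 < p ^ e := by positivity
    nlinarith
  · intro t
    have key : (t ^ p ^ e = 1) ↔ ((t.val.val - 1) ^ p ^ e = 0) := by
      constructor
      · intro h
        have := UT.pow_eq t e
        rw [h] at this
        simpa using this.symm
      · intro h
        apply Subtype.ext
        apply Units.ext
        rw [UT.pow_eq, h]; simp
    have c := Lv.corner (A := t.val.val - 1) t.2 (p ^ e) le_rfl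
    have c2 : ((t.val.val - 1) ^ p ^ e = 0) ↔ ((t.val.val - 1) ^ p ^ e) 0 ⟨p ^ e, by omega⟩ = 0 := by
      constructor
      · intro h; rw [h]; rfl
      · intro h
        ext i j
        by_cases hij : (j : ℕ) < i + p ^ e
        · exact Lv.one_pow (p ^ e) t.2 i j hij
        · have hi : i = 0 := by apply Fin.ext; show (i : ℕ) = 0; omega
          have hj : j = ⟨p ^ e, by omega⟩ := by apply Fin.ext; simp; omega
          rw [hi, hj, h]; rfl
    rw [key, c2, c, Finset.prod_eq_zero_iff]
    constructor
    · rintro ⟨l, _, h⟩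
      refine ⟨l, ?_⟩
      show Multiplicative.ofAdd _ = 1
      rw [ofAdd_eq_one]
      exact h
    · rintro ⟨l, h⟩
      refine ⟨l, Finset.mem_univ _, ?_⟩
      exact ofAdd_eq_one.mp h

/-- Edge matrix for the label `a` on the line. -/
def XM {Λ : Type} [DecidableEq Λ] (p m : ℕ) (lab : ℕ → Λ) (a : Λ) : Matrix (Fin m) (Fin m) (ZMod p) :=
  Matrix.of fun i j => if (j : ℕ) = i + 1 ∧ lab i = a then 1 else 0

section XMSec
variable {Λ : Type} [DecidableEq Λ] {p m : ℕ} {lab : ℕ → Λ}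

theorem XM.lv (a : Λ) : Lv 1 (XM p m lab a) := by
  intro i j h
  simp only [XM, Matrix.of_apply]
  rw [if_neg]; omega

theorem XM.sq (hl : ∀ t, t + 2 < m → lab t ≠ lab (t + 1)) (a : Λ) :
    XM p m lab a * XM p m lab a = 0 := by
  ext i j
  rw [Matrix.mul_apply]
  apply Finset.sum_eq_zero
  intro x _
  simp only [XM, Matrix.of_apply]
  by_cases h1 : (x : ℕ) = i + 1 ∧ lab i = a
  · by_cases h2 : (j : ℕ) = x + 1 ∧ lab x = a
    · exfalso
      apply hl i (by omega)
      rw [h1.2, ← h1.1, h2.2]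
    · rw [if_neg h2, mul_zero]
  · rw [if_neg h1, zero_mul]

/-- Row vector condition. -/
def RowP (k : ℕ) (w : Fin m → ZMod p) : Prop :=
  (∀ j : Fin m, k < (j : ℕ) → w j = 0) ∧ (∀ j : Fin m, (j : ℕ) = k → w j = 1 ∨ w j = -1)

theorem RowP.step {k : ℕ} {w : Fin m → ZMod p} (hw : RowP k w) (ε : ZMod p)
    (hε : ε = 1 ∨ ε = -1) (a : Λ) (ha : lab k = a) :
    RowP (k + 1) (Matrix.vecMul w (1 + ε • XM p m lab a)) := by
  have hf : ∀ j, Matrix.vecMul w (1 + ε • XM p m lab a) j =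
      w j + ε * ∑ i, w i * (if (j : ℕ) = i + 1 ∧ lab i = a then 1 else 0) := by
    intro j
    rw [Matrix.vecMul_add, Matrix.vecMul_one, Matrix.vecMul_smul]
    simp [Matrix.vecMul, dotProduct, XM]
  constructor
  · intro j hj
    rw [hf, hw.1 j (by omega), Finset.sum_eq_zero]
    · simp
    · intro i _
      by_cases h : (j : ℕ) = i + 1 ∧ lab i = a
      · rw [hw.1 i (by omega), zero_mul]
      · rw [if_neg h, mul_zero]
  · intro j hj
    have hk : k < m := by omega
    rw [hf, hw.1 j (by omega), Finset.sum_eq_single (⟨k, hk⟩ : Fin m)]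
    · rw [if_pos ⟨hj, ha⟩]
      rcases hw.2 ⟨k, hk⟩ rfl with h | h <;> rcases hε with h' | h' <;> simp [h, h']
    · intro i _ hi
      rw [if_neg, mul_zero]
      rintro ⟨h, _⟩
      apply hi
      apply Fin.ext
      show (i : ℕ) = k
      omega
    · intro h; exact absurd (Finset.mem_univ _) h

theorem XM.exists_unit [NeZero p] (hl : ∀ t, t + 2 < m → lab t ≠ lab (t + 1)) (a : Λ) :
    ∃ A : UT p m, A.val.val = 1 + (1 : ZMod p) • XM p m lab a ∧
      (A⁻¹).val.val = 1 + (-1 : ZMod p) • XM p m lab a := by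
  obtain ⟨A, hA⟩ := UT.exists_of (p := p) _ (XM.lv (p := p) (m := m) (lab := lab) a)
  refine ⟨A, by simp [hA], ?_⟩
  rw [Subgroup.coe_inv]
  apply Units.inv_eq_of_mul_eq_one_right
  rw [hA]
  have := XM.sq (p := p) hl a
  simp only [neg_smul, one_smul]
  have h2 : (1 + XM p m lab a) * (1 + -XM p m lab a) = 1 - XM p m lab a * XM p m lab a := by
    noncomm_ring
  rw [h2, this, sub_zero]

end XMSec

theorem lemmaM {r : ℕ} (g : FreeGroup (Fin r)) (hg : g ≠ 1) :
    ∃ p₀ : ℕ, ∀ p : ℕ, p.Prime → p₀ ≤ p →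
      ∃ (Q : Type) (_ : Group Q) (_ : Finite Q) (φ : FreeGroup (Fin r) →* Q),
        (∀ h, (φ h) ^ p = 1) ∧ φ g ≠ 1 := by
  set L := g.toWord with hL
  have hLne : L ≠ [] := by
    intro h
    apply hg
    exact FreeGroup.toWord_eq_nil_iff.mp h
  have hpos : 0 < L.length := List.length_pos_iff.mpr hLne
  set n := L.length with hn
  have hred : FreeGroup.IsReduced L := FreeGroup.isReduced_toWord
  set c : ℕ → Fin r × Bool := fun t => L.getD t (L.head hLne) with hc
  have hcr : ∀ t, t + 1 < n → ((c t).1 = (c (t + 1)).1 → (c t).2 = (c (t + 1)).2) := by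
    intro t ht
    have := List.isChain_iff_getElem.mp hred t (by omega)
    have e1 : c t = L[t] := List.getD_eq_getElem _ _ (show t < L.length by omega)
    have e2 : c (t + 1) = L[t + 1] :=
      List.getD_eq_getElem _ _ (show t + 1 < L.length by omega)
    rw [e1, e2]; exact this
  refine ⟨2 * n + 1, fun p hp hpn => ?_⟩
  haveI : Fact p.Prime := ⟨hp⟩
  let lab : ℕ → Fin r × Bool := fun s =>
    if s % 2 = 0 then ((c (s / 2)).1, !(c (s / 2)).2) else c (s / 2)
  have lab0 : ∀ t, lab (2 * t) = ((c t).1, !(c t).2) := by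
    intro t; simp [lab]
  have lab1 : ∀ t, lab (2 * t + 1) = c t := by
    intro t
    have : (2 * t + 1) / 2 = t := by omega
    simp [lab, this, Nat.add_mod]
  have hl : ∀ t, t + 2 < 2 * n + 1 → lab t ≠ lab (t + 1) := by
    intro t ht
    rcases Nat.even_or_odd' t with ⟨s, rfl | rfl⟩
    · rw [lab0, lab1]
      intro h
      have := congrArg Prod.snd h
      simp at this
    · rw [lab1, show 2 * s + 1 + 1 = 2 * (s + 1) by ring, lab0]
      intro h
      have h1 := congrArg Prod.fst h
      have h2 := congrArg Prod.snd h
      have := hcr s (by omega) h1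
      simp only at h2
      rw [this] at h2
      simp at h2
  choose U hU1 hU2 using fun a => XM.exists_unit (p := p) (m := 2 * n + 1) hl a
  let φ : FreeGroup (Fin r) →* UT p (2 * n + 1) :=
    FreeGroup.lift fun i => U (i, false) * U (i, true)
  refine ⟨UT p (2 * n + 1), inferInstance, inferInstance, φ, ?_, ?_⟩
  · intro h
    have := UT.pow_one (φ h) 1 (by simpa using hpn)
    simpa using this
  · have main : ∀ t, t ≤ n → RowP (2 * t) ((φ (FreeGroup.mk (L.take t))).val.val 0) := by
      intro t
      induction t with
      | zero =>
        intro _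
        have : (FreeGroup.mk (L.take 0)) = 1 := by simp [FreeGroup.one_eq_mk]
        rw [this, map_one]
        constructor
        · intro j hj
          simp only [Subgroup.coe_one, Units.val_one]
          rw [Matrix.one_apply_ne]
          intro h; rw [← h] at hj; simp at hj
        · intro j hj
          left
          have : j = 0 := by apply Fin.ext; simpa using hj
          rw [this]; simp
      | succ t ih =>
        intro ht
        have ih := ih (by omega)
        have htk : L.take (t + 1) = L.take t ++ [c t] := by
          rw [List.take_add_one]
          congr 1
          simp [hc, List.getElem?_eq_getElem (show t < L.length by omega)]
        have hmk : FreeGroup.mk (L.take (t + 1)) =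
            FreeGroup.mk (L.take t) * FreeGroup.mk [c t] := by
          rw [htk, FreeGroup.mul_mk]
        have hrow : ∀ A B : UT p (2 * n + 1), (A * B).val.val 0 =
            Matrix.vecMul (A.val.val 0) B.val.val := by
          intro A B; ext j; rfl
        rw [hmk, map_mul]
        have hlet : ∃ A B : UT p (2 * n + 1), φ (FreeGroup.mk [c t]) = A * B ∧
            ∃ ε : ZMod p, (ε = 1 ∨ ε = -1) ∧
              A.val.val = 1 + ε • XM p (2 * n + 1) lab (lab (2 * t)) ∧
              B.val.val = 1 + ε • XM p (2 * n + 1) lab (lab (2 * t + 1)) := by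
          rw [lab0, lab1]
          rcases hct : c t with ⟨i, b⟩
          cases b with
          | true =>
            refine ⟨U (i, false), U (i, true), ?_, 1, Or.inl rfl, hU1 _, hU1 _⟩
            simp [φ, FreeGroup.lift_mk]
          | false =>
            refine ⟨(U (i, true))⁻¹, (U (i, false))⁻¹, ?_, -1, Or.inr rfl, hU2 _, hU2 _⟩
            simp [φ, FreeGroup.lift_mk]
        obtain ⟨A, B, hAB, ε, hε, hA, hB⟩ := hlet
        rw [hAB, ← mul_assoc, hrow, hrow, hA, hB]
        exact (ih.step ε hε _ rfl).step ε hε _ rfl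
    intro h1
    have := main n le_rfl
    have hgl : FreeGroup.mk (L.take n) = g := by
      rw [hn, List.take_length, hL, FreeGroup.mk_toWord]
    rw [hgl, h1] at this
    have h2 := this.2 ⟨2 * n, by omega⟩ rfl
    simp only [Subgroup.coe_one, Units.val_one] at h2
    rw [Matrix.one_apply_ne] at h2
    · haveI : Nontrivial (ZMod p) := inferInstance
      rcases h2 with h | h
      · exact zero_ne_one h
      · exact one_ne_zero (neg_eq_zero.mp h.symm)
    · intro h
      have := congrArg Fin.val h
      simp at this
      omega

theorem lemmaM_set {r : ℕ} (S : Finset (FreeGroup (Fin r))) :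
    ∃ p₀ : ℕ, ∀ p : ℕ, p.Prime → p₀ ≤ p →
      ∃ (Q : Type) (_ : Group Q) (_ : Finite Q) (φ : FreeGroup (Fin r) →* Q),
        (∀ h, (φ h) ^ p = 1) ∧ ∀ g ∈ S, g ≠ 1 → φ g ≠ 1 := by
  classical
  induction S using Finset.induction_on with
  | empty =>
    refine ⟨0, fun p _ _ => ⟨Unit, inferInstance, inferInstance, 1, by simp, by simp⟩⟩
  | insert a S _ ih =>
    obtain ⟨p₀, h₀⟩ := ih
    by_cases ha : a = 1
    · refine ⟨p₀, fun p hp hpp => ?_⟩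
      obtain ⟨Q, i1, i2, φ, h1, h2⟩ := h₀ p hp hpp
      refine ⟨Q, i1, i2, φ, h1, ?_⟩
      intro g hg hg1
      rcases Finset.mem_insert.mp hg with rfl | h
      · exact absurd ha hg1
      · exact h2 g h hg1
    · obtain ⟨p₁, h₁⟩ := lemmaM a ha
      refine ⟨max p₀ p₁, fun p hp hpp => ?_⟩
      obtain ⟨Q, i1, i2, φ, h1, h2⟩ := h₀ p hp (le_trans (le_max_left _ _) hpp)
      obtain ⟨Q', i1', i2', φ', h1', h2'⟩ := h₁ p hp (le_trans (le_max_right _ _) hpp)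
      refine ⟨Q × Q', inferInstance, inferInstance, φ.prod φ', ?_, ?_⟩
      · intro h
        simp [Prod.ext_iff, h1, h1']
      · intro g hg hg1 he
        have hee := Prod.ext_iff.mp he
        rcases Finset.mem_insert.mp hg with rfl | h
        · exact h2' hee.2
        · exact h2 g h hg1 hee.1

/-- The inverse letter. -/
def invL {r : ℕ} (a : Fin r × Bool) : Fin r × Bool := (a.1, !a.2)

theorem invL_invL {r : ℕ} (a : Fin r × Bool) : invL (invL a) = a := by simp [invL]

theorem invL_ne {r : ℕ} (a : Fin r × Bool) : a ≠ invL a := by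
  intro h
  have := congrArg Prod.snd h
  simp [invL] at this

/-- A letter as an element of the free group. -/
def ltr {r : ℕ} (a : Fin r × Bool) : FreeGroup (Fin r) := FreeGroup.mk [a]

theorem ltr_invL {r : ℕ} (a : Fin r × Bool) : ltr (invL a) = (ltr a)⁻¹ := by
  simp [ltr, invL, FreeGroup.inv_mk, FreeGroup.invRev]

/-- Product of the letters at positions `s, …, s+k-1`. -/
def seg {r : ℕ} (c : ℕ → Fin r × Bool) (s : ℕ) : ℕ → FreeGroup (Fin r)
  | 0 => 1
  | k + 1 => seg c s k * ltr (c (s + k))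

theorem seg_zero {r : ℕ} (c : ℕ → Fin r × Bool) (s : ℕ) : seg c s 0 = 1 := rfl

theorem seg_succ {r : ℕ} (c : ℕ → Fin r × Bool) (s k : ℕ) :
    seg c s (k + 1) = seg c s k * ltr (c (s + k)) := rfl

theorem seg_congr {r : ℕ} {c d : ℕ → Fin r × Bool} {s t : ℕ} :
    ∀ k, (∀ j < k, c (s + j) = d (t + j)) → seg c s k = seg d t k
  | 0, _ => rfl
  | k + 1, h => by
      rw [seg_succ, seg_succ, seg_congr k (fun j hj => h j (by omega)), h k (by omega)]

theorem seg_add {r : ℕ} (c : ℕ → Fin r × Bool) (s a : ℕ) :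
    ∀ b, seg c s (a + b) = seg c s a * seg c (s + a) b
  | 0 => by simp [seg_zero]
  | b + 1 => by
      rw [← add_assoc, seg_succ, seg_succ, seg_add c s a b, mul_assoc, add_assoc]

theorem seg_eq_mk {r : ℕ} (c : ℕ → Fin r × Bool) (s : ℕ) :
    ∀ k, seg c s k = FreeGroup.mk ((List.range k).map fun j => c (s + j))
  | 0 => by simp [seg_zero, FreeGroup.one_eq_mk]
  | k + 1 => by
      rw [seg_succ, seg_eq_mk c s k, ltr, FreeGroup.mul_mk, List.range_succ]
      simp

/-- Primitive cyclically reduced word, presented as a periodic sequence of letters. -/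
structure CycW (r : ℕ) where
  n : ℕ
  c : ℕ → Fin r × Bool
  npos : 0 < n
  per : ∀ t, c (t + n) = c t
  red : ∀ t, c (t + 1) ≠ invL (c t)
  prim : ∀ s t, (∀ j, c (s + j) = c (t + j)) → s ≡ t [MOD n]

namespace CycW
variable {r : ℕ} (w : CycW r)

/-- The group element. -/
def z : FreeGroup (Fin r) := seg w.c 0 w.n

theorem per_mul (t k : ℕ) : w.c (t + w.n * k) = w.c t := by
  induction k with
  | zero => rfl
  | succ k ih => rw [Nat.mul_succ, ← add_assoc, w.per, ih]

theorem per_mod {s t : ℕ} (h : s ≡ t [MOD w.n]) : w.c s = w.c t := by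
  have : ∀ x, w.c x = w.c (x % w.n) := by
    intro x
    conv_lhs => rw [← Nat.mod_add_div x w.n]
    rw [w.per_mul]
  rw [this s, this t, h]

theorem seg_per (s k : ℕ) : seg w.c (s + w.n) k = seg w.c s k :=
  seg_congr k fun j _ => by rw [show s + w.n + j = s + j + w.n by ring, w.per]

theorem red_list (s k : ℕ) :
    FreeGroup.IsReduced ((List.range k).map fun j => w.c (s + j)) := by
  apply List.isChain_iff_getElem.mpr
  intro i hi
  simp only [List.getElem_map, List.getElem_range]
  intro h1
  by_contra h2
  apply w.red (s + i)
  rw [← add_assoc] at h1 h2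
  apply Prod.ext
  · exact h1.symm
  · revert h2
    simp only [invL]
    cases (w.c (s + i)).2 <;> cases (w.c (s + i + 1)).2 <;> simp

theorem seg_inj {s t k : ℕ} (h : seg w.c s k = seg w.c t k) :
    ∀ j < k, w.c (s + j) = w.c (t + j) := by
  rw [seg_eq_mk, seg_eq_mk] at h
  have h2 := FreeGroup.reduce.sound h
  rw [(w.red_list s k).reduce_eq, (w.red_list t k).reduce_eq] at h2
  intro j hj
  exact (List.map_inj_left.mp h2) j (List.mem_range.mpr hj)

theorem seg_ne_one {s k : ℕ} (hk : 0 < k) : seg w.c s k ≠ 1 := by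
  intro h
  rw [seg_eq_mk, FreeGroup.one_eq_mk] at h
  have h2 := FreeGroup.reduce.sound h
  rw [(w.red_list s k).reduce_eq, FreeGroup.reduce_nil] at h2
  have h3 := congrArg List.length h2
  simp at h3
  omega

theorem rot_inj {s t : ℕ} (h : seg w.c s w.n = seg w.c t w.n) : s ≡ t [MOD w.n] := by
  apply w.prim
  intro j
  have h1 := w.seg_inj h (j % w.n) (Nat.mod_lt _ w.npos)
  rw [← w.per_mul _ (j / w.n), ← w.per_mul (t + _) (j / w.n), add_assoc, add_assoc,
    Nat.mod_add_div] at h1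
  exact h1

theorem pre_add (t : ℕ) : seg w.c 0 (t + w.n) = w.z * seg w.c 0 t := by
  rw [add_comm, seg_add, zero_add, ← zero_add w.n, w.seg_per, z, zero_add]

theorem pre_add' (t : ℕ) : seg w.c 0 (t + w.n) = seg w.c 0 t * seg w.c t w.n := by
  rw [seg_add, zero_add]

theorem pre_mul (k : ℕ) : seg w.c 0 (w.n * k) = w.z ^ k := by
  induction k with
  | zero => rfl
  | succ k ih => rw [Nat.mul_succ, w.pre_add, ih, pow_succ']

end CycW

theorem seg_periodic_pow {r : ℕ} {c : ℕ → Fin r × Bool} {q : ℕ} (h : ∀ x, c (x + q) = c x) (k : ℕ) :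
    seg c 0 (q * k) = (seg c 0 q) ^ k := by
  induction k with
  | zero => rfl
  | succ k ih =>
    rw [Nat.mul_succ, add_comm, seg_add, pow_succ', ← ih]
    congr 1
    exact seg_congr _ fun j _ => by rw [zero_add, zero_add, add_comm, h]

theorem exists_cycW {r : ℕ} (g : FreeGroup (Fin r)) (hg : g ≠ 1) :
    ∃ (w : CycW r) (h : FreeGroup (Fin r)) (m : ℕ), 0 < m ∧ g = h * w.z ^ m * h⁻¹ := by
  classical
  let Pr : ℕ → Prop := fun n => ∃ (c : ℕ → Fin r × Bool) (h : FreeGroup (Fin r)) (m : ℕ),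
    0 < m ∧ g = h * (seg c 0 n) ^ m * h⁻¹
  have hex : ∃ n, Pr n := by
    have hne : g.toWord ≠ [] := fun h => hg (FreeGroup.toWord_eq_nil_iff.mp h)
    refine ⟨g.toWord.length, fun t => g.toWord.getD t (g.toWord.head hne), 1, 1, one_pos, ?_⟩
    rw [seg_eq_mk, one_mul, pow_one, inv_one, mul_one]
    conv_lhs => rw [← FreeGroup.mk_toWord (x := g)]
    congr 1
    apply List.ext_getElem
    · simp
    · intro i h1 h2
      simp [List.getElem?_eq_getElem h1]
  obtain ⟨c₀, h, m, hm, hgc₀⟩ := Nat.find_spec hex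
  have hmin := fun k (hk : k < Nat.find hex) => Nat.find_min hex hk
  generalize hn : Nat.find hex = n at *
  have npos : 0 < n := by
    rcases Nat.eq_zero_or_pos n with h0 | h0
    · subst h0
      exfalso; apply hg; rw [hgc₀, seg_zero]; simp
    · exact h0
  let c : ℕ → Fin r × Bool := fun t => c₀ (t % n)
  have hgc : g = h * (seg c 0 n) ^ m * h⁻¹ := by
    rw [hgc₀]
    congr 3
    exact seg_congr n fun j hj => by simp [c, Nat.mod_eq_of_lt hj]
  have per : ∀ t, c (t + n) = c t := by intro t; simp [c]
  have per_mul : ∀ t k, c (t + n * k) = c t := by intro t k; simp [c]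
  have shift : ∀ s k, seg c s k = seg (fun j => c (s + j)) 0 k := by
    intro s k
    exact seg_congr k fun j _ => by simp
  refine ⟨⟨n, c, npos, per, ?_, ?_⟩, h, m, hm, hgc⟩
  · intro t ht
    have hconj : seg c 0 n = seg c 0 t * seg c t n * (seg c 0 t)⁻¹ := by
      have e1 := seg_add c 0 t n
      rw [zero_add, add_comm t n, seg_add] at e1
      rw [eq_mul_inv_iff_mul_eq, ← e1]
      congr 1
      exact seg_congr t fun j _ => by rw [zero_add, zero_add, add_comm, per]
    rcases Nat.lt_or_ge n 2 with h2 | h2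
    · have : n = 1 := by omega
      subst this
      rw [per] at ht
      exact invL_ne _ ht
    · apply hmin (n - 2) (by omega)
      refine ⟨fun j => c (t + 2 + j), h * seg c 0 t, m, hm, ?_⟩
      rw [← shift]
      have : seg c t n = seg c (t + 2) (n - 2) := by
        conv_lhs => rw [show n = 2 + (n - 2) by omega, seg_add]
        have : seg c t 2 = 1 := by
          rw [seg_succ, seg_succ, seg_zero, one_mul, add_zero, ht, ltr_invL, mul_inv_cancel]
        rw [this, one_mul]
      rw [hgc, hconj, this, conj_pow]
      group
  · intro s t hst
    have main : ∀ s d, (∀ j, c (s + j) = c (s + d + j)) → n ∣ d := by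
      intro s d hst
      have perd : ∀ x, c (x + d) = c x := by
        intro x
        have hx : s ≤ x + n * s := by nlinarith
        obtain ⟨y, hy⟩ := Nat.exists_eq_add_of_le hx
        rw [← per_mul x s, hy, hst, ← per_mul (x + d) s]
        congr 1
        omega
      have perd_mul : ∀ x k, c (x + d * k) = c x := by
        intro x k
        induction k with
        | zero => rfl
        | succ k ih => rw [Nat.mul_succ, ← add_assoc, perd, ih]
      by_contra hnd
      let q := Nat.gcd d n
      have hqn : q ∣ n := Nat.gcd_dvd_right d n
      have hq : q < n := by
        apply lt_of_le_of_ne (Nat.le_of_dvd npos hqn)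
        intro h
        apply hnd
        rw [← h]
        exact Nat.gcd_dvd_left d n
      obtain ⟨a, _, ha⟩ := Nat.exists_mul_mod_eq_gcd (k := n) (n := d) hq
      have perq : ∀ x, c (x + q) = c x := by
        intro x
        rw [← perd_mul x a, ← Nat.mod_add_div (d * a) n, ha, ← add_assoc, per_mul]
      obtain ⟨k, hk⟩ := hqn
      apply hmin q hq
      refine ⟨c, h, k * m, ?_, ?_⟩
      · have : 0 < k := by
          rcases Nat.eq_zero_or_pos k with h0 | h0
          · subst h0; omega
          · exact h0
        positivity
      · rw [pow_mul, ← seg_periodic_pow perq, ← hk, ← hgc]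
    rcases le_total s t with hle | hle
    · obtain ⟨d, rfl⟩ := Nat.exists_eq_add_of_le hle
      have := main s d hst
      exact (Nat.modEq_iff_dvd' hle).mpr (by simpa using this)
    · obtain ⟨d, rfl⟩ := Nat.exists_eq_add_of_le hle
      have := main t d (fun j => (hst j).symm)
      exact ((Nat.modEq_iff_dvd' hle).mpr (by simpa using this)).symm

section Walk
variable {r : ℕ} {Q : Type} [Group Q] (φ : FreeGroup (Fin r) →* Q)

/-- Vertex of the walk starting at `x`. -/
def wpos (w : CycW r) (x : Q) (t : ℕ) : Q := (φ (seg w.c 0 t))⁻¹ * x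

open Classical in
/-- Edge of the walk starting at `x`. -/
noncomputable def wedg (w : CycW r) (x : Q) (t : ℕ) : Fin r × Q :=
  ((w.c t).1, if (w.c t).2 = true then wpos φ w x t else wpos φ w x (t + 1))

theorem wpos_succ (w : CycW r) (x : Q) (t : ℕ) :
    wpos φ w x (t + 1) = (φ (ltr (w.c t)))⁻¹ * wpos φ w x t := by
  simp [wpos, seg_succ, mul_assoc]

theorem wedg_eq {w w' : CycW r} {x x' : Q} {s t : ℕ} (h : wedg φ w x s = wedg φ w' x' t) :
    (w.c s = w'.c t ∧ wpos φ w x s = wpos φ w' x' t ∧ wpos φ w x (s + 1) = wpos φ w' x' (t + 1)) ∨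
    (w.c s = invL (w'.c t) ∧ wpos φ w x s = wpos φ w' x' (t + 1) ∧
      wpos φ w x (s + 1) = wpos φ w' x' t) := by
  have h1 := congrArg Prod.fst h
  have h2 := congrArg Prod.snd h
  simp only [wedg] at h1 h2
  rw [wpos_succ, wpos_succ] at h2 ⊢
  rcases hc : w.c s with ⟨i, b⟩
  rcases hc' : w'.c t with ⟨i', b'⟩
  rw [hc, hc'] at h1 h2
  simp only at h1 h2
  subst h1
  have hinv : φ (ltr (i, false)) = (φ (ltr (i, true)))⁻¹ := by
    rw [← map_inv, ← ltr_invL]; rfl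
  cases b <;> cases b'
  · left
    simp at h2
    simp [h2]
  · right
    simp [hinv, invL] at h2 ⊢
    rw [← h2]; simp
  · right
    simp [hinv, invL] at h2 ⊢
    rw [h2]; simp
  · left
    simp at h2
    simp [h2]

/-- The image separates rotations. -/
def RotSep (w : CycW r) : Prop :=
  ∀ s t, φ (seg w.c s w.n) = φ (seg w.c t w.n) → s ≡ t [MOD w.n]

variable {φ}

theorem RotSep.wpos_eq {w : CycW r} (hs : RotSep φ w) {x : Q} {s t : ℕ}
    (h : wpos φ w x s = wpos φ w x t) : s ≡ t [MOD w.n] := by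
  apply hs
  have h1 : φ (seg w.c 0 s) = φ (seg w.c 0 t) := by
    simpa [wpos] using h
  have h2 := congrArg φ (w.pre_add s)
  have h3 := congrArg φ (w.pre_add t)
  rw [w.pre_add', map_mul, map_mul, h1] at h2
  rw [w.pre_add', map_mul, map_mul, ← h2] at h3
  exact (mul_left_cancel h3).symm

theorem RotSep.wpos_eq2 {w : CycW r} (hs : RotSep φ w) {p : ℕ} (hp : p.Prime) (hz : φ w.z ≠ 1)
    (hzp : φ w.z ^ p = 1) {x : Q} {s t : ℕ}
    (h : wpos φ w x s = wpos φ w x t) : s ≡ t [MOD w.n * p] := by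
  have main : ∀ s t, s ≤ t → wpos φ w x s = wpos φ w x t → s ≡ t [MOD w.n * p] := by
    intro s t hle h
    have h1 := hs.wpos_eq h
    obtain ⟨k, hk⟩ := (Nat.modEq_iff_dvd' hle).mp h1
    have ht : t = w.n * k + s := by omega
    have hseg : seg w.c 0 t = w.z ^ k * seg w.c 0 s := by
      rw [ht]
      clear ht hk
      induction k with
      | zero => simp
      | succ k ih =>
        rw [show w.n * (k + 1) + s = (w.n * k + s) + w.n by ring, w.pre_add, ih, pow_succ', mul_assoc]
    have h2 : φ (seg w.c 0 s) = φ (seg w.c 0 t) := by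
      simpa [wpos] using h
    rw [hseg, map_mul, map_pow] at h2
    have h3 : φ w.z ^ k = 1 := by simpa using h2.symm
    have hpk : p ∣ k := by
      haveI : Fact p.Prime := ⟨hp⟩
      have := orderOf_eq_prime hzp hz
      rw [← this]
      exact orderOf_dvd_of_pow_eq_one h3
    apply (Nat.modEq_iff_dvd' hle).mpr
    rw [hk]
    exact Nat.mul_dvd_mul_left _ hpk
  rcases le_total s t with hle | hle
  · exact main s t hle h
  · exact (main t s hle h.symm).symm

theorem RotSep.wedg_inj {w : CycW r} (hs : RotSep φ w) {p : ℕ} (hp : p.Prime) (hp3 : 3 ≤ p)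
    (hz : φ w.z ≠ 1) (hzp : φ w.z ^ p = 1) {x : Q} {s t : ℕ} (hsl : s < w.n * p) (htl : t < w.n * p)
    (h : wedg φ w x s = wedg φ w x t) : s = t := by
  rcases wedg_eq φ h with ⟨_, h1, _⟩ | ⟨_, h1, h2⟩
  · exact Nat.ModEq.eq_of_lt_of_lt (hs.wpos_eq2 hp hz hzp h1) hsl htl
  · exfalso
    have e1 := hs.wpos_eq2 hp hz hzp h1
    have e2 := hs.wpos_eq2 hp hz hzp h2
    have e3 : t + 0 ≡ t + 2 [MOD w.n * p] := e2.symm.trans (e1.add_right 1)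
    have e4 := Nat.ModEq.add_left_cancel' t e3
    have e5 := (Nat.modEq_iff_dvd' (by omega)).mp e4
    have e6 := Nat.le_of_dvd (by omega) e5
    have := w.npos
    nlinarith

theorem word_of_cover {w w' : CycW r} (hs : RotSep φ w') {x x' : Q}
    (h : ∀ t, ∃ τ, wedg φ w x t = wedg φ w' x' τ) :
    (∃ τ₀, ∀ t, w.c t = w'.c (τ₀ + t)) ∨
    (∃ τ₀, ∀ t τ, τ + t ≡ τ₀ [MOD w'.n] → w.c t = invL (w'.c τ)) := by
  obtain ⟨τ₀, h0⟩ := h 0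
  rcases wedg_eq φ h0 with ⟨ha, hb, hc⟩ | ⟨ha, hb, hc⟩
  · left
    refine ⟨τ₀, ?_⟩
    have main : ∀ t, w.c t = w'.c (τ₀ + t) ∧ wpos φ w x (t + 1) = wpos φ w' x' (τ₀ + t + 1) := by
      intro t
      induction t with
      | zero => exact ⟨ha, hc⟩
      | succ t ih =>
        obtain ⟨τ, hτ⟩ := h (t + 1)
        rcases wedg_eq φ hτ with ⟨ha', hb', hc'⟩ | ⟨ha', hb', hc'⟩
        · have e := hs.wpos_eq (hb'.symm.trans ih.2)
          have e1 : w.c (t + 1) = w'.c (τ₀ + (t + 1)) := by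
            rw [ha']; exact w'.per_mod e
          refine ⟨e1, ?_⟩
          rw [wpos_succ φ w x (t + 1), wpos_succ φ w' x' (τ₀ + (t + 1)), ih.2, e1]
          rfl
        · exfalso
          have e := hs.wpos_eq (hb'.symm.trans ih.2)
          have e1 := Nat.ModEq.add_right_cancel' 1 e
          apply w.red t
          rw [ha', ih.1, w'.per_mod e1]
    exact fun t => (main t).1
  · right
    refine ⟨τ₀, ?_⟩
    have main : ∀ t, ∃ τ, w.c t = invL (w'.c τ) ∧ wpos φ w x (t + 1) = wpos φ w' x' τ ∧
        τ + t ≡ τ₀ [MOD w'.n] := by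
      intro t
      induction t with
      | zero => exact ⟨τ₀, ha, hc, rfl⟩
      | succ t ih =>
        obtain ⟨σ, i1, i2, i3⟩ := ih
        obtain ⟨τ, hτ⟩ := h (t + 1)
        rcases wedg_eq φ hτ with ⟨ha', hb', hc'⟩ | ⟨ha', hb', hc'⟩
        · exfalso
          have e := hs.wpos_eq (hb'.symm.trans i2)
          apply w.red t
          rw [ha', i1, invL_invL, w'.per_mod e]
        · have e := hs.wpos_eq (hb'.symm.trans i2)
          refine ⟨τ, ha', hc', ?_⟩
          have := (e.add_right t).trans i3
          rwa [show τ + (t + 1) = τ + 1 + t by ring]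
    intro t τ hτ
    obtain ⟨σ, i1, _, i3⟩ := main t
    rw [i1, w'.per_mod (Nat.ModEq.add_right_cancel' t (i3.trans hτ.symm))]

theorem conj_of_same {w w' : CycW r} (h : ∃ τ₀, ∀ t, w.c t = w'.c (τ₀ + t)) :
    ∃ P, w.z = P⁻¹ * w'.z * P := by
  obtain ⟨τ₀, h⟩ := h
  have d1 : w.n ∣ w'.n := by
    have := w.prim 0 w'.n (fun j => by
      rw [h, h, show τ₀ + (w'.n + j) = τ₀ + j + w'.n by ring, w'.per, zero_add])
    exact (Nat.modEq_zero_iff_dvd).mp this.symm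
  have d2 : w'.n ∣ w.n := by
    have := w'.prim τ₀ (τ₀ + w.n) (fun j => by
      rw [← h, add_assoc, ← h, add_comm, w.per])
    have := Nat.ModEq.add_left_cancel' (b := w.n) (a := 0) τ₀ this
    exact (Nat.modEq_zero_iff_dvd).mp this.symm
  have hn := Nat.dvd_antisymm d1 d2
  refine ⟨seg w'.c 0 τ₀, ?_⟩
  have e : w.z = seg w'.c τ₀ w'.n := by
    rw [CycW.z, hn]
    exact seg_congr _ fun j _ => by rw [zero_add, h]
  have := w'.pre_add τ₀
  rw [w'.pre_add'] at this
  rw [e, mul_assoc, ← this, inv_mul_cancel_left]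

theorem conj_of_opp {w w' : CycW r}
    (h : ∃ τ₀, ∀ t τ, τ + t ≡ τ₀ [MOD w'.n] → w.c t = invL (w'.c τ)) :
    ∃ P, w.z = P⁻¹ * w'.z⁻¹ * P := by
  obtain ⟨τ₀, h⟩ := h
  obtain ⟨q, hq⟩ := Nat.exists_eq_add_of_le' w'.npos
  have ex : ∀ t, ∃ τ, τ + t ≡ τ₀ [MOD w'.n] := by
    intro t
    refine ⟨τ₀ + q * t, ?_⟩
    rw [show τ₀ + q * t + t = τ₀ + w'.n * t by rw [hq]; ring]
    simp [Nat.ModEq]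
  have d1 : w.n ∣ w'.n := by
    have := w.prim 0 w'.n (fun j => by
      obtain ⟨τ, hτ⟩ := ex (0 + j)
      rw [h _ _ hτ, h (w'.n + j) τ]
      rw [show τ + (w'.n + j) = τ + (0 + j) + w'.n by ring]
      exact (Nat.add_modEq_right).trans hτ)
    exact (Nat.modEq_zero_iff_dvd).mp this.symm
  have d2 : w'.n ∣ w.n := by
    have := w'.prim 0 w.n (fun j => by
      obtain ⟨t, ht⟩ := ex (w.n + j)
      have e1 := h t (w.n + j) (by rwa [add_comm])
      have e2 := h (t + w.n) (0 + j) (by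
        rwa [show 0 + j + (t + w.n) = t + (w.n + j) by ring])
      rw [w.per, e1] at e2
      rw [← invL_invL (w'.c (0 + j)), ← e2, invL_invL])
    exact (Nat.modEq_zero_iff_dvd).mp this.symm
  have hn := Nat.dvd_antisymm d1 d2
  have main : ∀ t A, A + t ≡ τ₀ + 1 [MOD w'.n] → seg w'.c 0 (A + t) * seg w.c 0 t = seg w'.c 0 A := by
    intro t
    induction t with
    | zero => intro A _; simp [seg_zero]
    | succ t ih =>
      intro A hA
      rw [seg_succ, ← mul_assoc, show A + (t + 1) = (A + 1) + t by ring,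
        ih (A + 1) (by rwa [show (A + 1) + t = A + (t + 1) by ring]), seg_succ, zero_add, zero_add,
        h t A (Nat.ModEq.add_right_cancel' 1 hA), ltr_invL, mul_inv_cancel_right]
  have m := main w'.n (τ₀ + 1) (Nat.add_modEq_right)
  rw [w'.pre_add, ← hn] at m
  refine ⟨seg w'.c 0 (τ₀ + 1), ?_⟩
  change _ * w.z = _ at m
  nth_rewrite 2 [← m]
  group

end Walk

theorem inConj_of_cover {r : ℕ} {Q : Type} [Group Q] {φ : FreeGroup (Fin r) →* Q}
    {w w' : CycW r} (hs : RotSep φ w') {x x' : Q}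
    (h : ∀ t, ∃ τ, wedg φ w x t = wedg φ w' x' τ) {u v a b : FreeGroup (Fin r)} {m m' : ℕ}
    (hu : u = a * w.z ^ m * a⁻¹) (hv : v = b * w'.z ^ m' * b⁻¹) : InConjCyclic v u := by
  have key : ∃ (P : FreeGroup (Fin r)) (k : ℤ), w'.z = P * w.z ^ k * P⁻¹ := by
    rcases word_of_cover hs h with h1 | h1
    · obtain ⟨P, hP⟩ := conj_of_same h1
      refine ⟨P, 1, ?_⟩
      rw [hP]; group
    · obtain ⟨P, hP⟩ := conj_of_opp h1
      refine ⟨P, -1, ?_⟩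
      rw [hP]; group
  obtain ⟨P, k, hk⟩ := key
  refine ⟨a * (b * P)⁻¹, a * w.z * a⁻¹, ?_, ?_⟩
  · rw [MonoidHom.map_zpowers, Subgroup.zpowers_le, Subgroup.mem_zpowers_iff]
    refine ⟨k * m', ?_⟩
    rw [hv, hk, conj_zpow, conj_pow, ← zpow_natCast (w.z ^ k) m', ← zpow_mul]
    show _ = a * (b * P)⁻¹ * _ * (a * (b * P)⁻¹)⁻¹
    generalize w.z ^ (k * (m' : ℤ)) = y
    group
  · rw [Subgroup.zpowers_le, Subgroup.mem_zpowers_iff]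
    refine ⟨m, ?_⟩
    rw [hu, zpow_natCast, conj_pow]

section Wreath
variable {r : ℕ} {Q T : Type} [Group Q] [Group T] (φ : FreeGroup (Fin r) →* Q)
  (f : Fin r × Q → T)

/-- The homomorphism to the wreath product. -/
def wrHom : FreeGroup (Fin r) →* RegularWreathProduct T Q :=
  FreeGroup.lift fun i => ⟨fun x => f (i, x), φ (FreeGroup.of i)⟩

theorem wrHom_right (g : FreeGroup (Fin r)) : (wrHom φ f g).right = φ g := by
  have : (RegularWreathProduct.rightHom).comp (wrHom φ f) = φ := by
    ext i
    simp [wrHom]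
  exact DFunLike.congr_fun this g

theorem wr_pow_left (X : RegularWreathProduct T Q) (h : X.right = 1) (k : ℕ) :
    (X ^ k).left = X.left ^ k ∧ (X ^ k).right = 1 := by
  induction k with
  | zero => simp
  | succ k ih =>
    rw [pow_succ, pow_succ]
    constructor
    · rw [RegularWreathProduct.mul_left, ih.1, ih.2]
      simp
    · simp [ih.2, h]

theorem wrHom_ltr (w : CycW r) (x : Q) (t : ℕ) :
    (wrHom φ f (ltr (w.c t))).left (wpos φ w x t) =
      if (w.c t).2 = true then f (wedg φ w x t) else (f (wedg φ w x t))⁻¹ := by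
  rw [wedg, wpos_succ]
  rcases hc : w.c t with ⟨i, b⟩
  have ht : ltr (i, true) = FreeGroup.of i := rfl
  have hf : ltr (i, false) = (FreeGroup.of i)⁻¹ := by
    rw [← ht, ← ltr_invL]; rfl
  cases b
  · simp [hf, wrHom]
  · simp [ht, wrHom]

theorem wrHom_seg {A : Type} [CommGroup A] (σ : T →* A) (w : CycW r) (x : Q) (k : ℕ) :
    σ ((wrHom φ f (seg w.c 0 k)).left x) =
      ∏ t ∈ Finset.range k, if (w.c t).2 = true then σ (f (wedg φ w x t))
        else (σ (f (wedg φ w x t)))⁻¹ := by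
  induction k with
  | zero => simp [seg_zero]
  | succ k ih =>
    rw [Finset.prod_range_succ, ← ih, seg_succ, map_mul, RegularWreathProduct.mul_left,
      Pi.mul_apply, map_mul]
    congr 1
    rw [wrHom_right]
    have := wrHom_ltr φ f w x k
    rw [wpos] at this
    rw [zero_add, this]
    split_ifs <;> simp

end Wreath

theorem wedg_mod {r : ℕ} {Q : Type} [Group Q] {φ : FreeGroup (Fin r) →* Q} {w : CycW r} {p : ℕ}
    (hzp : φ w.z ^ p = 1) (x : Q) (t : ℕ) :
    wedg φ w x (t % (w.n * p)) = wedg φ w x t := by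
  have hpos : ∀ s k, φ (seg w.c 0 (s + w.n * k)) = φ w.z ^ k * φ (seg w.c 0 s) := by
    intro s k
    induction k with
    | zero => simp
    | succ k ih =>
      rw [Nat.mul_succ, ← add_assoc, w.pre_add, map_mul, ih, pow_succ', mul_assoc]
  have hpos2 : ∀ s k, wpos φ w x (s + w.n * p * k) = wpos φ w x s := by
    intro s k
    rw [wpos, mul_assoc, hpos, pow_mul, hzp, one_pow, one_mul, wpos]
  conv_rhs => rw [← Nat.mod_add_div t (w.n * p)]
  generalize t % (w.n * p) = s
  generalize t / (w.n * p) = k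
  rw [wedg, wedg, hpos2, add_right_comm, hpos2, mul_assoc, w.per_mul]

theorem wreath_main {r : ℕ} {Q : Type} [Group Q] [Finite Q] {φ : FreeGroup (Fin r) →* Q}
    {w w' : CycW r} {p : ℕ} (hp : p.Prime) (hp3 : 3 ≤ p) (hexp : ∀ h, φ h ^ p = 1)
    (hs : RotSep φ w) (hz : φ w.z ≠ 1)
    (hcov : ∀ s : Q, ∃ t, ∀ τ, wedg φ w 1 t ≠ wedg φ w' s τ)
    {e : ℕ} (he : Nat.card Q ≤ p ^ e) :
    ∃ (P : Type) (_ : Group P) (_ : Finite P) (Φ : FreeGroup (Fin r) →* P),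
      (∀ g, Φ g ^ p ^ (e + 2) = 1) ∧ Φ w.z ^ p ^ (e + 1) ≠ 1 ∧ Φ w'.z ^ p ^ (e + 1) = 1 := by
  classical
  haveI : Fact p.Prime := ⟨hp⟩
  obtain ⟨T, iT, fT, σ, h1, h2, h3⟩ := lemmaT p e
  haveI := Fintype.ofFinite Q
  obtain ⟨emb⟩ : Nonempty (Q ↪ Fin (p ^ e)) :=
    Function.Embedding.nonempty_of_card_le (by
      rw [Nat.card_eq_fintype_card] at he; simpa using he)
  let s : Fin (p ^ e) → Q := Function.invFun emb
  have hsurj : Function.Surjective s := Function.invFun_surjective emb.injective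
  choose t₀ ht₀ using hcov
  let E : Fin (p ^ e) → Fin r × Q := fun l => wedg φ w 1 (t₀ (s l) % (w.n * p))
  have hE : ∀ l, E l = wedg φ w 1 (t₀ (s l)) := fun l => wedg_mod (hexp _) 1 _
  choose f hf using fun ed : Fin r × Q => h1 (fun l => if ed = E l then 1 else 0)
  have hnp : 0 < w.n * p := Nat.mul_pos w.npos hp.pos
  have hright : ∀ g, ((wrHom φ f g) ^ p).right = 1 := by
    intro g
    rw [← map_pow, wrHom_right, map_pow, hexp]
  refine ⟨RegularWreathProduct T Q, inferInstance, inferInstance, wrHom φ f, ?_, ?_, ?_⟩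
  · intro g
    rw [show p ^ (e + 2) = p * p ^ (e + 1) by ring, pow_mul]
    obtain ⟨a, b⟩ := wr_pow_left _ (hright g) (p ^ (e + 1))
    apply RegularWreathProduct.ext
    · rw [a]; funext x
      simp [h2]
    · rw [b]; rfl
  · intro hcon
    rw [show p ^ (e + 1) = p * p ^ e by ring, pow_mul] at hcon
    obtain ⟨a, b⟩ := wr_pow_left _ (hright w.z) (p ^ e)
    rw [hcon] at a
    have a1 := congrFun a 1
    simp only [RegularWreathProduct.one_left, Pi.one_apply, Pi.pow_apply] at a1
    obtain ⟨l, hl⟩ := (h3 _).mp a1.symm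
    rw [← map_pow, ← w.pre_mul, wrHom_seg,
      Finset.prod_eq_single (t₀ (s l) % (w.n * p))] at hl
    · have : σ l (f (wedg φ w 1 (t₀ (s l) % (w.n * p)))) = Multiplicative.ofAdd 1 := by
        rw [hf]; simp [E]
      rw [this] at hl
      have ho : (1 : ZMod p) ≠ 0 := one_ne_zero
      split_ifs at hl
      · exact ho (ofAdd_eq_one.mp hl)
      · rw [inv_eq_one] at hl
        exact ho (ofAdd_eq_one.mp hl)
    · intro t ht hne
      have : σ l (f (wedg φ w 1 t)) = 1 := by
        rw [hf, if_neg]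
        · rfl
        · intro h
          exact hne (hs.wedg_inj hp hp3 hz (hexp _) (Finset.mem_range.mp ht)
            (Nat.mod_lt _ hnp) h)
      rw [this]; simp
    · intro h
      exact absurd (Finset.mem_range.mpr (Nat.mod_lt _ hnp)) h
  · rw [show p ^ (e + 1) = p * p ^ e by ring, pow_mul]
    obtain ⟨a, b⟩ := wr_pow_left _ (hright w'.z) (p ^ e)
    apply RegularWreathProduct.ext
    · rw [a]; funext x
      simp only [RegularWreathProduct.one_left, Pi.one_apply, Pi.pow_apply]
      rw [h3]
      obtain ⟨l, hl⟩ := hsurj x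
      refine ⟨l, ?_⟩
      rw [← map_pow, ← w'.pre_mul, wrHom_seg]
      apply Finset.prod_eq_one
      intro t _
      have : σ l (f (wedg φ w' x t)) = 1 := by
        rw [hf, if_neg]
        · rfl
        · intro h
          rw [hE, hl] at h
          exact ht₀ x t h.symm
      rw [this]; simp
    · rw [b]; rfl

theorem RotSep.of_lt {r : ℕ} {Q : Type} [Group Q] {φ : FreeGroup (Fin r) →* Q} {w : CycW r}
    (h : ∀ s < w.n, ∀ t < w.n, seg w.c s w.n * (seg w.c t w.n)⁻¹ ≠ 1 →
      φ (seg w.c s w.n * (seg w.c t w.n)⁻¹) ≠ 1) : RotSep φ w := by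
  have hm : ∀ s, seg w.c s w.n = seg w.c (s % w.n) w.n := by
    intro s
    exact seg_congr _ fun j _ => w.per_mod ((Nat.mod_modEq s w.n).symm.add_right j)
  intro s t hst
  by_contra hne
  apply h (s % w.n) (Nat.mod_lt _ w.npos) (t % w.n) (Nat.mod_lt _ w.npos)
  · rw [← hm, ← hm, Ne, mul_inv_eq_one]
    intro h; exact hne (w.rot_inj h)
  · rw [← hm, ← hm, map_mul, map_inv, hst, mul_inv_cancel]

theorem pair_lemma {r : ℕ} (u v : FreeGroup (Fin r)) (hu : u ≠ 1) (hv : v ≠ 1)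
    (hcc : ¬ InConjCyclic v u) :
    ∃ p₀ : ℕ, ∀ p : ℕ, p.Prime → p₀ ≤ p → ∃ e₀ : ℕ, ∀ e, e₀ ≤ e →
      ∃ (P : Type) (_ : Group P) (_ : Finite P) (Φ : FreeGroup (Fin r) →* P),
        (∀ g, Φ g ^ p ^ (e + 2) = 1) ∧ Φ u ^ p ^ (e + 1) ≠ 1 ∧ Φ v ^ p ^ (e + 1) = 1 := by
  classical
  obtain ⟨w, a, m, hm, hua⟩ := exists_cycW u hu
  obtain ⟨w', b, m', hm', hvb⟩ := exists_cycW v hv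
  let S : CycW r → Finset (FreeGroup (Fin r)) := fun w =>
    (Finset.range w.n ×ˢ Finset.range w.n).image
      fun x => seg w.c x.1 w.n * (seg w.c x.2 w.n)⁻¹
  have hS : ∀ (w : CycW r) s t, s < w.n → t < w.n → seg w.c s w.n * (seg w.c t w.n)⁻¹ ∈ S w := by
    intro w s t hs ht
    exact Finset.mem_image.mpr ⟨(s, t), by simp [hs, ht], rfl⟩
  obtain ⟨p₁, hp₁⟩ := lemmaM_set (insert w.z (S w ∪ S w'))
  refine ⟨max p₁ (max 3 (m + 1)), fun p hp hpp => ?_⟩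
  obtain ⟨Q, iQ, fQ, φ, hexp, hsep⟩ := hp₁ p hp (by omega)
  have s1 : RotSep φ w := RotSep.of_lt fun s hs t ht hne =>
    hsep _ (by simp [hS w s t hs ht]) hne
  have s2 : RotSep φ w' := RotSep.of_lt fun s hs t ht hne =>
    hsep _ (by simp [hS w' s t hs ht]) hne
  have hz : φ w.z ≠ 1 := hsep _ (by simp) (w.seg_ne_one w.npos)
  have hcov : ∀ s : Q, ∃ t, ∀ τ, wedg φ w 1 t ≠ wedg φ w' s τ := by
    intro s
    by_contra hcon
    push Not at hcon
    exact hcc (inConj_of_cover s2 hcon hua hvb)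
  refine ⟨Nat.card Q, fun e he => ?_⟩
  obtain ⟨P, iP, fP, Φ, h1, h2, h3⟩ := wreath_main hp (by omega) hexp s1 hz hcov (e := e)
    (he.trans (Nat.lt_pow_self hp.one_lt).le)
  refine ⟨P, iP, fP, Φ, h1, ?_, ?_⟩
  · intro hcon
    haveI : Fact p.Prime := ⟨hp⟩
    have ho := orderOf_eq_prime_pow h2 (h1 w.z)
    rw [hua, ← map_pow, conj_pow, ← pow_mul, map_mul, map_mul, map_inv, conj_eq_one_iff,
      map_pow] at hcon
    have hd := orderOf_dvd_of_pow_eq_one hcon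
    rw [ho, pow_succ', Nat.mul_dvd_mul_iff_right (by have := hp.pos; positivity)] at hd
    have := Nat.le_of_dvd hm hd
    omega
  · rw [hvb, ← map_pow, conj_pow, ← pow_mul, mul_comm m', pow_mul, map_mul, map_mul, map_inv,
      conj_eq_one_iff, map_pow, map_pow, h3, one_pow]

theorem stmt1 (r k : ℕ) (u : Fin k → FreeGroup (Fin r)) (v : FreeGroup (Fin r))
    (hu : ∀ i, u i ≠ 1) (hv : v ≠ 1)
    (hcc : ∀ i, ¬ InConjCyclic v (u i)) :
    ∃ p₀ : ℕ, ∀ p : ℕ, p.Prime → p₀ ≤ p → ∀ N : ℕ,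
      ∃ (P : Type) (_ : Group P) (_ : Finite P) (φ : FreeGroup (Fin r) →* P),
        Function.Surjective φ ∧ IsPGroup p P ∧
        (∀ i j : Fin k, orderOf (φ (u i)) = orderOf (φ (u j))) ∧
        (∀ i : Fin k, orderOf (φ v) < orderOf (φ (u i))) ∧
        1 < orderOf (φ v) ∧
        (∀ i : Fin k, N < orderOf (φ (u i))) := by
  obtain ⟨q, hq⟩ := lemmaM v hv
  choose p₁ hp₁ using fun i => pair_lemma (u i) v (hu i) hv (hcc i)
  refine ⟨q + ∑ i, p₁ i, fun p hp hpp N => ?_⟩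
  haveI : Fact p.Prime := ⟨hp⟩
  obtain ⟨Q, iQ, fQ, ψ, hψ, hψv⟩ := hq p hp (by omega)
  have hpi : ∀ i, p₁ i ≤ p := by
    intro i
    have := Finset.single_le_sum (f := p₁) (fun _ _ => Nat.zero_le _) (Finset.mem_univ i)
    omega
  choose e₁ he₁ using fun i => hp₁ i p hp (hpi i)
  let e := N + ∑ i, e₁ i
  have hei : ∀ i, e₁ i ≤ e := by
    intro i
    have := Finset.single_le_sum (f := e₁) (fun _ _ => Nat.zero_le _) (Finset.mem_univ i)
    omega
  choose R iR fR Φ hΦ hΦu hΦv using fun i => he₁ i e (hei i)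
  let Ψ : FreeGroup (Fin r) →* (∀ i, R i) × Q := (Pi.monoidHom Φ).prod ψ
  have hall : ∀ g, Ψ g ^ p ^ (e + 2) = 1 := by
    intro g
    apply Prod.ext
    · funext i
      exact hΦ i g
    · show ψ g ^ p ^ (e + 2) = 1
      rw [pow_succ' p, pow_mul, hψ, one_pow]
  have hv1 : Ψ v ^ p ^ (e + 1) = 1 := by
    apply Prod.ext
    · funext i
      exact hΦv i
    · show ψ v ^ p ^ (e + 1) = 1
      rw [pow_succ' p, pow_mul, hψ, one_pow]
  have hvn : Ψ v ≠ 1 := fun h => hψv (congrArg Prod.snd h)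
  have hun : ∀ i, ¬ Ψ (u i) ^ p ^ (e + 1) = 1 := fun i h =>
    hΦu i (congrFun (congrArg Prod.fst h) i)
  have hinj : ∀ g, orderOf (Ψ.rangeRestrict g) = orderOf (Ψ g) := by
    intro g
    rw [← Subgroup.orderOf_coe]; rfl
  have hou : ∀ i, orderOf (Ψ (u i)) = p ^ (e + 2) := fun i =>
    orderOf_eq_prime_pow (hun i) (hall (u i))
  refine ⟨Ψ.range, inferInstance, inferInstance, Ψ.rangeRestrict, Ψ.rangeRestrict_surjective,
    ?_, ?_, ?_, ?_, ?_⟩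
  · rintro ⟨x, g, rfl⟩
    exact ⟨e + 2, Subtype.ext (hall g)⟩
  · intro i j
    rw [hinj, hinj, hou, hou]
  · intro i
    rw [hinj, hinj, hou]
    have := Nat.le_of_dvd (by have := hp.pos; positivity) (orderOf_dvd_of_pow_eq_one hv1)
    exact lt_of_le_of_lt this (Nat.pow_lt_pow_right hp.one_lt (by omega))
  · rw [hinj]
    have h1 : orderOf (Ψ v) ≠ 1 := fun h => hvn (orderOf_eq_one_iff.mp h)
    have h2 : 0 < orderOf (Ψ v) := orderOf_pos _
    omega
  · intro i
    rw [hinj, hou]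
    have : N ≤ e := Nat.le_add_right _ _
    exact lt_of_le_of_lt (show N ≤ e + 2 by omega) (Nat.lt_pow_self hp.one_lt)
end

section
/- Every free group F is potent: for each element g ∈ F and each natural number n ≥ 1, there exists a finite-index normal subgroup H of F such that ⟨g⟩ ∩ H = ⟨gⁿ⟩. -/
open Subgroup

open Polynomial in
/-- The matrix `1 + c X E_q`, where `E_q` is a square-zero rank one matrix. -/
noncomputable def elemMat (q c : ℤ) : Matrix (Fin 2) (Fin 2) ℤ[X] :=
  !![1 - C (c * q) * X, C c * X; - C (c * q * q) * X, 1 + C (c * q) * X]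

open Polynomial in
lemma elemMat_mul (q c d : ℤ) : elemMat q c * elemMat q d = elemMat q (c + d) := by
  ext1 i j
  fin_cases i <;> fin_cases j <;> simp [elemMat, Matrix.mul_apply] <;> ring

open Polynomial in
lemma elemMat_zero (q : ℤ) : elemMat q 0 = 1 := by
  ext1 i j
  fin_cases i <;> fin_cases j <;> simp [elemMat]

open Polynomial in
/-- The unit given by `elemMat q 1`. -/
noncomputable def elemUnit (q : ℤ) : (Matrix (Fin 2) (Fin 2) ℤ[X])ˣ where
  val := elemMat q 1
  inv := elemMat q (-1)
  val_inv := by rw [elemMat_mul]; simp [elemMat_zero]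
  inv_val := by rw [elemMat_mul]; simp [elemMat_zero]

/-- sign of a letter -/
def sgnB (b : Bool) : ℤ := if b then 1 else -1

open Polynomial in
lemma invariant {α : Type} (q : α → ℤ) (L : List (α × Bool)) :
    ∀ (a : α) (e : Bool), FreeGroup.IsReduced ((a, e) :: L) →
      (∀ x ∈ (a, e) :: L, ∀ y ∈ (a, e) :: L, q x.1 = q y.1 → x.1 = y.1) →
      ∃ (u₀ u₁ : ℤ[X]) (m : ℤ) (k : ℕ),
        (((a, e) :: L).map fun x => elemMat (q x.1) (sgnB x.2)).prod.mulVec ![0, 1]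
          = ![u₀ + C m * X * (u₁ - C (q a) * u₀), u₁ + C (m * q a) * X * (u₁ - C (q a) * u₀)] ∧
        u₀.natDegree ≤ k ∧ u₁.natDegree ≤ k ∧ (u₁ - C (q a) * u₀).coeff k ≠ 0 ∧
        0 < sgnB e * m := by
  induction L with
  | nil =>
    intro a e _ _
    refine ⟨0, 1, sgnB e, 0, ?_, by simp, by simp, by simp, by cases e <;> simp [sgnB]⟩
    ext1 i
    fin_cases i <;> simp [elemMat, Matrix.mulVec, dotProduct]
  | cons p L ih =>
    obtain ⟨b, f⟩ := p
    intro a e hred hinj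
    have hred' := hred
    rw [FreeGroup.IsReduced, List.isChain_cons_cons] at hred'
    obtain ⟨u₀, u₁, m, k, hprod, h0, h1, hk, hm⟩ := ih b f hred'.2
      (fun x hx y hy => hinj x (List.mem_cons_of_mem _ hx) y (List.mem_cons_of_mem _ hy))
    rw [List.map_cons, List.prod_cons, ← Matrix.mulVec_mulVec, hprod]
    by_cases hab : a = b
    · subst hab
      have hef : e = f := hred'.1 rfl
      subst hef
      refine ⟨u₀, u₁, m + sgnB e, k, ?_, h0, h1, hk, ?_⟩
      · ext1 i
        fin_cases i <;> simp [elemMat, Matrix.mulVec, dotProduct] <;> ring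
      · cases e <;> simp [sgnB] at hm ⊢ <;> omega
    · have hq : q b - q a ≠ 0 := by
        intro h
        exact hab (hinj (a, e) (by simp) (b, f) (by simp) (by simp; omega))
      have hm0 : m ≠ 0 := by rintro rfl; simp at hm
      have hφ : (u₁ - C (q b) * u₀).natDegree ≤ k := by
        simpa using natDegree_sub_le_of_le h1 ((natDegree_C_mul_le (q b) _).trans h0)
      have hX : ∀ c : ℤ, (C c * X * (u₁ - C (q b) * u₀)).natDegree ≤ k + 1 := by
        intro c
        refine natDegree_mul_le.trans ?_
        have := (natDegree_C_mul_le c (X : ℤ[X])).trans natDegree_X_le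
        omega
      refine ⟨u₀ + C m * X * (u₁ - C (q b) * u₀), u₁ + C (m * q b) * X * (u₁ - C (q b) * u₀),
        sgnB e, k + 1, ?_, ?_, ?_, ?_, by cases e <;> simp [sgnB]⟩
      · ext1 i
        fin_cases i <;> simp [elemMat, Matrix.mulVec, dotProduct] <;> ring
      · exact natDegree_add_le_of_degree_le (h0.trans (Nat.le_succ _)) (hX _)
      · exact natDegree_add_le_of_degree_le (h1.trans (Nat.le_succ _)) (hX _)
      · have e1 : u₁ + C (m * q b) * X * (u₁ - C (q b) * u₀)
            - C (q a) * (u₀ + C m * X * (u₁ - C (q b) * u₀))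
            = (u₁ - C (q a) * u₀) + C (m * (q b - q a)) * ((u₁ - C (q b) * u₀) * X) := by
          simp only [map_mul, map_sub]; ring
        have e2 : (u₁ - C (q a) * u₀).coeff (k + 1) = 0 :=
          coeff_eq_zero_of_natDegree_lt (Nat.lt_succ_of_le
            (by simpa using natDegree_sub_le_of_le h1 ((natDegree_C_mul_le (q a) _).trans h0)))
        rw [e1, coeff_add, e2, zero_add, coeff_C_mul, coeff_mul_X]
        exact mul_ne_zero (mul_ne_zero hm0 hq) hk

open Polynomial in
lemma exists_rep {α : Type} (g : FreeGroup α) (hg : g ≠ 1) :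
    ∃ ρ : FreeGroup α →* (Matrix (Fin 2) (Fin 2) ℤ[X])ˣ,
      (∀ i j, ((ρ g : Matrix (Fin 2) (Fin 2) ℤ[X]) i j - (1 : Matrix (Fin 2) (Fin 2) ℤ[X]) i j).coeff 0 = 0)
      ∧ (ρ g : Matrix (Fin 2) (Fin 2) ℤ[X]) ≠ 1 := by
  classical
  let l := g.toWord.map Prod.fst
  let q : α → ℤ := fun a => (l.idxOf a : ℤ)
  refine ⟨FreeGroup.lift fun a => elemUnit (q a), ?_, ?_⟩
  · let ev : (Matrix (Fin 2) (Fin 2) ℤ[X])ˣ →* (Matrix (Fin 2) (Fin 2) ℤ)ˣ :=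
      Units.map ((constantCoeff (R := ℤ)).mapMatrix : Matrix (Fin 2) (Fin 2) ℤ[X] →+* _).toMonoidHom
    have h : ev.comp (FreeGroup.lift fun a => elemUnit (q a)) = 1 := by
      ext a i j
      fin_cases i <;> fin_cases j <;> simp [ev, elemUnit, elemMat]
    intro i j
    have h2 := congrArg (fun u : (Matrix (Fin 2) (Fin 2) ℤ)ˣ => (u : Matrix (Fin 2) (Fin 2) ℤ) i j)
      (DFunLike.congr_fun h g)
    simp [ev] at h2
    rw [coeff_sub, coeff_zero_eq_eval_zero, ← coeff_zero_eq_eval_zero, h2]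
    by_cases hij : i = j
    · subst hij; simp
    · simp [hij]
  · have hval : ((FreeGroup.lift (fun a => elemUnit (q a)) g : (Matrix (Fin 2) (Fin 2) ℤ[X])ˣ) :
        Matrix (Fin 2) (Fin 2) ℤ[X]) = (g.toWord.map fun x => elemMat (q x.1) (sgnB x.2)).prod := by
      conv_lhs => rw [← FreeGroup.mk_toWord (x := g), FreeGroup.lift_mk]
      rw [← Units.coeHom_apply, map_list_prod, List.map_map]
      congr 1
      apply List.map_congr_left
      rintro ⟨a, b⟩ _
      cases b <;> rfl
    rw [hval]
    intro h1
    have hred : FreeGroup.IsReduced g.toWord := FreeGroup.isReduced_toWord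
    have hinj : ∀ x ∈ g.toWord, ∀ y ∈ g.toWord, q x.1 = q y.1 → x.1 = y.1 := by
      intro x hx y hy h
      have h' : l.idxOf x.1 = l.idxOf y.1 := Int.ofNat_inj.1 h
      exact (List.idxOf_inj (List.mem_map_of_mem hx)).1 h'
    cases hw : g.toWord with
    | nil => exact hg (FreeGroup.toWord_eq_nil_iff.1 hw)
    | cons p L =>
      obtain ⟨a, e⟩ := p
      rw [hw] at h1 hred hinj
      obtain ⟨u₀, u₁, m, k, hprod, h0, -, hk, hm⟩ := invariant q L a e hred hinj
      rw [h1, Matrix.one_mulVec] at hprod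
      have h2 := congrFun hprod 0
      simp only [Matrix.cons_val_zero] at h2
      have h3 := congrArg (fun p : ℤ[X] => p.coeff (k + 1)) h2
      have e3 : u₀ + C m * X * (u₁ - C (q a) * u₀) = u₀ + C m * ((u₁ - C (q a) * u₀) * X) := by ring
      simp only [e3, coeff_add, coeff_C_mul, coeff_mul_X, coeff_zero,
        coeff_eq_zero_of_natDegree_lt (Nat.lt_succ_of_le h0), zero_add] at h3
      have hm0 : m ≠ 0 := by rintro rfl; simp at hm
      exact mul_ne_zero hm0 hk h3.symm

open Polynomial in
lemma exists_trunc (N : ℕ) (hN : N ≠ 0) (k : ℕ) :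
    ∃ (S : Type) (_ : CommRing S) (_ : Finite S) (θ : ℤ[X] →+* S),
      ∀ f : ℤ[X], θ f = 0 ↔ ∀ r < k + 1, (N : ℤ) ∣ f.coeff r := by
  have : NeZero N := ⟨hN⟩
  have : Module.Finite (ZMod N) (AdjoinRoot (X ^ (k + 1) : (ZMod N)[X])) :=
    (monic_X_pow (k + 1)).finite_adjoinRoot
  refine ⟨AdjoinRoot (X ^ (k + 1) : (ZMod N)[X]), inferInstance,
    Module.finite_of_finite (ZMod N),
    (AdjoinRoot.mk _).comp (mapRingHom (Int.castRingHom (ZMod N))), ?_⟩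
  intro f
  rw [RingHom.comp_apply, AdjoinRoot.mk_eq_zero, X_pow_dvd_iff]
  simp only [coe_mapRingHom, coeff_map, eq_intCast, ZMod.intCast_zmod_eq_zero_iff_dvd,
    ZMod.intCast_zmod_eq_zero_iff_dvd]

open Polynomial in
lemma exists_finite_quot {α : Type} (g : FreeGroup α) (hg : g ≠ 1) (n : ℕ) (hn : 1 ≤ n) :
    ∃ (Q : Type) (_ : Group Q) (_ : Finite Q) (φ : FreeGroup α →* Q),
      ∀ m : ℕ, (φ g) ^ m = 1 ↔ n ∣ m := by
  classical
  obtain ⟨ρ, hρ0, hρ1⟩ := exists_rep g hg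
  set D : Matrix (Fin 2) (Fin 2) ℤ[X] := (ρ g : Matrix (Fin 2) (Fin 2) ℤ[X]) - 1 with hD
  have hex : ∃ k : ℕ, ∃ p : Fin 2 × Fin 2, (D p.1 p.2).coeff k ≠ 0 := by
    by_contra hcon
    push Not at hcon
    apply hρ1
    rw [← sub_eq_zero, ← hD]
    ext i j k
    simpa using hcon k (i, j)
  set k := Nat.find hex with hkdef
  have hk1 : 1 ≤ k := by
    rw [Nat.one_le_iff_ne_zero]
    intro h0
    obtain ⟨p, hp⟩ := Nat.find_spec hex
    rw [← hkdef, h0] at hp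
    exact hp (hρ0 p.1 p.2)
  have hlow : ∀ i j, ∀ r < k, (D i j).coeff r = 0 := by
    intro i j r hr
    by_contra hne
    exact Nat.find_min hex hr ⟨(i, j), hne⟩
  let c : Fin 2 × Fin 2 → ℤ := fun p => (D p.1 p.2).coeff k
  let d : ℤ := Finset.univ.gcd c
  have hd : d ≠ 0 := by
    intro h0
    obtain ⟨p, hp⟩ := Nat.find_spec hex
    exact hp (Finset.gcd_eq_zero_iff.1 h0 p (Finset.mem_univ _))
  let N : ℕ := n * d.natAbs
  have hN : N ≠ 0 := by simp [N, hd]; omega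
  obtain ⟨S, _, _, θ, hθ⟩ := exists_trunc N hN k
  let M : Matrix (Fin 2) (Fin 2) ℤ[X] →+* Matrix (Fin 2) (Fin 2) S := θ.mapMatrix
  refine ⟨(Matrix (Fin 2) (Fin 2) S)ˣ, inferInstance, inferInstance,
    (Units.map (M : Matrix (Fin 2) (Fin 2) ℤ[X] →* Matrix (Fin 2) (Fin 2) S)).comp ρ, ?_⟩
  have hsq : M D * M D = 0 := by
    rw [← map_mul]
    ext i j
    simp only [M, RingHom.mapMatrix_apply, Matrix.map_apply, Matrix.zero_apply]
    rw [hθ]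
    intro r hr
    have hdvd : ∀ i j, X ^ k ∣ D i j := fun i j => X_pow_dvd_iff.2 (hlow i j)
    have h2 : X ^ (k + 1) ∣ (D * D) i j := by
      rw [Matrix.mul_apply]
      refine Finset.dvd_sum fun x _ => ?_
      refine (pow_dvd_pow X (by omega : k + 1 ≤ k + k)).trans ?_
      rw [pow_add]
      exact mul_dvd_mul (hdvd _ _) (hdvd _ _)
    rw [X_pow_dvd_iff.1 h2 r hr]
    exact dvd_zero _
  have hpow : ∀ m : ℕ, (1 + M D) ^ m = 1 + (m : Matrix (Fin 2) (Fin 2) S) * M D := by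
    intro m
    induction m with
    | zero => simp
    | succ m ih =>
      rw [pow_succ, ih, mul_add, mul_one, add_mul, one_mul, mul_assoc, hsq, mul_zero, add_zero]
      push_cast
      rw [add_mul, one_mul, add_assoc]
  intro m
  have hA : (ρ g : Matrix (Fin 2) (Fin 2) ℤ[X]) = 1 + D := by rw [hD]; abel
  rw [Units.ext_iff, Units.val_pow_eq_pow_val]
  have hA' : ((((Units.map (M : Matrix (Fin 2) (Fin 2) ℤ[X] →* Matrix (Fin 2) (Fin 2) S)).comp ρ) g :
      (Matrix (Fin 2) (Fin 2) S)ˣ) : Matrix (Fin 2) (Fin 2) S) = 1 + M D := by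
    change M (ρ g : Matrix (Fin 2) (Fin 2) ℤ[X]) = _
    rw [hA, map_add, map_one]
  rw [hA', hpow, Units.val_one, add_eq_left]
  have hcast : (m : Matrix (Fin 2) (Fin 2) S) * M D = M (m • D) := by
    rw [map_nsmul, nsmul_eq_mul]
  have hentry : M (m • D) = 0 ↔ ∀ p, (N : ℤ) ∣ (m : ℤ) * c p := by
    constructor
    · intro h p
      have h1 : θ ((m • D) p.1 p.2) = 0 := congrFun (congrFun h p.1) p.2
      have h2 := (hθ _).1 h1 k (Nat.lt_succ_self k)
      simpa [c] using h2
    · intro h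
      ext i j
      change θ ((m • D) i j) = 0
      rw [hθ]
      intro r hr
      rcases Nat.lt_succ_iff_lt_or_eq.1 hr with hr | hr
      · simp [hlow i j r hr]
      · subst hr
        simpa [c] using h (i, j)
  rw [hcast, hentry]
  have hNd : (N : ℤ) ∣ (m : ℤ) * d ↔ n ∣ m := by
    rw [Int.natCast_dvd, Int.natAbs_mul, Int.natAbs_natCast]
    exact Nat.mul_dvd_mul_iff_right (Int.natAbs_pos.2 hd)
  rw [← hNd]
  constructor
  · intro h
    have h1 : (N : ℤ) ∣ Finset.univ.gcd (fun p => (m : ℤ) * c p) := Finset.dvd_gcd fun p _ => h p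
    rw [Finset.gcd_mul_left, Int.normalize_of_nonneg (Int.natCast_nonneg m)] at h1
    exact h1
  · intro h p
    exact h.trans (mul_dvd_mul_left _ (Finset.gcd_dvd (Finset.mem_univ p)))

theorem stmt2 {α : Type} (g : FreeGroup α) (n : ℕ) (hn : 1 ≤ n) :
    ∃ H : Subgroup (FreeGroup α), H.Normal ∧ H.FiniteIndex ∧
      Subgroup.zpowers g ⊓ H = Subgroup.zpowers (g ^ n) := by
  by_cases hg : g = 1
  · subst hg
    exact ⟨⊤, inferInstance, inferInstance, by simp⟩
  obtain ⟨Q, _, _, φ, hφ⟩ := exists_finite_quot g hg n hn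
  refine ⟨φ.ker, inferInstance, inferInstance, ?_⟩
  have ho : orderOf (φ g) = n :=
    Nat.dvd_antisymm (orderOf_dvd_of_pow_eq_one ((hφ n).2 dvd_rfl))
      ((hφ _).1 (pow_orderOf_eq_one _))
  ext x
  rw [Subgroup.mem_inf, MonoidHom.mem_ker, Subgroup.mem_zpowers_iff, Subgroup.mem_zpowers_iff]
  constructor
  · rintro ⟨⟨z, rfl⟩, hz⟩
    rw [map_zpow, ← orderOf_dvd_iff_zpow_eq_one, ho] at hz
    obtain ⟨w, rfl⟩ := hz
    exact ⟨w, by rw [zpow_mul, zpow_natCast]⟩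
  · rintro ⟨w, rfl⟩
    refine ⟨⟨n * w, by rw [zpow_mul, zpow_natCast]⟩, ?_⟩
    rw [map_zpow, map_pow, (hφ n).2 dvd_rfl, one_zpow]
end

section
/- Let F be a free group with an element u that is not a proper power and let p be a prime. Then F is residually p-finite with respect to the subgroup ⟨u⟩: for every g ∈ F with g ∉ ⟨u⟩, there exists a homomorphism φ from F onto a finite p-group such that φ(g) ∉ φ(⟨u⟩). -/
/-- An element is not a proper power: `a = w ^ k` forces `|k| ≤ 1`. -/
def NotProperPower {G : Type} [Group G] (a : G) : Prop :=
  ∀ (w : G) (k : ℤ), a = w ^ k → k.natAbs ≤ 1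

section Helpers

/-- Upper unitriangular matrices over `ZMod p`, as a submonoid. -/
def unitri (p n : ℕ) : Submonoid (Matrix (Fin n) (Fin n) (ZMod p)) where
  carrier := {M | ∀ i j, j ≤ i → M i j = (1 : Matrix (Fin n) (Fin n) (ZMod p)) i j}
  one_mem' := fun _ _ _ => rfl
  mul_mem' := by
    intro A B hA hB i j hij
    rw [Matrix.mul_apply, Finset.sum_eq_single i]
    · rw [hA i i le_rfl, hB i j hij]; simp
    · intro k _ hk
      rcases lt_or_gt_of_ne hk with h | h
      · rw [hA i k h.le, Matrix.one_apply_ne h.ne', zero_mul]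
      · rw [hB k j (hij.trans h.le), Matrix.one_apply_ne (hij.trans_lt h).ne', mul_zero]
    · simp

theorem unitri_pow {p n : ℕ} [Fact p.Prime] (M : Matrix (Fin n) (Fin n) (ZMod p))
    (hM : M ∈ unitri p n) : M ^ p ^ n = 1 := by
  rcases Nat.eq_zero_or_pos n with rfl | hn
  · exact Subsingleton.elim _ _
  have : Nonempty (Fin n) := ⟨⟨0, hn⟩⟩
  have key : ∀ k : ℕ, ∀ i j : Fin n, (j : ℕ) < i + k → ((M - 1) ^ k) i j = 0 := by
    intro k
    induction k with
    | zero =>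
      intro i j h
      rw [pow_zero, Matrix.one_apply_ne]
      intro h'; subst h'; omega
    | succ k ih =>
      intro i j h
      rw [pow_succ, Matrix.mul_apply]
      refine Finset.sum_eq_zero fun l _ => ?_
      by_cases hl : (l : ℕ) < i + k
      · rw [ih i l hl, zero_mul]
      · have : j ≤ l := by rw [Fin.le_def]; omega
        rw [Matrix.sub_apply, hM l j this, sub_self, mul_zero]
  have h0 : (M - 1) ^ n = 0 := by
    ext i j
    exact key n i j (by omega)
  have h1 : (M - 1) ^ p ^ n = 0 :=
    pow_eq_zero_of_le (Nat.lt_pow_self (Fact.out : p.Prime).one_lt).le h0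
  have h2 := add_pow_char_pow_of_commute (p := p) (n := n) (x := M - 1) (y := 1)
    (Commute.one_right (M - 1))
  rw [h1, one_pow, zero_add, sub_add_cancel] at h2
  exact h2

instance unitriGroup (p n : ℕ) [Fact p.Prime] : Group (unitri p n) :=
  { (inferInstance : Monoid (unitri p n)) with
    inv := fun M => M ^ (p ^ n - 1)
    inv_mul_cancel := by
      intro M
      change M ^ (p ^ n - 1) * M = 1
      rw [← pow_succ, Nat.sub_add_cancel (Nat.one_le_pow _ _ (Fact.out : p.Prime).pos)]
      exact Subtype.ext (unitri_pow M.1 M.2) }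

theorem unitri_isPGroup (p n : ℕ) [Fact p.Prime] : IsPGroup p (unitri p n) := by
  intro M
  exact ⟨n, Subtype.ext (unitri_pow M.1 M.2)⟩

open Classical in
/-- The edge matrix of the letter `c` in the word `L`. -/
noncomputable def edgeMat {β : Type} (p : ℕ) (L : List β) (c : β) :
    Matrix (Fin (L.length + 1)) (Fin (L.length + 1)) (ZMod p) :=
  Matrix.of fun i j => if (j : ℕ) = i + 1 ∧ L[(i : ℕ)]? = some c then 1 else 0

theorem edgeMat_mem {β : Type} (p : ℕ) (L : List β) (c : β) :
    1 + edgeMat p L c ∈ unitri p (L.length + 1) := by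
  intro i j hij
  rw [Matrix.add_apply, edgeMat, Matrix.of_apply, if_neg, add_zero]
  rintro ⟨h, _⟩
  rw [Fin.le_def] at hij
  omega

open Classical in
theorem mul_edge {β : Type} (p : ℕ) (L : List β) (c : β)
    (M : Matrix (Fin (L.length + 1)) (Fin (L.length + 1)) (ZMod p)) (i) (j : Fin L.length) :
    (M * (1 + edgeMat p L c)) i j.succ =
      M i j.succ + if L[(j : ℕ)]? = some c then M i j.castSucc else 0 := by
  rw [mul_add, mul_one, Matrix.add_apply, Matrix.mul_apply,
    Finset.sum_eq_single j.castSucc]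
  · simp [edgeMat]
  · intro k _ hk
    rw [edgeMat, Matrix.of_apply, if_neg, mul_zero]
    rintro ⟨h, _⟩
    apply hk
    ext
    simp at h ⊢
    omega
  · simp

/-- The unitriangular element of a letter. -/
noncomputable def edgeU {β : Type} (p : ℕ) (L : List β) (c : β) : unitri p (L.length + 1) :=
  ⟨1 + edgeMat p L c, edgeMat_mem p L c⟩

/-- The representation attached to a word. -/
noncomputable def wordRep {α : Type} (p : ℕ) [Fact p.Prime] (L : List (α × Bool)) :
    FreeGroup α →* unitri p (L.length + 1) :=
  FreeGroup.lift fun a => edgeU p L (a, true) * (edgeU p L (a, false))⁻¹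

theorem wordRep_letter {α : Type} (p : ℕ) [Fact p.Prime] (L : List (α × Bool)) (c : α × Bool) :
    wordRep p L (FreeGroup.mk [c]) * edgeU p L (c.1, !c.2) = edgeU p L c := by
  obtain ⟨a, b⟩ := c
  cases b <;> simp [wordRep, FreeGroup.lift_mk]

theorem wordRep_take {α : Type} (p : ℕ) [Fact p.Prime] (L : List (α × Bool))
    (hL : FreeGroup.IsReduced L) (t : ℕ) (ht : t ≤ L.length) :
    (wordRep p L (FreeGroup.mk (L.take t))).1 0 ⟨t, by omega⟩ = 1 ∧
    ∀ j : Fin (L.length + 1), t < j → (wordRep p L (FreeGroup.mk (L.take t))).1 0 j = 0 := by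
  classical
  induction t with
  | zero =>
    have : wordRep p L (FreeGroup.mk (L.take 0)) = 1 := by
      rw [List.take_zero, ← FreeGroup.one_eq_mk, map_one]
    rw [this]
    refine ⟨Matrix.one_apply_eq _, fun j hj => Matrix.one_apply_ne ?_⟩
    intro h; subst h; simp at hj
  | succ t ih =>
    have htl : t < L.length := by omega
    obtain ⟨ih1, ih2⟩ := ih htl.le
    set c := L[t] with hc
    have hmul : wordRep p L (FreeGroup.mk (L.take (t+1))) * edgeU p L (c.1, !c.2) =
        wordRep p L (FreeGroup.mk (L.take t)) * edgeU p L c := by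
      rw [← wordRep_letter p L c, ← mul_assoc, ← map_mul, FreeGroup.mul_mk,
        List.take_append_getElem]
    have hmul' := congrArg Subtype.val hmul
    change _ * (1 + edgeMat p L (c.1, !c.2)) = _ * (1 + edgeMat p L c) at hmul'
    generalize (wordRep p L (FreeGroup.mk (L.take (t+1)))).1 = R' at *
    generalize (wordRep p L (FreeGroup.mk (L.take t))).1 = R at *
    have hent : ∀ j : Fin L.length, R' 0 j.succ +
        (if L[(j : ℕ)]? = some (c.1, !c.2) then R' 0 j.castSucc else 0) =
        R 0 j.succ + if L[(j : ℕ)]? = some c then R 0 j.castSucc else 0 := by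
      intro j
      have := (mul_edge p L _ R' 0 j).symm.trans ((congrFun (congrFun hmul' 0) j.succ).trans
        (mul_edge p L c R 0 j))
      convert this
    have hne : ¬ (c = (c.1, !c.2)) := by
      intro h
      have := congrArg Prod.snd h
      simp at this
    have h1 : R' 0 (Fin.succ ⟨t, htl⟩) = 1 := by
      have h := hent ⟨t, htl⟩
      rw [ih2 _ (by simp)] at h
      simp only [List.getElem?_eq_getElem htl, ← hc, Option.some.injEq, if_neg hne] at h
      simpa using h.trans (by simpa using ih1)
    refine ⟨h1, ?_⟩
    have main : ∀ m : ℕ, ∀ hm : m < L.length, t < m → R' 0 (Fin.succ ⟨m, hm⟩) = 0 := by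
      intro m
      induction m with
      | zero => intro _ h; omega
      | succ m ihm =>
        intro hm htm
        have h := hent ⟨m+1, hm⟩
        rw [ih2 _ (by simp; omega), ih2 (Fin.castSucc ⟨m+1, hm⟩) (by simp; omega)] at h
        simp only [ite_self, add_zero] at h
        rcases Nat.lt_or_ge t m with h' | h'
        · have := ihm (by omega) h'
          change R' 0 (Fin.castSucc ⟨m+1, hm⟩) = 0 at this
          rw [this, ite_self, add_zero] at h
          exact h
        · obtain rfl : m = t := by omega
          rw [if_neg, add_zero] at h
          · exact h
          · rw [List.getElem?_eq_getElem hm]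
            intro he
            have he' := Option.some.inj he
            have hr := (List.isChain_iff_getElem.mp hL) m hm
            rw [← hc, he'] at hr
            simp at hr
    intro j hj
    have hj0 : (j : ℕ) - 1 < L.length := by omega
    have := main (j - 1) hj0 (by omega)
    convert this using 2
    ext
    simp
    omega

/-- Free groups are residually `p`. -/
theorem freeGroup_residually_p {α : Type} (p : ℕ) [Fact p.Prime] (x : FreeGroup α) (hx : x ≠ 1) :
    ∃ (n : ℕ) (φ : FreeGroup α →* unitri p n), φ x ≠ 1 := by
  classical
  refine ⟨_, wordRep p x.toWord, ?_⟩
  intro h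
  have h1 := (wordRep_take p x.toWord FreeGroup.isReduced_toWord x.toWord.length le_rfl).1
  rw [List.take_length, FreeGroup.mk_toWord, h] at h1
  change (1 : Matrix _ _ (ZMod p)) _ _ = 1 at h1
  rw [Matrix.one_apply_ne] at h1
  · exact zero_ne_one h1
  · intro h2
    have := congrArg Fin.val h2
    simp at this
    exact hx (FreeGroup.toWord_eq_nil_iff.mp (List.length_eq_zero_iff.mp (by simpa using this.symm)))

theorem freeGroup_comm_subsingleton {ι : Type} (h : ∀ x y : FreeGroup ι, x * y = y * x) :
    Subsingleton ι := by
  classical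
  refine ⟨fun a b => ?_⟩
  have := congrArg FreeGroup.toWord (h (FreeGroup.of a) (FreeGroup.of b))
  have h2 : ((a, true) : ι × Bool) = (b, true) := by
    by_contra hab
    simp [FreeGroup.toWord_mul, FreeGroup.reduce.cons] at this
    grind
  exact congrArg Prod.fst h2

theorem freeGroup_comm_cyclic {α : Type} (u g : FreeGroup α) (h : g * u = u * g) :
    ∃ w : FreeGroup α, u ∈ Subgroup.zpowers w ∧ g ∈ Subgroup.zpowers w := by
  let H := Subgroup.closure ({u, g} : Set (FreeGroup α))
  have hcomm : ∀ x y : H, x * y = y * x := by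
    have := Subgroup.isMulCommutative_closure (k := ({u, g} : Set (FreeGroup α))) (by
      rintro x (rfl | rfl) y (rfl | rfl) <;> simp [h])
    exact fun x y => this.is_comm.comm x y
  let e := IsFreeGroup.toFreeGroup H
  have hs : Subsingleton (IsFreeGroup.Generators H) := by
    apply freeGroup_comm_subsingleton
    intro x y
    apply e.symm.injective
    rw [map_mul, map_mul, hcomm]
  have hcyc : IsCyclic (FreeGroup (IsFreeGroup.Generators H)) := by
    rcases isEmpty_or_nonempty (IsFreeGroup.Generators H) with he | he
    · infer_instance
    · obtain ⟨i⟩ := he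
      have : Inhabited (IsFreeGroup.Generators H) := ⟨i⟩
      have := Unique.mk' (IsFreeGroup.Generators H)
      infer_instance
  obtain ⟨w, hw⟩ := hcyc
  refine ⟨(e.symm w).1, ?_, ?_⟩
  · obtain ⟨k, hk⟩ := hw (e ⟨u, Subgroup.subset_closure (by simp)⟩)
    refine ⟨k, ?_⟩
    have := congrArg e.symm hk
    simp only [map_zpow, MulEquiv.symm_apply_apply] at this
    simpa using congrArg Subtype.val this
  · obtain ⟨k, hk⟩ := hw (e ⟨g, Subgroup.subset_closure (by simp)⟩)
    refine ⟨k, ?_⟩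
    have := congrArg e.symm hk
    simp only [map_zpow, MulEquiv.symm_apply_apply] at this
    simpa using congrArg Subtype.val this

end Helpers

theorem stmt7 {α : Type} (u : FreeGroup α) (hu : NotProperPower u)
    (p : ℕ) (hp : p.Prime) (g : FreeGroup α) (hg : g ∉ Subgroup.zpowers u) :
    ∃ (Q : Type) (_ : Group Q) (_ : Finite Q) (φ : FreeGroup α →* Q),
      Function.Surjective φ ∧ IsPGroup p Q ∧
      φ g ∉ (Subgroup.zpowers u).map φ := by
  have : Fact p.Prime := ⟨hp⟩
  by_cases hc : g * u = u * g
  · exfalso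
    obtain ⟨w, ⟨k, hk⟩, hgw⟩ := freeGroup_comm_cyclic u g hc
    have hk' : w ^ k = u := hk
    have h1 := hu w k hk'.symm
    have h3 : k = 0 ∨ k = 1 ∨ k = -1 := by omega
    rcases h3 with rfl | rfl | rfl
    · have := hu 1 2 (by simpa using hk'.symm)
      simp at this
    · rw [zpow_one] at hk'
      exact hg (hk' ▸ hgw)
    · rw [zpow_neg_one] at hk'
      rw [← hk', Subgroup.zpowers_inv] at hg
      exact hg hgw
  · have hx : g * u * (u * g)⁻¹ ≠ 1 := fun h => hc (mul_inv_eq_one.mp h)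
    obtain ⟨n, φ, hφ⟩ := freeGroup_residually_p p _ hx
    refine ⟨φ.range, inferInstance, ?_, φ.rangeRestrict, φ.rangeRestrict_surjective,
      (unitri_isPGroup p n).to_subgroup _, ?_⟩
    · have : Finite (unitri p n) := Subtype.finite
      infer_instance
    · rintro ⟨y, ⟨k, rfl⟩, hy⟩
      apply hφ
      have h1 : φ (u ^ k) = φ g := congrArg Subtype.val hy
      rw [map_mul, map_inv, mul_inv_eq_one, map_mul, map_mul, ← h1, map_zpow]
      exact (Commute.refl (φ u)).zpow_left k
end

section
/- Let G = F₁ *_{a=b} F₂, where F₁, F₂ are free groups and a ∈ F₁ \ {1}, b ∈ F₂ \ {1} are not proper powers. Let u = a₁b₁···a_n b_n and v = a₁'b₁'···a_m'b_m' be elements of G with all a_i, a_j' ∈ F₁ \ ⟨a⟩ and all b_i, b_j' ∈ F₂ \ ⟨b⟩, and let q ∈ ⟨a⟩ \ {1}. Then there exist homomorphisms φ: F₁ → P and ψ: F₂ → Q onto finite groups with |φ(a)| = |ψ(b)| > 1 such that: every nontrivial element of the set Δ₁ = {a₁⁻¹qa₁} ∪ {a_i} ∪ {a_j'} ∪ {a_i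 a_k⁻¹} ∪ {a_j' a_l'⁻¹} ∪ {a_i a_j'⁻¹} has nontrivial image under φ, every element of Δ₁ not in ⟨a⟩ has image not in ⟨φ(a)⟩, and analogously every nontrivial element of Δ₂ = {b_i} ∪ {b_j'} ∪ {b_i b_k⁻¹} ∪ {b_j' b_l'⁻¹} ∪ {b_i b_j'⁻¹} has nontrivial image under ψ, with elements of Δ₂ outside ⟨b⟩ mapping outside ⟨ψ(b)⟩. -/
open Subgroup

namespace S9

/-! Centralizers -/

lemma of_not_comm {X : Type} (x y : X) (h : FreeGroup.of x * FreeGroup.of y = FreeGroup.of y * FreeGroup.of x) :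
    x = y := by
  classical
  by_contra hne
  have := congrArg (FreeGroup.lift (fun z => if z = x then Equiv.swap (0 : Fin 3) 1 else Equiv.swap 1 2)) h
  simp only [map_mul, FreeGroup.lift_apply_of, if_true, if_neg (Ne.symm hne)] at this
  revert this
  decide

lemma cyclic_of_comm {X : Type} (h : ∀ x y : FreeGroup X, x * y = y * x) :
    IsCyclic (FreeGroup X) := by
  have : Subsingleton X := ⟨fun x y => of_not_comm x y (h _ _)⟩
  rcases isEmpty_or_nonempty X with he | ⟨⟨x⟩⟩
  · infer_instance
  · have : Unique X := ⟨⟨x⟩, fun y => Subsingleton.elim _ _⟩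
    infer_instance

lemma mem_zpowers_of_comm {α : Type} (a x : FreeGroup α) (ha : a ≠ 1) (hp : NotProperPower a)
    (h : x * a = a * x) : x ∈ zpowers a := by
  let H : Subgroup (FreeGroup α) := closure {x, a}
  have hcomm : ∀ u v : H, u * v = v * u := by
    have hc := Subgroup.isMulCommutative_closure (k := ({x, a} : Set (FreeGroup α))) (by
      intro u hu v hv
      rcases hu with rfl | rfl <;> rcases hv with rfl | rfl <;> first | rfl | exact h | exact h.symm)
    exact fun u v => hc.is_comm.comm u v
  have hcyc : IsCyclic H := by
    let e := IsFreeGroup.toFreeGroup H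
    have : IsCyclic (FreeGroup (IsFreeGroup.Generators H)) := cyclic_of_comm (fun u v => by
      have := congrArg e (hcomm (e.symm u) (e.symm v))
      simpa using this)
    exact isCyclic_of_surjective e.symm e.symm.surjective
  obtain ⟨⟨w, hw⟩, hgen⟩ := hcyc.exists_generator
  have hx : x ∈ H := subset_closure (by simp)
  have haH : a ∈ H := subset_closure (by simp)
  obtain ⟨k, hk⟩ := mem_zpowers_iff.1 (hgen ⟨a, haH⟩)
  obtain ⟨l, hl⟩ := mem_zpowers_iff.1 (hgen ⟨x, hx⟩)
  have hk' : w ^ k = a := congrArg Subtype.val hk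
  have hl' : w ^ l = x := congrArg Subtype.val hl
  have := hp w k hk'.symm
  have hk0 : k ≠ 0 := by rintro rfl; simp at hk'; exact ha hk'.symm
  have hk1 : k = 1 ∨ k = -1 := by omega
  rw [← hl', ← hk']
  rcases hk1 with rfl | rfl
  · exact ⟨l, by simp⟩
  · exact ⟨-l, by simp⟩

/-! Faithful representation -/
section rep
variable {ι : Type} [Fintype ι] [DecidableEq ι]

def E (i : ι) : Matrix ι ι ℤ :=
  Matrix.vecMulVec (Pi.single i 8) (fun c => if c = i then 0 else 1)

lemma E_sq (i : ι) : E i * E i = 0 := by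
  rw [E, Matrix.vecMulVec_mul_vecMulVec]
  have : (fun c => if c = i then (0:ℤ) else 1) ⬝ᵥ (Pi.single i 8) = 0 := by simp
  rw [this]; ext; simp [Matrix.vecMulVec]

lemma E_mul (i : ι) (k l : ℤ) : (1 + k • E i) * (1 + l • E i) = 1 + (k + l) • E i := by
  simp only [mul_add, add_mul, smul_mul_assoc, mul_smul_comm, E_sq, one_mul, mul_one, smul_zero, add_smul, add_zero]
  abel

def T (i : ι) : Multiplicative ℤ →* (Matrix ι ι ℤ)ˣ where
  toFun k := ⟨1 + k.toAdd • E i, 1 + (-k.toAdd) • E i, by rw [E_mul]; simp, by rw [E_mul]; simp⟩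
  map_one' := by ext1; simp
  map_mul' k l := by ext1; simp only [Units.val_mul, E_mul, toAdd_mul]

def t (i : ι) : (Matrix ι ι ℤ)ˣ := T i (Multiplicative.ofAdd 1)

lemma t_zpow (i : ι) (k : ℤ) : ((t i ^ k : (Matrix ι ι ℤ)ˣ) : Matrix ι ι ℤ) = 1 + k • E i := by
  rw [t, ← map_zpow]
  simp [T, ← ofAdd_zsmul]

lemma t_mulVec (i : ι) (k : ℤ) (v : ι → ℤ) (r : ι) :
    (((t i ^ k : (Matrix ι ι ℤ)ˣ) : Matrix ι ι ℤ).mulVec v) r =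
      v r + if r = i then 8 * k * ∑ l ∈ Finset.univ.erase i, v l else 0 := by
  rw [t_zpow, Matrix.add_mulVec, Matrix.one_mulVec, Pi.add_apply, Matrix.smul_mulVec, E,
    Matrix.vecMulVec_mulVec]
  have : (fun c => if c = i then (0:ℤ) else 1) ⬝ᵥ v = ∑ l ∈ Finset.univ.erase i, v l := by
    rw [dotProduct, ← Finset.add_sum_erase _ _ (Finset.mem_univ i)]
    simp only [if_true, zero_mul, zero_add]
    exact Finset.sum_congr rfl (fun c hc => by simp [Finset.ne_of_mem_erase hc])
  rw [this]
  by_cases hr : r = i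
  · subst hr; simp; ring
  · simp [hr]

@[reducible] def act : MulAction (Matrix ι ι ℤ)ˣ (ι → ℤ) where
  smul M v := (M : Matrix ι ι ℤ).mulVec v
  one_smul v := Matrix.one_mulVec v
  mul_smul M N v := (Matrix.mulVec_mulVec v (M : Matrix ι ι ℤ) N).symm

def X (i : ι) : Set (ι → ℤ) := {v | 2 * ∑ l ∈ Finset.univ.erase i, |v l| < |v i|}

lemma X_ping (i j : ι) (hij : i ≠ j) (k : ℤ) (hk : k ≠ 0) (v : ι → ℤ) (hv : v ∈ X j) :
    ((t i ^ k : (Matrix ι ι ℤ)ˣ) : Matrix ι ι ℤ).mulVec v ∈ X i := by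
  simp only [X, Set.mem_ofPred_eq, t_mulVec, if_true] at hv ⊢
  have h1 : ∑ l ∈ Finset.univ.erase i, |v l + if l = i then 8 * k * ∑ l ∈ Finset.univ.erase i, v l else 0|
      = ∑ l ∈ Finset.univ.erase i, |v l| :=
    Finset.sum_congr rfl (fun c hc => by simp [Finset.ne_of_mem_erase hc])
  rw [h1]
  have hj : j ∈ Finset.univ.erase i := by simp [hij.symm]
  have hi : i ∈ Finset.univ.erase j := by simp [hij]
  rw [← Finset.add_sum_erase _ _ hi, Finset.erase_right_comm] at hv
  rw [← Finset.add_sum_erase _ v hj, ← Finset.add_sum_erase _ (fun l => |v l|) hj]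
  have hR := Finset.abs_sum_le_sum_abs v ((Finset.univ.erase i).erase j)
  set R := ∑ l ∈ (Finset.univ.erase i).erase j, |v l|
  set r := ∑ l ∈ (Finset.univ.erase i).erase j, v l
  have h2 : |v j| ≤ |v j + r| + |r| := by
    have := abs_sub (v j + r) r
    simpa using this
  have h3 : |8 * k * (v j + r)| ≤ |v i + 8 * k * (v j + r)| + |v i| := by
    have := abs_sub (v i + 8 * k * (v j + r)) (v i)
    simpa using this
  have h4 : 8 * |v j + r| ≤ |8 * k * (v j + r)| := by
    rw [abs_mul, abs_mul]
    have : 1 ≤ |k| := Int.one_le_abs hk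
    have h8 : |(8:ℤ)| = 8 := by norm_num
    rw [h8]
    nlinarith [abs_nonneg (v j + r)]
  have := abs_nonneg (v i)
  have := abs_nonneg r
  linarith

lemma X_disj (i j : ι) (hij : i ≠ j) : Disjoint (X i) (X j) := by
  rw [Set.disjoint_left]
  intro v h1 h2
  simp only [X, Set.mem_ofPred_eq] at h1 h2
  have hj : j ∈ Finset.univ.erase i := by simp [hij.symm]
  have hi : i ∈ Finset.univ.erase j := by simp [hij]
  have a1 := Finset.single_le_sum (f := fun l => |v l|) (fun l _ => abs_nonneg (v l)) hj
  have a2 := Finset.single_le_sum (f := fun l => |v l|) (fun l _ => abs_nonneg (v l)) hi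
  have := abs_nonneg (v i)
  have := abs_nonneg (v j)
  linarith

lemma X_nonempty (i : ι) : (X i).Nonempty := by
  refine ⟨Pi.single i 1, ?_⟩
  simp only [X, Set.mem_ofPred_eq]
  rw [Finset.sum_eq_zero]
  · simp
  · intro l hl; simp [Finset.ne_of_mem_erase hl]

open Monoid Pointwise in
lemma lift_t_injective [Nontrivial ι] : Function.Injective (FreeGroup.lift (t (ι := ι))) := by
  have : FreeGroup.lift (t (ι := ι)) =
      (CoprodI.lift fun i => FreeGroup.lift fun _ => t i).comp
        (@freeGroupEquivCoprodI ι).toMonoidHom := by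
    ext i
    simp
  rw [this, MonoidHom.coe_comp]
  clear this
  refine Function.Injective.comp ?_ (MulEquiv.injective freeGroupEquivCoprodI)
  letI : MulAction (Matrix ι ι ℤ)ˣ (ι → ℤ) := act
  let H : ι → Type := fun _i => FreeGroup Unit
  let f : ∀ i, H i →* (Matrix ι ι ℤ)ˣ := fun i => FreeGroup.lift fun _ => t i
  change Function.Injective (CoprodI.lift f)
  apply CoprodI.lift_injective_of_ping_pong f _ X
  · exact X_nonempty
  · exact fun i j h => X_disj i j h
  · rintro i j hij
    refine FreeGroup.freeGroupUnitEquivInt.forall_congr_left.mpr ?_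
    intro n hne1
    change FreeGroup.lift (fun _ => t i) (FreeGroup.of () ^ n) • X j ⊆ X i
    simp only [map_zpow, FreeGroup.lift_apply_of]
    have hnne0 : n ≠ 0 := by
      rintro rfl
      apply hne1
      simp [H, FreeGroup.freeGroupUnitEquivInt]
    rintro _ ⟨v, hv, rfl⟩
    exact X_ping i j hij n hnne0 v hv
  · right
    obtain ⟨i⟩ : Nonempty ι := inferInstance
    refine ⟨i, ?_⟩
    change (3 : Cardinal) ≤ Cardinal.mk (FreeGroup Unit)
    rw [FreeGroup.freeGroupUnitEquivInt.cardinal_eq, Cardinal.mk_denumerable]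
    exact Cardinal.natCast_le_aleph0 (n := 3)

/-- reduction mod `2^k` -/
def red (k : ℕ) : (Matrix ι ι ℤ)ˣ →* (Matrix ι ι (ZMod (2 ^ k)))ˣ :=
  Units.map ((Int.castRingHom (ZMod (2 ^ k))).mapMatrix :
    Matrix ι ι ℤ →+* Matrix ι ι (ZMod (2 ^ k))).toMonoidHom

lemma red_eq_one_iff (k : ℕ) (M : (Matrix ι ι ℤ)ˣ) :
    red k M = 1 ↔ ∃ N : Matrix ι ι ℤ, (M : Matrix ι ι ℤ) = 1 + (2 ^ k : ℤ) • N := by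
  have h : red k M = 1 ↔ (Int.castRingHom (ZMod (2 ^ k))).mapMatrix ((M : Matrix ι ι ℤ) - 1) = 0 := by
    rw [map_sub, map_one, sub_eq_zero, Units.ext_iff]; rfl
  rw [h]
  constructor
  · intro h
    have : ∀ i j, ∃ c, ((M : Matrix ι ι ℤ) - 1) i j = 2 ^ k * c := by
      intro i j
      have := congrFun (congrFun h i) j
      simp only [RingHom.mapMatrix_apply, Matrix.map_apply, Matrix.zero_apply, eq_intCast] at this
      rw [ZMod.intCast_zmod_eq_zero_iff_dvd] at this
      exact_mod_cast this
    choose N hN using this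
    refine ⟨Matrix.of N, ?_⟩
    rw [← sub_eq_iff_eq_add']
    ext i j
    rw [hN]; simp
  · rintro ⟨N, hN⟩
    rw [hN, add_sub_cancel_left]
    ext i j
    simp only [RingHom.mapMatrix_apply, Matrix.map_apply, Matrix.zero_apply, eq_intCast, Matrix.smul_apply, smul_eq_mul]
    rw [ZMod.intCast_zmod_eq_zero_iff_dvd]
    simp

lemma red_mono {k l : ℕ} (hkl : k ≤ l) (M : (Matrix ι ι ℤ)ˣ) (h : red l M = 1) : red k M = 1 := by
  rw [red_eq_one_iff] at h ⊢
  obtain ⟨N, hN⟩ := h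
  refine ⟨(2 ^ (l - k) : ℤ) • N, ?_⟩
  rw [hN, smul_smul, ← pow_add, Nat.add_sub_cancel' hkl]

lemma red_sq {k : ℕ} (M : (Matrix ι ι ℤ)ˣ) (h : red (k + 1) M = 1) : red (k + 2) (M ^ 2) = 1 := by
  rw [red_eq_one_iff] at h ⊢
  obtain ⟨N, hN⟩ := h
  refine ⟨N + (2 ^ k : ℤ) • (N * N), ?_⟩
  rw [Units.val_pow_eq_pow_val, hN, sq]
  simp only [mul_add, add_mul, smul_mul_assoc, mul_smul_comm, one_mul, mul_one, smul_add, smul_smul, add_assoc]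
  congr 1
  rw [← add_assoc, ← add_smul]
  congr 2
  · ring
  · ring

lemma red_sep (M : (Matrix ι ι ℤ)ˣ) (h : M ≠ 1) : ∃ k, red k M ≠ 1 := by
  by_contra! hc
  apply h
  ext i j
  rw [← sub_eq_zero]
  by_contra hne
  set z : ℤ := (M : Matrix ι ι ℤ) i j - ((1 : (Matrix ι ι ℤ)ˣ) : Matrix ι ι ℤ) i j with hz
  obtain ⟨N, hN⟩ := (red_eq_one_iff z.natAbs M).1 (hc z.natAbs)
  have hd : (2 ^ z.natAbs : ℤ) ∣ z := ⟨N i j, by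
    have := congrFun (congrFun hN i) j
    rw [Matrix.add_apply, Matrix.smul_apply, smul_eq_mul] at this
    rw [Units.val_one, this] at hz
    linarith⟩
  have := Int.le_of_dvd (abs_pos.2 hne) ((dvd_abs _ _).2 hd)
  have h2 : (z.natAbs : ℤ) < 2 ^ z.natAbs := by exact_mod_cast Nat.lt_two_pow_self
  rw [Int.natCast_natAbs] at h2
  omega

lemma red_one_lift (w : FreeGroup ι) : red 1 (FreeGroup.lift t w) = 1 := by
  have : (red 1).comp (FreeGroup.lift (t (ι := ι))) = 1 := by
    ext1 i
    simp only [MonoidHom.comp_apply, FreeGroup.lift_apply_of, MonoidHom.one_apply]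
    rw [red_eq_one_iff]
    refine ⟨(4:ℤ) • Matrix.vecMulVec (Pi.single i 1) (fun c => if c = i then 0 else 1), ?_⟩
    have := t_zpow i 1
    rw [zpow_one, one_smul] at this
    rw [this, smul_smul]
    congr 1
    ext r c
    simp [E, Matrix.vecMulVec, Pi.single_apply]
  exact DFunLike.congr_fun this w

lemma red_pow (w : FreeGroup ι) (t' : ℕ) : red (t' + 1) ((FreeGroup.lift t w) ^ 2 ^ t') = 1 := by
  induction t' with
  | zero => simpa using red_one_lift w
  | succ n ih => 
    have h2 : (2 : ℕ) ^ (n + 1) = 2 ^ n * 2 := pow_succ 2 n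
    have h3 : (FreeGroup.lift t w) ^ (2 ^ (n + 1)) = ((FreeGroup.lift t w) ^ 2 ^ n) ^ 2 := by
      rw [h2, pow_mul]
    rw [h3]; exact red_sq _ ih

lemma main_fin [Nontrivial ι] (a : FreeGroup ι) (ha : a ≠ 1) (D : Set (FreeGroup ι)) (hD : D.Finite)
    (hD1 : ∀ d ∈ D, d ≠ 1) : ∃ K : ℕ, ∀ s ≥ K, ∃ (P : Type) (_ : Group P) (_ : Finite P)
      (φ : FreeGroup ι →* P), orderOf (φ a) = 2 ^ (s + 1) ∧ ∀ d ∈ D, φ d ≠ 1 := by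
  have hsep : ∀ d : FreeGroup ι, d ≠ 1 → ∃ k, red k (FreeGroup.lift t d) ≠ 1 := fun d hd =>
    red_sep _ (fun h => hd (lift_t_injective (by rw [h, map_one])))
  have hK : ∃ K, ∀ d ∈ D, red K (FreeGroup.lift t d) ≠ 1 := by
    choose! f hf using hsep
    obtain ⟨K, hK⟩ := (hD.image f).bddAbove
    exact ⟨K, fun d hd h => hf d (hD1 d hd) (red_mono (hK ⟨d, hd, rfl⟩) _ h)⟩
  obtain ⟨K, hK⟩ := hK
  refine ⟨K, fun s hs => ?_⟩
  have hex := hsep (a ^ 2 ^ s) (fun h => ha ((pow_eq_one_iff_left (by positivity)).1 h))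
  classical
  let k := Nat.find hex
  have hk : red k (FreeGroup.lift t (a ^ 2 ^ s)) ≠ 1 := Nat.find_spec hex
  have hlt : s + 1 < k := by
    by_contra! hc
    refine hk (red_mono hc _ ?_)
    rw [map_pow]; exact red_pow a s
  obtain ⟨k', hk'⟩ : ∃ k', k = k' + 2 := ⟨k - 2, by omega⟩
  have hprev : red (k' + 1) (FreeGroup.lift t (a ^ 2 ^ s)) = 1 := by
    have := Nat.find_min hex (m := k' + 1) (by change _ < k; omega)
    simpa using this
  have hnext := red_sq _ hprev
  rw [← hk', ← map_pow, ← pow_mul, ← pow_succ] at hnext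
  haveI : NeZero (2 ^ k) := ⟨by positivity⟩
  refine ⟨(Matrix ι ι (ZMod (2 ^ k)))ˣ, inferInstance, inferInstance, (red k).comp (FreeGroup.lift t), ?_, ?_⟩
  · haveI : Fact (Nat.Prime 2) := ⟨Nat.prime_two⟩
    apply orderOf_eq_prime_pow
    · rw [← map_pow]; exact hk
    · rw [← map_pow]; exact hnext
  · intro d hd h
    exact hK d hd (red_mono (by omega) _ h)

end rep

/-! Reduction to finite alphabets -/
section alph
open Classical in
noncomputable def ret {α : Type} (s : Finset α) : FreeGroup α →* FreeGroup (s ⊕ Bool) :=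
  FreeGroup.lift (fun x => if h : x ∈ s then FreeGroup.of (Sum.inl ⟨x, h⟩) else 1)

def inc {α : Type} (s : Finset α) : FreeGroup (s ⊕ Bool) →* FreeGroup α :=
  FreeGroup.lift (Sum.elim (fun x => FreeGroup.of x.1) (fun _ => 1))

lemma exists_supp {α : Type} (d : FreeGroup α) :
    ∃ s : Finset α, ∀ s', s ⊆ s' → inc s' (ret s' d) = d := by
  classical
  induction d using FreeGroup.induction_on with
  | C1 => exact ⟨∅, fun s' _ => by simp⟩
  | of x => exact ⟨{x}, fun s' h => by
      have : x ∈ s' := h (by simp)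
      simp [ret, inc, this]⟩
  | inv_of x ih =>
    obtain ⟨s, hs⟩ := ih
    exact ⟨s, fun s' h => by rw [map_inv, map_inv, hs s' h]⟩
  | mul x y hx hy =>
    obtain ⟨s, hs⟩ := hx
    obtain ⟨u, hu⟩ := hy
    exact ⟨s ∪ u, fun s' h => by
      rw [map_mul, map_mul, hs s' (Finset.union_subset_left h), hu s' (Finset.union_subset_right h)]⟩

lemma main_gen {α : Type} (a : FreeGroup α) (ha : a ≠ 1) (D : Set (FreeGroup α)) (hD : D.Finite)
    (hD1 : ∀ d ∈ D, d ≠ 1) : ∃ K : ℕ, ∀ s ≥ K, ∃ (P : Type) (_ : Group P) (_ : Finite P)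
      (φ : FreeGroup α →* P), orderOf (φ a) = 2 ^ (s + 1) ∧ ∀ d ∈ D, φ d ≠ 1 := by
  classical
  choose f hf using exists_supp (α := α)
  let S : Finset α := (hD.toFinset ∪ {a}).biUnion f
  have hS : ∀ d, d ∈ D ∨ d = a → inc S (ret S d) = d := by
    intro d hd
    apply hf
    apply Finset.subset_biUnion_of_mem
    simpa using hd.symm
  have hS1 : ∀ d, d ∈ D ∨ d = a → d ≠ 1 → ret S d ≠ 1 := by
    intro d hd h1 h
    apply h1
    rw [← hS d hd, h, map_one]
  haveI : Nontrivial (S ⊕ Bool) := ⟨Sum.inr true, Sum.inr false, by simp⟩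
  obtain ⟨K, hK⟩ := main_fin (ret S a) (hS1 a (Or.inr rfl) ha) (ret S '' D) (hD.image _) (by
    rintro _ ⟨d, hd, rfl⟩
    exact hS1 d (Or.inl hd) (hD1 d hd))
  refine ⟨K, fun s hs => ?_⟩
  obtain ⟨P, i1, i2, φ, h1, h2⟩ := hK s hs
  exact ⟨P, i1, i2, φ.comp (ret S), h1, fun d hd => h2 _ ⟨d, hd, rfl⟩⟩

lemma main_sep {α : Type} (a : FreeGroup α) (ha : a ≠ 1) (hp : NotProperPower a)
    (D : Set (FreeGroup α)) (hD : D.Finite) :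
    ∃ K : ℕ, ∀ s ≥ K, ∃ (P : Type) (_ : Group P) (_ : Finite P)
      (φ : FreeGroup α →* P), Function.Surjective φ ∧ orderOf (φ a) = 2 ^ (s + 1) ∧
      ∀ x ∈ D, (x ≠ 1 → φ x ≠ 1) ∧ (x ∉ zpowers a → φ x ∉ zpowers (φ a)) := by
  obtain ⟨K, hK⟩ := main_gen a ha ((D ∪ (fun x => x * a * x⁻¹ * a⁻¹) '' D) \ {1})
    ((hD.union (hD.image _)).subset Set.sdiff_subset) (fun d hd => hd.2)
  refine ⟨K, fun s hs => ?_⟩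
  obtain ⟨P, i1, i2, φ, h1, h2⟩ := hK s hs
  refine ⟨φ.range, inferInstance, inferInstance, φ.rangeRestrict, φ.rangeRestrict_surjective, ?_, ?_⟩
  · rw [← h1]
    exact (orderOf_injective φ.range.subtype (Subgroup.subtype_injective _) _).symm
  · intro x hx
    refine ⟨fun hx1 h => h2 x ⟨Or.inl hx, hx1⟩ (congrArg Subtype.val h), fun hxa h => ?_⟩
    obtain ⟨k, hk⟩ := mem_zpowers_iff.1 h
    have hk' : φ a ^ k = φ x := congrArg Subtype.val hk
    refine h2 (x * a * x⁻¹ * a⁻¹) ⟨Or.inr ⟨x, hx, rfl⟩, fun hc => hxa ?_⟩ ?_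
    · apply mem_zpowers_of_comm a x ha hp
      have hc' : x * a * x⁻¹ * a⁻¹ = 1 := hc
      rw [mul_inv_eq_one, mul_inv_eq_iff_eq_mul] at hc'
      exact hc'
    · simp only [map_mul, map_inv, ← hk']
      group
end alph
lemma fin2 {G : Type} {ι κ : Type} [Finite ι] [Finite κ] (f : ι → κ → G) :
    {x | ∃ i k, x = f i k}.Finite := by
  refine (Set.finite_range (fun p : ι × κ => f p.1 p.2)).subset ?_
  rintro _ ⟨i, k, rfl⟩
  exact ⟨(i, k), rfl⟩

end S9


theorem stmt9 {α β : Type} (a : FreeGroup α) (b : FreeGroup β)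
    (ha : a ≠ 1) (hb : b ≠ 1) (hpa : NotProperPower a) (hpb : NotProperPower b)
    (n m : ℕ) (hn : 0 < n)
    (A : Fin n → FreeGroup α) (B : Fin n → FreeGroup β)
    (A' : Fin m → FreeGroup α) (B' : Fin m → FreeGroup β)
    (hA : ∀ i, A i ∉ zpowers a) (hA' : ∀ j, A' j ∉ zpowers a)
    (hB : ∀ i, B i ∉ zpowers b) (hB' : ∀ j, B' j ∉ zpowers b)
    (q : FreeGroup α) (hq : q ∈ zpowers a) (hq1 : q ≠ 1) :
    ∃ (P : Type) (_ : Group P) (_ : Finite P) (φ : FreeGroup α →* P)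
      (Q : Type) (_ : Group Q) (_ : Finite Q) (ψ : FreeGroup β →* Q),
      Function.Surjective φ ∧ Function.Surjective ψ ∧
      orderOf (φ a) = orderOf (ψ b) ∧ 1 < orderOf (φ a) ∧
      (∀ x ∈ ({(A ⟨0, hn⟩)⁻¹ * q * A ⟨0, hn⟩} ∪ Set.range A ∪ Set.range A' ∪
          {x | ∃ i k, x = A i * (A k)⁻¹} ∪ {x | ∃ j l, x = A' j * (A' l)⁻¹} ∪
          {x | ∃ i j, x = A i * (A' j)⁻¹} : Set (FreeGroup α)),
        (x ≠ 1 → φ x ≠ 1) ∧ (x ∉ zpowers a → φ x ∉ zpowers (φ a))) ∧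
      (∀ y ∈ (Set.range B ∪ Set.range B' ∪
          {y | ∃ i k, y = B i * (B k)⁻¹} ∪ {y | ∃ j l, y = B' j * (B' l)⁻¹} ∪
          {y | ∃ i j, y = B i * (B' j)⁻¹} : Set (FreeGroup β)),
        (y ≠ 1 → ψ y ≠ 1) ∧ (y ∉ zpowers b → ψ y ∉ zpowers (ψ b))) := by
  obtain ⟨K₁, h₁⟩ := S9.main_sep a ha hpa
    ({(A ⟨0, hn⟩)⁻¹ * q * A ⟨0, hn⟩} ∪ Set.range A ∪ Set.range A' ∪
          {x | ∃ i k, x = A i * (A k)⁻¹} ∪ {x | ∃ j l, x = A' j * (A' l)⁻¹} ∪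
          {x | ∃ i j, x = A i * (A' j)⁻¹} : Set (FreeGroup α))
    (((((((Set.finite_singleton _).union (Set.finite_range A)).union (Set.finite_range A')).union
      (S9.fin2 _)).union (S9.fin2 _)).union (S9.fin2 _)))
  obtain ⟨K₂, h₂⟩ := S9.main_sep b hb hpb
    (Set.range B ∪ Set.range B' ∪
          {y | ∃ i k, y = B i * (B k)⁻¹} ∪ {y | ∃ j l, y = B' j * (B' l)⁻¹} ∪
          {y | ∃ i j, y = B i * (B' j)⁻¹} : Set (FreeGroup β))
    ((((((Set.finite_range B)).union (Set.finite_range B')).union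
      (S9.fin2 _)).union (S9.fin2 _)).union (S9.fin2 _))
  obtain ⟨P, i1, i2, φ, hs, ho, hx⟩ := h₁ (max K₁ K₂) (le_max_left _ _)
  obtain ⟨Q, j1, j2, ψ, hs', ho', hx'⟩ := h₂ (max K₁ K₂) (le_max_right _ _)
  exact ⟨P, i1, i2, φ, Q, j1, j2, ψ, hs, hs', ho.trans ho'.symm,
    by rw [ho]; exact Nat.one_lt_two_pow (Nat.succ_ne_zero _), hx, hx'⟩
end

section
/- Let F₁, F₂ be free groups, a ∈ F₁ \ {1}, b ∈ F₂ \ {1}, and set G = F₁ *_{a=b} F₂. If u, v ∈ F₁ are elements such that u is not conjugate in F₁ to v or v⁻¹, then there exists a homomorphism of G onto a finite group under which the images of u and v have different orders. -/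
open Monoid Subgroup

def fam (α β : Type) : Bool → Type
  | true => FreeGroup α
  | false => FreeGroup β

instance famGroup (α β : Type) : ∀ i : Bool, Group (fam α β i)
  | true => inferInstanceAs (Group (FreeGroup α))
  | false => inferInstanceAs (Group (FreeGroup β))

/-- The maps from the infinite cyclic group `FreeGroup Unit` sending the
generator to `a` resp. `b`; their pushout is `F₁ *_{a=b} F₂`. -/
def amalMaps {α β : Type} (a : FreeGroup α) (b : FreeGroup β) :
    ∀ i : Bool, FreeGroup Unit →* fam α β i
  | true => FreeGroup.lift fun _ => a
  | false => FreeGroup.lift fun _ => b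


theorem fg_syllables {α : Type} (g : FreeGroup α) (hg : g ≠ 1) :
    ∃ l : List (α × ℤ), l ≠ [] ∧ l.IsChain (fun p q => p.1 ≠ q.1) ∧ (∀ p ∈ l, p.2 ≠ 0) ∧
      g = (l.map fun p => FreeGroup.of p.1 ^ p.2).prod := by
  classical
  let W := CoprodI.Word.equiv (freeGroupEquivCoprodI g)
  have hW : W.prod = freeGroupEquivCoprodI g := CoprodI.Word.equiv.symm_apply_apply _
  have key : ∀ m : FreeGroup Unit, m = FreeGroup.of () ^ (FreeGroup.freeGroupUnitEquivInt m) := by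
    intro m
    exact (FreeGroup.freeGroupUnitEquivInt.symm_apply_apply m).symm
  refine ⟨W.toList.map fun p => (p.1, FreeGroup.freeGroupUnitEquivInt p.2), ?_, ?_, ?_, ?_⟩
  · intro h
    have : W.toList = [] := by simpa using h
    apply hg
    apply freeGroupEquivCoprodI.injective
    rw [← hW, CoprodI.Word.prod, this]; simp
  · rw [List.isChain_map]
    exact W.chain_ne
  · intro p hp h0
    obtain ⟨q, hq, rfl⟩ := List.mem_map.1 hp
    apply W.ne_one q hq
    rw [key q.2]
    simp only at h0
    rw [h0]; simp
  · apply freeGroupEquivCoprodI.injective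
    rw [← hW, CoprodI.Word.prod, map_list_prod, List.map_map, List.map_map]
    congr 1
    apply List.map_congr_left
    intro p hp
    simp only [Function.comp, map_zpow, freeGroupEquivCoprodI_apply, FreeGroup.lift_apply_of]
    rw [← map_zpow, ← key]

/-- Upper unitriangular integer matrices. -/
def UniTri {k : ℕ} (A : Matrix (Fin k) (Fin k) ℤ) : Prop :=
  (∀ i j, j < i → A i j = 0) ∧ ∀ i, A i i = 1

theorem UniTri.one {k : ℕ} : UniTri (1 : Matrix (Fin k) (Fin k) ℤ) :=
  ⟨fun _ _ h => Matrix.one_apply_ne (ne_of_gt h), fun i => Matrix.one_apply_eq i⟩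

theorem UniTri.mul {k : ℕ} {A B : Matrix (Fin k) (Fin k) ℤ} (hA : UniTri A) (hB : UniTri B) :
    UniTri (A * B) := by
  constructor
  · intro i j h
    rw [Matrix.mul_apply]
    apply Finset.sum_eq_zero
    intro m _
    rcases lt_or_ge m i with h1 | h1
    · rw [hA.1 _ _ h1, zero_mul]
    · rw [hB.1 _ _ (lt_of_lt_of_le h h1), mul_zero]
  · intro i
    rw [Matrix.mul_apply, Finset.sum_eq_single i]
    · rw [hA.2, hB.2, mul_one]
    · intro m _ hm
      rcases lt_or_gt_of_ne hm with h1 | h1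
      · rw [hA.1 _ _ h1, zero_mul]
      · rw [hB.1 _ _ h1, mul_zero]
    · simp

theorem fg_exists_unitri {α : Type} (g : FreeGroup α) (hg : g ≠ 1) :
    ∃ k : ℕ, ∃ ρ : FreeGroup α →* Matrix (Fin (k + 1)) (Fin (k + 1)) ℤ,
      (∀ h, UniTri (ρ h)) ∧ ρ g ≠ 1 := by
  classical
  obtain ⟨l, hl, hch, hne, hprod⟩ := fg_syllables g hg
  set k := l.length with hk
  have hk0 : 0 < k := List.length_pos_of_ne_nil hl
  let N : α → Matrix (Fin (k + 1)) (Fin (k + 1)) ℤ := fun x i j =>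
    if h : i.val < k then (if j.val = i.val + 1 ∧ (l[i.val]'h).1 = x then 1 else 0) else 0
  have hN2 : ∀ x, N x * N x = 0 := by
    intro x
    ext i j
    rw [Matrix.mul_apply]
    apply Finset.sum_eq_zero
    intro m _
    by_contra hc
    have h1 := left_ne_zero_of_mul hc
    have h2 := right_ne_zero_of_mul hc
    simp only [N, ne_eq, dite_eq_right_iff, ite_eq_right_iff, one_ne_zero, imp_false, not_forall,
      not_not] at h1 h2
    obtain ⟨a1, a2, a3⟩ := h1
    obtain ⟨b1, b2, b3⟩ := h2
    have := (List.isChain_iff_getElem.1 hch) i.val (by omega)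
    apply this
    rw [a3]
    simp only [a2] at b3
    exact b3.symm
  let U : α → (Matrix (Fin (k + 1)) (Fin (k + 1)) ℤ)ˣ := fun x =>
    ⟨1 + N x, 1 - N x, by
      have := hN2 x; noncomm_ring; simp [this], by
      have := hN2 x; noncomm_ring; simp [this]⟩
  have hUz : ∀ x (e : ℤ), ((U x ^ e : (Matrix (Fin (k + 1)) (Fin (k + 1)) ℤ)ˣ) :
      Matrix (Fin (k + 1)) (Fin (k + 1)) ℤ) = 1 + e • N x := by
    intro x e
    induction e using Int.induction_on with
    | zero => simp
    | succ n ih =>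
      rw [zpow_add_one, Units.val_mul, ih]
      change (1 + (n : ℤ) • N x) * (1 + N x) = _
      have h3 : ((n : ℤ) • N x) * N x = 0 := by rw [smul_mul_assoc, hN2, smul_zero]
      rw [mul_add, add_mul, add_mul, h3, add_smul, one_smul]
      simp only [mul_one, one_mul]; abel
    | pred n ih =>
      rw [zpow_sub_one, Units.val_mul, ih]
      change (1 + (-n : ℤ) • N x) * (1 - N x) = _
      have h3 : ((-n : ℤ) • N x) * N x = 0 := by rw [smul_mul_assoc, hN2, smul_zero]
      rw [mul_sub, add_mul, add_mul, h3, sub_smul, one_smul]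
      simp only [mul_one, one_mul]; abel
  let ρ0 := FreeGroup.lift U
  let ρ : FreeGroup α →* Matrix (Fin (k + 1)) (Fin (k + 1)) ℤ := (Units.coeHom _).comp ρ0
  have hNt : ∀ x i j, j ≤ i → N x i j = 0 := by
    intro x i j h
    have : j.val ≤ i.val := h
    simp only [N]
    split_ifs with h1 h2
    · omega
    · rfl
    · rfl
  have hU1 : ∀ x (e : ℤ), UniTri (ρ (FreeGroup.of x ^ e)) := by
    intro x e
    have : ρ (FreeGroup.of x ^ e) = 1 + e • N x := by
      rw [← hUz]; simp [ρ, ρ0]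
    rw [this]
    constructor
    · intro i j h
      rw [Matrix.add_apply, Matrix.smul_apply, hNt x i j h.le, Matrix.one_apply_ne (ne_of_gt h)]
      simp
    · intro i
      rw [Matrix.add_apply, Matrix.smul_apply, hNt x i i le_rfl]
      simp
  have hρz : ∀ x (e : ℤ), ρ (FreeGroup.of x ^ e) = 1 + e • N x := by
      intro x e; rw [← hUz]; simp [ρ, ρ0]
  refine ⟨k, ρ, ?_, ?_⟩
  · intro h
    induction h using FreeGroup.induction_on with
    | C1 => rw [map_one]; exact UniTri.one
    | of x => simpa using hU1 x 1
    | inv_of x _ => simpa using hU1 x (-1)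
    | mul x y hx hy => rw [map_mul]; exact hx.mul hy
  · have row : ∀ t, t ≤ k → (∀ j : Fin (k + 1), t < j.val →
        ρ (((l.take t).map fun p => FreeGroup.of p.1 ^ p.2).prod) 0 j = 0) ∧
        ∀ j : Fin (k + 1), j.val = t →
          ρ (((l.take t).map fun p => FreeGroup.of p.1 ^ p.2).prod) 0 j ≠ 0 := by
      intro t
      induction t with
      | zero =>
        intro _
        constructor
        · intro j hj
          simp only [List.take_zero, List.map_nil, List.prod_nil, map_one]
          exact Matrix.one_apply_ne (by intro h; rw [← h] at hj; simp at hj)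
        · intro j hj
          have : j = 0 := Fin.ext (by simpa using hj)
          subst this
          simp
      | succ t ih =>
        intro ht
        obtain ⟨ih1, ih2⟩ := ih (by omega)
        have htk : t < l.length := by omega
        rw [← List.take_concat_get' l t htk, List.map_append, List.prod_append, map_mul]
        simp only [List.map_cons, List.map_nil, List.prod_cons, List.prod_nil, mul_one]
        rw [hρz]
        set R := ρ (((l.take t).map fun p => FreeGroup.of p.1 ^ p.2).prod) with hR
        have hent : ∀ j, (R * (1 + (l[t]).2 • N (l[t]).1)) 0 j = R 0 j +
            (l[t]).2 * ∑ m, R 0 m * N (l[t]).1 m j := by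
          intro j
          rw [mul_add, mul_one, Matrix.add_apply, Matrix.mul_smul, Matrix.smul_apply,
            Matrix.mul_apply, smul_eq_mul]
        have hNe : ∀ x (m j : Fin (k + 1)), N x m j ≠ 0 → j.val = m.val + 1 := by
          intro x m j h
          simp only [N, ne_eq, dite_eq_right_iff, ite_eq_right_iff, one_ne_zero, imp_false,
            not_forall, not_not] at h
          exact h.2.1
        constructor
        · intro j hj
          rw [hent, ih1 j (by omega), Finset.sum_eq_zero]
          · simp
          · intro m _
            by_contra hc
            have h1 := left_ne_zero_of_mul hc
            have h2 := hNe _ _ _ (right_ne_zero_of_mul hc)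
            exact h1 (ih1 m (by omega))
        · intro j hj
          rw [hent, ih1 j (by omega), zero_add]
          apply mul_ne_zero
          · exact hne _ (List.getElem_mem htk)
          · rw [Finset.sum_eq_single (⟨t, by omega⟩ : Fin (k + 1))]
            · apply mul_ne_zero
              · exact ih2 _ rfl
              · have : t < k := by omega
                simp [N, this, hj]
            · intro m _ hm
              by_contra hc
              have h2 := hNe _ _ _ (right_ne_zero_of_mul hc)
              apply hm; apply Fin.ext; simp; omega
            · simp
    have := (row k le_rfl).2 (Fin.last k) rfl
    have htake : l.take k = l := List.take_length
    rw [htake, ← hprod] at this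
    intro h
    rw [h] at this
    apply this
    apply Matrix.one_apply_ne
    intro h
    have := congrArg Fin.val h
    simp at this
    omega

theorem fg_potent {α : Type} (g : FreeGroup α) (hg : g ≠ 1) (n : ℕ) (hn : 0 < n) :
    ∃ (Q : Type) (_ : Group Q) (_ : Finite Q) (φ : FreeGroup α →* Q), orderOf (φ g) = n := by
  classical
  have hex := fg_exists_unitri g hg
  obtain ⟨ρ, hρ, hρg⟩ := Nat.find_spec hex
  have hmin := fun m (hm : m < Nat.find hex) => Nat.find_min hex hm
  generalize Nat.find hex = k at ρ hρ hρg hmin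
  obtain _ | k := k
  · exfalso
    apply hρg
    ext i j
    have hi : i = j := by apply Fin.ext; omega
    subst hi
    rw [(hρ g).2]; simp
  have hsub : ∀ (f : Fin (k + 1) → Fin (k + 2)), StrictMono f →
      (∀ A B : Matrix (Fin (k + 2)) (Fin (k + 2)) ℤ, UniTri A → UniTri B →
        (A * B).submatrix f f = A.submatrix f f * B.submatrix f f) →
      (ρ g).submatrix f f = 1 := by
    intro f hf hm
    by_contra hc
    apply hmin k (Nat.lt_succ_self k)
    refine ⟨⟨⟨fun h => (ρ h).submatrix f f, ?_⟩, ?_⟩, ?_, hc⟩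
    · rw [map_one]; exact Matrix.submatrix_one f hf.injective
    · intro x y
      simp only [map_mul]
      exact hm _ _ (hρ x) (hρ y)
    · intro h
      exact ⟨fun i j hij => (hρ h).1 _ _ (hf hij), fun i => (hρ h).2 _⟩
  have h1 : (ρ g).submatrix Fin.castSucc Fin.castSucc = 1 := by
    apply hsub _ (Fin.strictMono_castSucc)
    intro A B hA hB
    ext i j
    simp only [Matrix.submatrix_apply, Matrix.mul_apply]
    rw [Fin.sum_univ_castSucc, hB.1 (Fin.last _) _ (Fin.castSucc_lt_last j), mul_zero, add_zero]
  have h2 : (ρ g).submatrix Fin.succ Fin.succ = 1 := by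
    apply hsub _ (Fin.strictMono_succ)
    intro A B hA hB
    ext i j
    simp only [Matrix.submatrix_apply, Matrix.mul_apply]
    rw [Fin.sum_univ_succ, hA.1 _ 0 (Fin.succ_pos i), zero_mul, zero_add]
  set ε := ρ g 0 (Fin.last _) with hε
  set E : Matrix (Fin (k + 2)) (Fin (k + 2)) ℤ := Matrix.single 0 (Fin.last _) 1 with hE
  have h0l : (0 : Fin (k + 2)) ≠ Fin.last (k + 1) := (Fin.last_pos).ne
  have hEE : E * E = 0 := by
    rw [hE, Matrix.single_mul_single_of_ne]
    exact h0l.symm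
  have hρE : ρ g = 1 + ε • E := by
    ext i j
    have hEij : E i j = if i = 0 ∧ j = Fin.last _ then 1 else 0 := by
      rw [hE, Matrix.single_apply]
      simp [eq_comm]
    rw [Matrix.add_apply, Matrix.smul_apply, hEij]
    rcases Fin.eq_zero_or_eq_succ i with rfl | ⟨i', rfl⟩
    · rcases Fin.eq_castSucc_or_eq_last j with ⟨j', rfl⟩ | rfl
      · have := congrFun (congrFun h1 0) j'
        simp only [Matrix.submatrix_apply, Fin.castSucc_zero] at this
        rw [this]
        have hj : j'.castSucc ≠ Fin.last _ := (Fin.castSucc_lt_last j').ne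
        simp only [hj, and_false, if_false, smul_zero, add_zero]
        simp only [Matrix.one_apply]
        congr 1
        simp [Fin.ext_iff]
      · simp [Matrix.one_apply_ne h0l, ← hε]
    · simp only [Fin.succ_ne_zero, false_and, if_false, smul_zero, add_zero]
      rcases Fin.eq_zero_or_eq_succ j with rfl | ⟨j', rfl⟩
      · rw [(hρ g).1 _ _ (Fin.succ_pos _), Matrix.one_apply_ne (Fin.succ_ne_zero _)]
      · have := congrFun (congrFun h2 i') j'
        simp only [Matrix.submatrix_apply] at this
        rw [this]
        simp only [Matrix.one_apply, Fin.succ_inj]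
  have hε0 : ε ≠ 0 := by
    intro h; rw [h, zero_smul, add_zero] at hρE; exact hρg hρE
  have hpow : ∀ m : ℕ, ρ g ^ m = 1 + ((m : ℤ) * ε) • E := by
    intro m
    induction m with
    | zero => simp
    | succ m ih =>
      rw [pow_succ, ih, hρE, mul_add, add_mul, add_mul, smul_mul_smul_comm, hEE]
      simp only [mul_one, one_mul, smul_zero, add_zero]
      have h4 : (((m + 1 : ℕ) : ℤ) * ε) • E = ((m : ℤ) * ε) • E + ε • E := by
        rw [← add_smul]; congr 1; push_cast; ring
      rw [h4]; abel
  set M := n * ε.natAbs with hM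
  have hM0 : M ≠ 0 := mul_ne_zero hn.ne' (Int.natAbs_ne_zero.2 hε0)
  have : NeZero M := ⟨hM0⟩
  let r : Matrix (Fin (k + 2)) (Fin (k + 2)) ℤ →* Matrix (Fin (k + 2)) (Fin (k + 2)) (ZMod M) :=
    (Int.castRingHom (ZMod M)).mapMatrix.toMonoidHom
  refine ⟨(Matrix (Fin (k + 2)) (Fin (k + 2)) (ZMod M))ˣ, inferInstance, inferInstance,
    (r.comp ρ).toHomUnits, ?_⟩
  have hone : ∀ m : ℕ, ((r.comp ρ).toHomUnits g) ^ m = 1 ↔ n ∣ m := by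
    intro m
    rw [← Units.val_inj, Units.val_pow_eq_pow_val, MonoidHom.coe_toHomUnits, ← map_pow,
      MonoidHom.comp_apply, map_pow, hpow]
    have e1 : n ∣ m ↔ (M : ℤ) ∣ (m : ℤ) * ε := by
      rw [← Int.natAbs_dvd_natAbs, Int.natAbs_mul, Int.natAbs_natCast, Int.natAbs_natCast, hM]
      exact (Nat.mul_dvd_mul_iff_right (Int.natAbs_pos.2 hε0)).symm
    rw [e1, ← ZMod.intCast_zmod_eq_zero_iff_dvd]
    constructor
    · intro h
      have := congrFun (congrFun h 0) (Fin.last _)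
      simp only [r, RingHom.toMonoidHom_eq_coe, MonoidHom.coe_coe, RingHom.mapMatrix_apply,
        Matrix.map_apply, Matrix.add_apply, Matrix.smul_apply, Units.val_one,
        Matrix.one_apply_ne h0l] at this
      simpa [hE] using this
    · intro h
      ext i j
      simp only [r, RingHom.toMonoidHom_eq_coe, MonoidHom.coe_coe, RingHom.mapMatrix_apply,
        Matrix.map_apply, Matrix.add_apply, Matrix.smul_apply, Units.val_one, smul_eq_mul,
        map_add, map_mul _ (_ * _) _]
      have : (Int.castRingHom (ZMod M)) (m * ε) = 0 := h
      rw [this, zero_mul, add_zero]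
      simp [Matrix.one_apply]
  apply Nat.dvd_antisymm
  · rw [orderOf_dvd_iff_pow_eq_one, hone]
  · rw [← hone, pow_orderOf_eq_one]


theorem fg_center_trivial {X : Type} {x y : X} (hxy : x ≠ y) (z : FreeGroup X)
    (hz : ∀ w, Commute w z) : z = 1 := by
  classical
  by_contra hne
  have hw : z.toWord ≠ [] := fun h => hne (FreeGroup.toWord_eq_nil_iff.1 h)
  obtain ⟨a, L, hL⟩ := List.exists_cons_of_ne_nil hw
  obtain ⟨y', hy'⟩ : ∃ y', y' ≠ a.1 := by
    by_cases h : x = a.1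
    · exact ⟨y, fun h' => hxy (h.trans h'.symm)⟩
    · exact ⟨x, h⟩
  set b := z.toWord.getLast hw with hb
  obtain ⟨ε, hε⟩ : ∃ ε : Bool, b.1 = y' → b.2 = ε := ⟨b.2, fun _ => rfl⟩
  have hred : FreeGroup.IsReduced z.toWord := FreeGroup.isReduced_toWord
  have r1 : FreeGroup.IsReduced ((y', ε) :: z.toWord) := by
    rw [FreeGroup.IsReduced, hL, List.isChain_cons_cons]
    rw [hL] at hred
    exact ⟨fun h => absurd h hy', hred⟩
  have r2 : FreeGroup.IsReduced (z.toWord ++ [(y', ε)]) := by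
    rw [FreeGroup.IsReduced, List.isChain_append]
    refine ⟨hred, by simp, ?_⟩
    intro p hp q hq
    rw [List.getLast?_eq_some_getLast hw] at hp
    simp only [Option.mem_def, Option.some.injEq, List.head?_cons] at hp hq
    subst hp hq
    exact hε
  have heq : FreeGroup.mk ((y', ε) :: z.toWord) = FreeGroup.mk (z.toWord ++ [(y', ε)]) := by
    have := (hz (FreeGroup.mk [(y', ε)])).eq
    rw [← FreeGroup.mul_mk, FreeGroup.mk_toWord, ← this, ← List.singleton_append,
      ← FreeGroup.mul_mk, FreeGroup.mk_toWord]
  have h2 := FreeGroup.reduce.sound heq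
  rw [r1.reduce_eq, r2.reduce_eq, hL] at h2
  have h3 := (List.cons.inj h2).1
  exact hy' (congrArg Prod.fst h3)

theorem fg_centralizer {α : Type} (z : FreeGroup α) (hz : z ≠ 1) :
    ∃ w : FreeGroup α, ∀ x, Commute x z → x ∈ zpowers w := by
  classical
  let H := Subgroup.centralizer ({z} : Set (FreeGroup α))
  have hfree : IsFreeGroup H := subgroupIsFreeOfIsFree H
  let e := IsFreeGroup.mulEquiv H
  have hzH : z ∈ H := by
    rw [Subgroup.mem_centralizer_singleton_iff]
  have hsub : Subsingleton (IsFreeGroup.Generators H) := by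
    constructor
    intro x y
    by_contra hxy
    have := fg_center_trivial hxy (e.symm ⟨z, hzH⟩) (by
      intro w
      apply e.injective
      rw [map_mul, map_mul, MulEquiv.apply_symm_apply]
      apply Subtype.ext
      exact (Subgroup.mem_centralizer_singleton_iff.1 (e w).2))
    apply hz
    have h2 := congrArg e this
    rw [MulEquiv.apply_symm_apply, map_one] at h2
    exact congrArg Subtype.val h2
  have hcyc : IsCyclic (FreeGroup (IsFreeGroup.Generators H)) := by
    rcases isEmpty_or_nonempty (IsFreeGroup.Generators H) with h | ⟨⟨x⟩⟩
    · infer_instance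
    · have : Unique (IsFreeGroup.Generators H) := ⟨⟨x⟩, fun y => Subsingleton.elim _ _⟩
      infer_instance
  obtain ⟨w, hw⟩ := hcyc.exists_generator
  refine ⟨(e w : FreeGroup α), fun x hx => ?_⟩
  have hxH : x ∈ H := Subgroup.mem_centralizer_singleton_iff.2 hx
  obtain ⟨k, hk⟩ := hw (e.symm ⟨x, hxH⟩)
  refine ⟨k, ?_⟩
  have h2 := congrArg e hk
  simp only [map_zpow, MulEquiv.apply_symm_apply] at h2
  have := congrArg Subtype.val h2
  simpa using this

theorem fg_root {α : Type} (u : FreeGroup α) (hu : u ≠ 1) :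
    ∃ (L : List (α × Bool)) (g : FreeGroup α) (k : ℤ), k ≠ 0 ∧ L ≠ [] ∧
      FreeGroup.IsCyclicallyReduced L ∧ u = g * (FreeGroup.mk L) ^ k * g⁻¹ ∧
      ∀ x, Commute x (FreeGroup.mk L) → x ∈ zpowers (FreeGroup.mk L) := by
  classical
  obtain ⟨w, hw⟩ := fg_centralizer u hu
  obtain ⟨k, hk⟩ := hw u (Commute.refl u)
  simp only at hk
  have hroot : ∀ x, Commute x w → x ∈ zpowers w := fun x hx => hw x (hk ▸ hx.zpow_right k)
  set L := FreeGroup.reduceCyclically w.toWord with hL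
  set g := FreeGroup.mk (FreeGroup.reduceCyclically.conjugator w.toWord) with hg
  have hwL : w = g * FreeGroup.mk L * g⁻¹ := by
    rw [hg, FreeGroup.inv_mk, FreeGroup.mul_mk, FreeGroup.mul_mk,
      FreeGroup.reduceCyclically.conj_conjugator_reduceCyclically, FreeGroup.mk_toWord]
  have hk0 : k ≠ 0 := by rintro rfl; exact hu (by rw [← hk, zpow_zero])
  refine ⟨L, g, k, hk0, ?_, FreeGroup.reduceCyclically.isCyclicallyReduced
    FreeGroup.isReduced_toWord, ?_, ?_⟩
  · intro h
    apply hu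
    rw [← hk, hwL, h, ← FreeGroup.one_eq_mk]; simp
  · rw [← hk, hwL, conj_zpow]
  · intro x hx
    obtain ⟨m, hm⟩ := hroot (g * x * g⁻¹) (by
      rw [hwL]
      exact (commute_iff_eq _ _).2 (by
        have := hx.eq
        calc g * x * g⁻¹ * (g * FreeGroup.mk L * g⁻¹) = g * (x * FreeGroup.mk L) * g⁻¹ := by group
          _ = _ := by rw [this]; group))
    refine ⟨m, ?_⟩
    simp only [hwL, conj_zpow] at hm ⊢
    exact mul_left_cancel (mul_right_cancel hm)

theorem fg_prefix_not_commute {α : Type} (L L1 L2 : List (α × Bool))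
    (hL : FreeGroup.IsCyclicallyReduced L) (h12 : L = L1 ++ L2) (h1 : L1 ≠ []) (h2 : L2 ≠ [])
    (hroot : ∀ x, Commute x (FreeGroup.mk L) → x ∈ zpowers (FreeGroup.mk L)) :
    ¬ Commute (FreeGroup.mk L1) (FreeGroup.mk L) := by
  classical
  intro hc
  obtain ⟨m, hm⟩ := hroot _ hc
  simp only at hm
  have hnorm : ∀ n : ℕ, FreeGroup.norm (FreeGroup.mk L ^ n) = n * L.length := by
    intro n
    rw [FreeGroup.norm, FreeGroup.toWord_pow, FreeGroup.toWord_mk, hL.isReduced.reduce_eq,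
      (hL.flatten_replicate n).isReduced.reduce_eq]
    simp
  have hnormz : FreeGroup.norm (FreeGroup.mk L ^ m) = m.natAbs * L.length := by
    clear hm
    obtain ⟨n, rfl | rfl⟩ := Int.eq_nat_or_neg m
    · rw [zpow_natCast, hnorm]; simp
    · rw [zpow_neg, FreeGroup.norm_inv_eq, zpow_natCast, hnorm]; simp
  have hr1 : FreeGroup.IsReduced L1 := by
    have := hL.isReduced
    rw [h12, FreeGroup.IsReduced, List.isChain_append] at this
    exact this.1
  have hn1 : FreeGroup.norm (FreeGroup.mk L1) = L1.length := by
    rw [FreeGroup.norm, FreeGroup.toWord_mk, hr1.reduce_eq]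
  rw [hm, hn1] at hnormz
  have l1 := List.length_pos_of_ne_nil h1
  have l2 := List.length_pos_of_ne_nil h2
  rw [h12, List.length_append] at hnormz
  rcases Nat.eq_zero_or_pos m.natAbs with h | h
  · rw [h] at hnormz; omega
  · nlinarith

section Cocycle

variable {α : Type} {Q A : Type} [Group Q] [Group A]

/-- The homomorphism to the wreath product determined by edge labels `f`. -/
def cocHom (φ : FreeGroup α →* Q) (f : α → Q → A) : FreeGroup α →* RegularWreathProduct A Q :=
  FreeGroup.lift fun s => ⟨fun x => f s x⁻¹, φ (FreeGroup.of s)⟩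

/-- The product of the edge labels along the path reading `w` from `y`. -/
def cv (φ : FreeGroup α →* Q) (f : α → Q → A) (w : FreeGroup α) (y : Q) : A :=
  (cocHom φ f w).left y⁻¹

theorem cocHom_right (φ : FreeGroup α →* Q) (f : α → Q → A) (w : FreeGroup α) :
    (cocHom φ f w).right = φ w := by
  have : (RegularWreathProduct.rightHom).comp (cocHom φ f) = φ := by
    ext s; simp [cocHom]
  exact DFunLike.congr_fun this w

theorem cv_one (φ : FreeGroup α →* Q) (f : α → Q → A) (y : Q) : cv φ f 1 y = 1 := by
  simp [cv]

theorem cv_mul (φ : FreeGroup α →* Q) (f : α → Q → A) (g h : FreeGroup α) (y : Q) :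
    cv φ f (g * h) y = cv φ f g y * cv φ f h (y * φ g) := by
  simp [cv, cocHom_right]

theorem cv_of (φ : FreeGroup α →* Q) (f : α → Q → A) (s : α) (y : Q) :
    cv φ f (FreeGroup.of s) y = f s y := by
  simp [cv, cocHom]

theorem cv_inv (φ : FreeGroup α →* Q) (f : α → Q → A) (w : FreeGroup α) (y : Q) :
    cv φ f w⁻¹ y = (cv φ f w (y * (φ w)⁻¹))⁻¹ := by
  have h := cv_mul φ f w⁻¹ w y
  rw [inv_mul_cancel, cv_one, map_inv] at h
  exact eq_inv_of_mul_eq_one_left h.symm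

theorem cv_map {B : Type} [Group B] (ψ : A →* B) (φ : FreeGroup α →* Q) (f : α → Q → A)
    (w : FreeGroup α) (y : Q) : ψ (cv φ f w y) = cv φ (fun s x => ψ (f s x)) w y := by
  induction w using FreeGroup.induction_on generalizing y with
  | C1 => simp [cv_one]
  | of s => simp only [cv_of]
  | inv_of s _ => simp only [cv_inv, cv_of, map_inv]
  | mul g h hg hh => rw [cv_mul, map_mul, hg, hh, cv_mul]

theorem cv_mul_fun {B : Type} [CommGroup B] (φ : FreeGroup α →* Q) (f f' : α → Q → B)
    (w : FreeGroup α) (y : Q) :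
    cv φ (fun s x => f s x * f' s x) w y = cv φ f w y * cv φ f' w y := by
  induction w using FreeGroup.induction_on generalizing y with
  | C1 => simp [cv_one]
  | of s => simp only [cv_of]
  | inv_of s _ => simp only [cv_inv, cv_of, mul_inv]
  | mul g h hg hh => rw [cv_mul, hg, hh, cv_mul, cv_mul]; exact mul_mul_mul_comm _ _ _ _

/-- Base point of the edge traversed by the letter `l` starting at `x`. -/
def estart (φ : FreeGroup α →* Q) (l : α × Bool) (x : Q) : Q :=
  if l.2 = true then x else x * (φ (FreeGroup.of l.1))⁻¹

theorem mk_letter (s : α) : FreeGroup.mk [(s, false)] = (FreeGroup.of s)⁻¹ := rfl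

theorem cv_letter (φ : FreeGroup α →* Q) (f : α → Q → A) (l : α × Bool) (x : Q) :
    cv φ f (FreeGroup.mk [l]) x =
      if l.2 = true then f l.1 (estart φ l x) else (f l.1 (estart φ l x))⁻¹ := by
  obtain ⟨s, _ | _⟩ := l
  · simp [mk_letter, cv_inv, cv_of, estart]
  · exact cv_of φ f s x

theorem cv_list_one (φ : FreeGroup α →* Q) (f : α → Q → A) (L : List (α × Bool)) (y : Q)
    (h : ∀ L1 l L2, L = L1 ++ l :: L2 → cv φ f (FreeGroup.mk [l]) (y * φ (FreeGroup.mk L1)) = 1) :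
    cv φ f (FreeGroup.mk L) y = 1 := by
  induction L generalizing y with
  | nil => rw [← FreeGroup.one_eq_mk, cv_one]
  | cons a T ih =>
    have e : FreeGroup.mk (a :: T) = FreeGroup.mk [a] * FreeGroup.mk T := by
      rw [FreeGroup.mul_mk]; rfl
    rw [e, cv_mul, ih]
    · have := h [] a T rfl
      rw [← FreeGroup.one_eq_mk, map_one, mul_one] at this
      rw [this, one_mul]
    · intro L1 l L2 hT
      have := h (a :: L1) l L2 (by rw [hT]; rfl)
      rw [mul_assoc, ← map_mul, FreeGroup.mul_mk]
      exact this

theorem cv_pow_one (φ : FreeGroup α →* Q) (f : α → Q → A) (w : FreeGroup α) (n : ℕ) (y : Q)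
    (h : ∀ i < n, cv φ f w (y * φ w ^ i) = 1) : cv φ f (w ^ n) y = 1 := by
  induction n with
  | zero => rw [pow_zero, cv_one]
  | succ n ih =>
    rw [pow_succ, cv_mul, ih (fun i hi => h i (by omega)), map_pow, h n (by omega), one_mul]

theorem cv_simple [Finite Q] (φ : FreeGroup α →* Q) (f : α → Q → A) (L T : List (α × Bool))
    (l0 : α × Bool) (hLT : L = l0 :: T) (hL : FreeGroup.IsCyclicallyReduced L)
    (hpre : ∀ L1 L2, L = L1 ++ L2 → L1 ≠ [] → L2 ≠ [] →
      φ (FreeGroup.mk L1) ∉ zpowers (φ (FreeGroup.mk L))) (y : Q)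
    (hf : ∀ (j : ℕ) L1 l L2, L = L1 ++ l :: L2 →
      ¬ (l.1 = l0.1 ∧ estart φ l (y * φ (FreeGroup.mk L) ^ j * φ (FreeGroup.mk L1))
        = estart φ l0 y) →
      f l.1 (estart φ l (y * φ (FreeGroup.mk L) ^ j * φ (FreeGroup.mk L1))) = 1) :
    cv φ f (FreeGroup.mk L ^ orderOf (φ (FreeGroup.mk L))) y = cv φ f (FreeGroup.mk [l0]) y := by
  set w := FreeGroup.mk L with hw
  set k := orderOf (φ w) with hk
  have hk0 : 0 < k := orderOf_pos _
  have claim : ∀ (j : ℕ) L1 l L2, L = L1 ++ l :: L2 → j < k → (j ≠ 0 ∨ L1 ≠ []) →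
      cv φ f (FreeGroup.mk [l]) (y * φ w ^ j * φ (FreeGroup.mk L1)) = 1 := by
    intro j L1 l L2 hdec hj hne
    have hone : f l.1 (estart φ l (y * φ w ^ j * φ (FreeGroup.mk L1))) = 1 := by
      apply hf j L1 l L2 hdec
      rintro ⟨hs, he⟩
      by_cases hb : l.2 = l0.2
      · have hll : l = l0 := Prod.ext hs hb
        subst hll
        have h1 : φ w ^ j * φ (FreeGroup.mk L1) = 1 := by
          simp only [estart] at he
          split_ifs at he
          · rwa [mul_assoc, mul_eq_left] at he
          · have := mul_right_cancel he
            rwa [mul_assoc, mul_eq_left] at this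
        by_cases hL1 : L1 = []
        · subst hL1
          rw [← FreeGroup.one_eq_mk, map_one, mul_one] at h1
          have hj0 : j ≠ 0 := by simpa using hne
          exact absurd (Nat.le_of_dvd (Nat.pos_of_ne_zero hj0) (orderOf_dvd_of_pow_eq_one h1))
            (by omega)
        · apply hpre L1 (l :: L2) hdec hL1 (by simp)
          rw [eq_inv_of_mul_eq_one_right h1]
          exact inv_mem (pow_mem (mem_zpowers _) j)
      · have h1 : φ w ^ j * φ (FreeGroup.mk (L1 ++ [l])) = 1 := by
          rw [← FreeGroup.mul_mk, map_mul]
          obtain ⟨s, b⟩ := l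
          obtain ⟨s0, b0⟩ := l0
          simp only at hs hb
          subst hs
          cases b <;> cases b0 <;> simp [estart, mk_letter, mul_assoc] at he hb ⊢
          · exact he
          · have he' : φ w ^ j * φ (FreeGroup.mk L1) = (φ (FreeGroup.of s))⁻¹ := he
            rw [← mul_assoc, he']
            exact inv_mul_cancel _
        by_cases hL2 : L2 = []
        · subst hL2
          apply hb
          apply hL.2 l (by rw [hdec]; simp) l0 (by rw [hLT]; simp) hs
        · apply hpre (L1 ++ [l]) L2 (by rw [hdec]; simp) (by simp) hL2
          rw [eq_inv_of_mul_eq_one_right h1]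
          exact inv_mem (pow_mem (mem_zpowers _) j)
    rw [cv_letter, hone]; simp
  obtain ⟨k', hk'⟩ : ∃ k', k = k' + 1 := ⟨k - 1, by omega⟩
  rw [hk', pow_succ', cv_mul, cv_pow_one, mul_one]
  · have e : w = FreeGroup.mk [l0] * FreeGroup.mk T := by
      rw [FreeGroup.mul_mk, hw, hLT]; rfl
    rw [e, cv_mul, cv_list_one φ f T, mul_one]
    intro L1 l L2 hT
    have := claim 0 (l0 :: L1) l L2 (by rw [hLT, hT]; rfl) hk0 (Or.inr (by simp))
    rw [mul_assoc, ← map_mul, FreeGroup.mul_mk]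
    simpa using this
  · intro i hi
    rw [mul_assoc, ← pow_succ']
    apply cv_list_one
    intro L1 l L2 hdec
    exact claim (i + 1) L1 l L2 hdec (by omega) (Or.inl (by simp))

end Cocycle

theorem generic_int {ι M : Type} [Finite ι] [AddCommGroup M] (ℓ : ι → M →+ ℤ)
    (h : ∀ i, ∃ c, ℓ i c ≠ 0) : ∃ c, ∀ i, ℓ i c ≠ 0 := by
  classical
  have := Fintype.ofFinite ι
  suffices H : ∀ S : Finset ι, ∃ c, ∀ i ∈ S, ℓ i c ≠ 0 by
    obtain ⟨c, hc⟩ := H Finset.univ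
    exact ⟨c, fun i => hc i (Finset.mem_univ i)⟩
  intro S
  induction S using Finset.induction_on with
  | empty => exact ⟨0, by simp⟩
  | insert a S ha ih =>
    obtain ⟨c, hc⟩ := ih
    obtain ⟨d, hd⟩ := h a
    by_cases h0 : ℓ a c = 0
    · obtain ⟨N, hN⟩ : ∃ N : ℤ, ∀ i ∈ S, |ℓ i d| < N := by
        refine ⟨∑ i ∈ S, |ℓ i d| + 1, fun i hi => ?_⟩
        have := Finset.single_le_sum (f := fun i => |ℓ i d|) (fun i _ => abs_nonneg _) hi
        omega
      refine ⟨N • c + d, fun i hi => ?_⟩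
      rw [map_add, map_zsmul, smul_eq_mul]
      rcases Finset.mem_insert.1 hi with rfl | hi
      · rw [h0, mul_zero, zero_add]; exact hd
      · intro he
        have h1 := hN i hi
        have h2 : ℓ i d = - (N * ℓ i c) := by linarith
        rw [h2, abs_neg, abs_mul] at h1
        have h3 := Int.one_le_abs (hc i hi)
        have h4 := le_abs_self N
        have h5 := abs_nonneg N
        nlinarith
    · refine ⟨c, fun i hi => ?_⟩
      rcases Finset.mem_insert.1 hi with rfl | hi
      · exact h0
      · exact hc i hi

theorem affine_group (p : ℕ) [Fact p.Prime] : ∃ (A : Type) (_ : Group A) (_ : Finite A)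
    (π : A →* (ZMod p)ˣ) (σ : (ZMod p)ˣ →* A) (t : A), (∀ r, π (σ r) = r) ∧ π t = 1 ∧
      orderOf t = p ∧ ∀ a, π a ≠ 1 → a ^ (p - 1) = 1 := by
  let θ : (ZMod p)ˣ →* MulAut (Multiplicative (ZMod p)) :=
    { toFun := fun r =>
        { toFun := fun n => Multiplicative.ofAdd ((r : ZMod p) * n.toAdd)
          invFun := fun n => Multiplicative.ofAdd (((r⁻¹ : (ZMod p)ˣ) : ZMod p) * n.toAdd)
          left_inv := fun n => Multiplicative.toAdd.injective (Units.inv_mul_cancel_left r n.toAdd)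
          right_inv := fun n => Multiplicative.toAdd.injective (Units.mul_inv_cancel_left r n.toAdd)
          map_mul' := fun n m => by
            apply Multiplicative.toAdd.injective; simp [mul_add] }
      map_one' := by
        ext n; apply Multiplicative.toAdd.injective; simp
      map_mul' := fun r s => by
        ext n; exact Multiplicative.toAdd.injective (mul_assoc (r : ZMod p) s n.toAdd) }
  have hθ : ∀ (r : (ZMod p)ˣ) (n : ZMod p),
    θ r (Multiplicative.ofAdd n) = Multiplicative.ofAdd ((r : ZMod p) * n) := fun r n => rfl
  refine ⟨Multiplicative (ZMod p) ⋊[θ] (ZMod p)ˣ, inferInstance,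
    Finite.of_equiv _ SemidirectProduct.equivProd.symm, SemidirectProduct.rightHom,
    SemidirectProduct.inr, SemidirectProduct.inl (Multiplicative.ofAdd 1), ?_, ?_, ?_, ?_⟩
  · intro r; simp
  · simp
  · rw [orderOf_injective _ SemidirectProduct.inl_injective, orderOf_ofAdd_eq_addOrderOf,
      ZMod.addOrderOf_one]
  · intro a ha
    have h1 : (a ^ (p - 1)).right = 1 := by
      have : SemidirectProduct.rightHom (a ^ (p - 1)) = 1 := by
        rw [map_pow]; exact ZMod.units_pow_card_sub_one_eq_one p _
      simpa using this
    have hc : a * a ^ (p - 1) = a ^ (p - 1) * a := by rw [← pow_succ, ← pow_succ']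
    have h2 := congrArg SemidirectProduct.left hc
    rw [SemidirectProduct.mul_left, SemidirectProduct.mul_left, h1, map_one, MulAut.one_apply,
      mul_comm] at h2
    have h3 := mul_right_cancel h2
    set n := (a ^ (p - 1)).left with hn
    have h4 : ((a.right : ZMod p)) * Multiplicative.toAdd n = Multiplicative.toAdd n := by
      have := hθ a.right (Multiplicative.toAdd n)
      rw [ofAdd_toAdd, h3] at this
      exact congrArg Multiplicative.toAdd this.symm
    have h5 : Multiplicative.toAdd n = 0 := by
      by_contra hne
      apply ha
      have := mul_right_cancel₀ hne (h4.trans (one_mul _).symm)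
      exact Units.ext this
    apply SemidirectProduct.ext
    · rw [← hn]; exact Multiplicative.toAdd.injective h5
    · exact h1

theorem fg_rf {α : Type} (S : List (FreeGroup α)) :
    ∃ (Q : Type) (_ : Group Q) (_ : Finite Q) (φ : FreeGroup α →* Q),
      ∀ s ∈ S, s ≠ 1 → φ s ≠ 1 := by
  induction S with
  | nil => exact ⟨Unit, inferInstance, inferInstance, 1, by simp⟩
  | cons a S ih =>
    obtain ⟨Q, _, _, φ, h⟩ := ih
    by_cases ha : a = 1
    · refine ⟨Q, inferInstance, inferInstance, φ, fun s hs hs1 => ?_⟩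
      rcases List.mem_cons.1 hs with rfl | hs
      · exact absurd ha hs1
      · exact h s hs hs1
    · obtain ⟨R, _, _, ψ, hψ⟩ := fg_potent a ha 2 (by norm_num)
      refine ⟨Q × R, inferInstance, inferInstance, φ.prod ψ, fun s hs hs1 he => ?_⟩
      have he1 : φ s = 1 := congrArg Prod.fst he
      have he2 : ψ s = 1 := congrArg Prod.snd he
      rcases List.mem_cons.1 hs with rfl | hs
      · rw [he2, orderOf_one] at hψ
        omega
      · exact h s hs hs1 he1

theorem commutator_map_ne {G Q : Type} [Group G] [Group Q] (φ : G →* Q) (x w : G)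
    (h : φ (x * w * x⁻¹ * w⁻¹) ≠ 1) : ¬ Commute (φ x) (φ w) := by
  intro hc
  apply h
  rw [map_mul, map_mul, map_mul, map_inv, map_inv, hc.eq]
  group

theorem sep_setup {α : Type} (Lu Lv : List (α × Bool))
    (hLu : FreeGroup.IsCyclicallyReduced Lu) (hLv : FreeGroup.IsCyclicallyReduced Lv)
    (hru : ∀ x, Commute x (FreeGroup.mk Lu) → x ∈ zpowers (FreeGroup.mk Lu))
    (hrv : ∀ x, Commute x (FreeGroup.mk Lv) → x ∈ zpowers (FreeGroup.mk Lv))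
    (hind : ∀ (g : FreeGroup α) (n : ℕ), 0 < n →
      ¬ Commute (g * FreeGroup.mk Lu ^ n * g⁻¹) (FreeGroup.mk Lv)) :
    ∃ (Q : Type) (_ : Group Q) (_ : Finite Q) (φ : FreeGroup α →* Q),
      (∀ L1 L2, Lu = L1 ++ L2 → L1 ≠ [] → L2 ≠ [] →
        φ (FreeGroup.mk L1) ∉ zpowers (φ (FreeGroup.mk Lu))) ∧
      (∀ L1 L2, Lv = L1 ++ L2 → L1 ≠ [] → L2 ≠ [] →
        φ (FreeGroup.mk L1) ∉ zpowers (φ (FreeGroup.mk Lv))) ∧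
      (∀ j n, j < Lv.length + 1 → 0 < n → n < Lv.length + 2 →
        ¬ Commute (φ (FreeGroup.mk (Lv.take j) * FreeGroup.mk Lu ^ n *
          (FreeGroup.mk (Lv.take j))⁻¹)) (φ (FreeGroup.mk Lv))) := by
  let com : FreeGroup α → FreeGroup α → FreeGroup α := fun x w => x * w * x⁻¹ * w⁻¹
  have hcom : ∀ x w, ¬ Commute x w → com x w ≠ 1 := by
    intro x w h he
    apply h
    have : x * w * x⁻¹ * w⁻¹ = 1 := he
    rw [mul_inv_eq_one, mul_inv_eq_iff_eq_mul] at this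
    exact this
  obtain ⟨Q, iQ, fQ, φ, h⟩ := fg_rf
    (Lu.inits.map (fun L1 => com (FreeGroup.mk L1) (FreeGroup.mk Lu)) ++
     (Lv.inits.map (fun L1 => com (FreeGroup.mk L1) (FreeGroup.mk Lv)) ++
      (List.range (Lv.length + 1)).flatMap (fun j => (List.range (Lv.length + 2)).map
        (fun n => com (FreeGroup.mk (Lv.take j) * FreeGroup.mk Lu ^ n *
          (FreeGroup.mk (Lv.take j))⁻¹) (FreeGroup.mk Lv)))))
  have hz : ∀ {x y : Q}, x ∈ zpowers y → Commute x y := by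
    rintro x y ⟨i, rfl⟩
    exact (Commute.refl y).zpow_left i
  refine ⟨Q, iQ, fQ, φ, ?_, ?_, ?_⟩
  · intro L1 L2 h12 h1 h2 hm
    refine commutator_map_ne φ _ _ (h (com (FreeGroup.mk L1) (FreeGroup.mk Lu)) ?_
      (hcom _ _ (fg_prefix_not_commute Lu L1 L2 hLu h12 h1 h2 hru))) (hz hm)
    refine List.mem_append_left _ (List.mem_map.2 ⟨L1, ?_, rfl⟩)
    rw [List.mem_inits]; exact ⟨L2, h12.symm⟩
  · intro L1 L2 h12 h1 h2 hm
    refine commutator_map_ne φ _ _ (h (com (FreeGroup.mk L1) (FreeGroup.mk Lv)) ?_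
      (hcom _ _ (fg_prefix_not_commute Lv L1 L2 hLv h12 h1 h2 hrv))) (hz hm)
    refine List.mem_append_right _ (List.mem_append_left _ (List.mem_map.2 ⟨L1, ?_, rfl⟩))
    rw [List.mem_inits]; exact ⟨L2, h12.symm⟩
  · intro j n hj hn hn2
    refine commutator_map_ne φ _ _ (h (com _ (FreeGroup.mk Lv)) ?_ (hcom _ _ (hind _ n hn)))
    refine List.mem_append_right _ (List.mem_append_right _ (List.mem_flatMap.2
      ⟨j, List.mem_range.2 hj, List.mem_map.2 ⟨n, List.mem_range.2 hn2, rfl⟩⟩))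

theorem pigeon {Q : Type} [Group Q] (U V : Q) (P : ℕ → Q) (m : ℕ)
    (h : ∀ j n, j < m + 1 → 0 < n → n < m + 2 → ¬ Commute (P j * U ^ n * (P j)⁻¹) V) (g : Q) :
    ∃ N : ℕ, ¬ ∃ i : ℤ, ∃ j < m + 1, g * U ^ N = V ^ i * P j := by
  by_contra hcon
  push Not at hcon
  choose i j hj he using hcon
  obtain ⟨x, hx, y, hy, hxy, hjj⟩ := Finset.exists_ne_map_eq_of_card_lt_of_maps_to
    (s := Finset.range (m + 2)) (t := Finset.range (m + 1)) (f := j) (by simp)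
    (fun a _ => by simpa using hj a)
  wlog hlt : x < y generalizing x y
  · exact this y hy x hx hxy.symm hjj.symm (by omega)
  obtain ⟨n, rfl⟩ : ∃ n, y = x + n := ⟨y - x, by omega⟩
  simp only [Finset.mem_range] at hx hy
  apply h (j x) n (hj x) (by omega) (by omega)
  have e1 := he x
  have e2 := he (x + n)
  rw [pow_add, ← mul_assoc, e1, ← hjj] at e2
  have e3 : P (j x) * U ^ n * (P (j x))⁻¹ = V ^ (i (x + n) - i x) := by
    rw [mul_inv_eq_iff_eq_mul, sub_eq_neg_add, zpow_add, zpow_neg, mul_assoc, ← e2]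
    group
  rw [e3]
  exact (Commute.refl V).zpow_left _

section CaseA

variable {α : Type} {Q : Type} [Group Q]

theorem estart_endpoints (φ : FreeGroup α →* Q) (l : α × Bool) (x : Q) (C : Set Q) :
    (estart φ l x ∈ C ∧ estart φ l x * φ (FreeGroup.of l.1) ∈ C) ↔
      (x ∈ C ∧ x * φ (FreeGroup.mk [l]) ∈ C) := by
  obtain ⟨s, _ | _⟩ := l
  · simp [estart, mk_letter, and_comm]
  · have : FreeGroup.mk [(s, true)] = FreeGroup.of s := rfl
    simp [estart, this]

theorem phase_two [Finite Q] (φ : FreeGroup α →* Q) (C : Set Q) (Lu T : List (α × Bool))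
    (l0 : α × Bool) (hLT : Lu = l0 :: T) (hLu : FreeGroup.IsCyclicallyReduced Lu)
    (hpre : ∀ L1 L2, Lu = L1 ++ L2 → L1 ≠ [] → L2 ≠ [] →
        φ (FreeGroup.mk L1) ∉ zpowers (φ (FreeGroup.mk Lu)))
    (hC : ∀ g, ∃ N : ℕ, g * φ (FreeGroup.mk Lu) ^ N ∉ C) :
    ∃ c : α → Q → ℤ, (∀ s y, y ∈ C → y * φ (FreeGroup.of s) ∈ C → c s y = 0) ∧
      ∀ g, cv φ (fun s y => Multiplicative.ofAdd (c s y))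
        (FreeGroup.mk Lu ^ orderOf (φ (FreeGroup.mk Lu))) g ≠ 1 := by
  classical
  set u := FreeGroup.mk Lu with hu
  set k := orderOf (φ u) with hk
  let tl : (α → Q → ℤ) → α → Q → ℤ := fun c s y =>
    if y ∈ C ∧ y * φ (FreeGroup.of s) ∈ C then 0 else c s y
  let ℓ : {g : Q // g ∉ C} → (α → Q → ℤ) →+ ℤ := fun g =>
    AddMonoidHom.mk' (fun c => Multiplicative.toAdd
      (cv φ (fun s y => Multiplicative.ofAdd (tl c s y)) (u ^ k) g.1)) (by
      intro c d
      rw [← toAdd_mul, ← cv_mul_fun]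
      congr 2
      funext s y
      simp only [tl, Pi.add_apply, ← ofAdd_add]
      split_ifs <;> simp)
  obtain ⟨c, hc⟩ := generic_int ℓ (by
    rintro ⟨g, hg⟩
    let d : α → Q → ℤ := fun s y => if s = l0.1 ∧ y = estart φ l0 g then 1 else 0
    refine ⟨d, ?_⟩
    change Multiplicative.toAdd (cv φ (fun s y => Multiplicative.ofAdd (tl d s y)) (u ^ k) g) ≠ 0
    rw [cv_simple φ _ Lu T l0 hLT hLu hpre g, cv_letter]
    · have hn : ¬ (estart φ l0 g ∈ C ∧ estart φ l0 g * φ (FreeGroup.of l0.1) ∈ C) := by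
        rw [estart_endpoints]
        exact fun h => hg h.1
      simp only [tl, d, if_neg hn]
      split_ifs <;> simp_all
    · intro j L1 l L2 _ hne
      simp only [tl, d, if_neg hne]
      simp)
  refine ⟨tl c, fun s y h1 h2 => if_pos ⟨h1, h2⟩, fun g he => ?_⟩
  obtain ⟨N, hN⟩ := hC g
  apply hc ⟨_, hN⟩
  change Multiplicative.toAdd (cv φ (fun s y => Multiplicative.ofAdd (tl c s y)) (u ^ k) _) = 0
  set f : α → Q → Multiplicative ℤ := fun s y => Multiplicative.ofAdd (tl c s y)
  have e1 := cv_mul φ f (u ^ N) (u ^ k) g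
  have e2 := cv_mul φ f (u ^ k) (u ^ N) g
  have e3 : φ (u ^ k) = 1 := by rw [map_pow, hk, pow_orderOf_eq_one]
  rw [← pow_add, add_comm, pow_add, e2, he, e3, one_mul, mul_one, map_pow, left_eq_mul] at e1
  rw [e1]; rfl

theorem cv_pow_of (A : Type) [Group A] (φ : FreeGroup α →* Q) (f : α → Q → A) (w : FreeGroup α)
    (hw : φ w = 1) (y : Q) (n : ℕ) : cv φ f (w ^ n) y = cv φ f w y ^ n := by
  induction n with
  | zero => simp [cv_one]
  | succ n ih => rw [pow_succ, cv_mul, ih, map_pow, hw, one_pow, mul_one, pow_succ]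

theorem cocHom_eq_one (A : Type) [Group A] (φ : FreeGroup α →* Q) (f : α → Q → A)
    (w : FreeGroup α) (hw : φ w = 1) (h : ∀ y, cv φ f w y = 1) : cocHom φ f w = 1 := by
  apply RegularWreathProduct.ext
  · funext y
    have := h y⁻¹
    rw [cv, inv_inv] at this
    exact this
  · rw [cocHom_right, hw]; rfl

theorem case_a_aux [Finite Q] (φ : FreeGroup α →* Q) (Lu Lv Tu Tv : List (α × Bool))
    (lu lv : α × Bool) (hLTu : Lu = lu :: Tu) (hLTv : Lv = lv :: Tv)
    (hLu : FreeGroup.IsCyclicallyReduced Lu) (hLv : FreeGroup.IsCyclicallyReduced Lv)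
    (hpu : ∀ L1 L2, Lu = L1 ++ L2 → L1 ≠ [] → L2 ≠ [] →
        φ (FreeGroup.mk L1) ∉ zpowers (φ (FreeGroup.mk Lu)))
    (hpv : ∀ L1 L2, Lv = L1 ++ L2 → L1 ≠ [] → L2 ≠ [] →
        φ (FreeGroup.mk L1) ∉ zpowers (φ (FreeGroup.mk Lv)))
    (hcom : ∀ j n, j < Lv.length + 1 → 0 < n → n < Lv.length + 2 →
        ¬ Commute (φ (FreeGroup.mk (Lv.take j) * FreeGroup.mk Lu ^ n *
          (FreeGroup.mk (Lv.take j))⁻¹)) (φ (FreeGroup.mk Lv))) (B : ℕ) :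
    ∃ p : ℕ, p.Prime ∧ B < p ∧ ∃ (R : Type) (_ : Group R) (_ : Finite R)
      (ψ : FreeGroup α →* R), ¬ p ∣ orderOf (ψ (FreeGroup.mk Lu)) ∧
        p ∣ orderOf (ψ (FreeGroup.mk Lv)) := by
  classical
  have := Fintype.ofFinite Q
  let C : Set Q := {x | ∃ i : ℤ, ∃ j < Lv.length + 1,
    x = φ (FreeGroup.mk Lv) ^ i * φ (FreeGroup.mk (Lv.take j))}
  obtain ⟨c, hc0, hc⟩ := phase_two φ C Lu Tu lu hLTu hLu hpu (fun g => by
    apply pigeon (φ (FreeGroup.mk Lu)) (φ (FreeGroup.mk Lv))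
      (fun j => φ (FreeGroup.mk (Lv.take j))) Lv.length
    simpa only [map_mul, map_pow, map_inv] using hcom)
  set u := FreeGroup.mk Lu with hu
  set v := FreeGroup.mk Lv with hv
  set k := orderOf (φ u) with hk
  have hCv : ∀ (j : ℕ) L1 L2, Lv = L1 ++ L2 → φ v ^ j * φ (FreeGroup.mk L1) ∈ C := by
    intro j L1 L2 h
    refine ⟨j, L1.length, ?_, ?_⟩
    · rw [h]; simp
    · have : Lv.take L1.length = L1 := by rw [h]; simp
      rw [this, zpow_natCast]
  let ℓ : Q → ℤ := fun g => Multiplicative.toAdd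
    (cv φ (fun s y => Multiplicative.ofAdd (c s y)) (u ^ k) g)
  have hℓ : ∀ g, ℓ g ≠ 0 := fun g h => hc g (Multiplicative.toAdd.injective h)
  obtain ⟨p, hp1, hp⟩ := Nat.exists_infinite_primes
    (B + Nat.card Q + ∑ g : Q, (ℓ g).natAbs + 2)
  have hfp : Fact p.Prime := ⟨hp⟩
  have hℓp : ∀ g, (ℓ g).natAbs < p - 1 := by
    intro g
    have := Finset.single_le_sum (f := fun g => (ℓ g).natAbs) (fun i _ => Nat.zero_le _)
      (Finset.mem_univ g)
    omega
  obtain ⟨ζ, hζ⟩ := IsCyclic.exists_generator (α := (ZMod p)ˣ)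
  have hζo : orderOf ζ = p - 1 := by
    rw [orderOf_eq_card_of_forall_mem_zpowers hζ, Nat.card_eq_fintype_card, ZMod.card_units]
  obtain ⟨A, iA, fA, π, σ, t, hπσ, hπt, hot, hA⟩ := affine_group p
  let f : α → Q → A := fun s y =>
    if s = lv.1 ∧ y = estart φ lv 1 then t else σ (ζ ^ c s y)
  have he0 : estart φ lv 1 ∈ C ∧ estart φ lv 1 * φ (FreeGroup.of lv.1) ∈ C := by
    rw [estart_endpoints]
    constructor
    · have := hCv 0 [] Lv rfl
      rwa [pow_zero, one_mul, ← FreeGroup.one_eq_mk, map_one] at this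
    · have := hCv 0 [lv] Tv hLTv
      rwa [pow_zero] at this
  have hπf : (fun s y => π (f s y)) =
      fun s y => zpowersHom (ZMod p)ˣ ζ (Multiplicative.ofAdd (c s y)) := by
    funext s y
    simp only [f]
    split_ifs with h
    · obtain ⟨rfl, rfl⟩ := h
      rw [hπt, hc0 _ _ he0.1 he0.2]; simp
    · rw [hπσ]; simp
  have hku : φ (u ^ k) = 1 := by rw [map_pow, hk, pow_orderOf_eq_one]
  refine ⟨p, hp, by omega, RegularWreathProduct A Q, inferInstance, inferInstance,
    cocHom φ f, ?_, ?_⟩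
  · have h1 : cocHom φ f u ^ (k * (p - 1)) = 1 := by
      rw [← map_pow, pow_mul]
      apply cocHom_eq_one
      · rw [map_pow, hku, one_pow]
      · intro y
        rw [cv_pow_of _ _ _ _ hku]
        apply hA
        rw [cv_map, hπf, ← cv_map, zpowersHom_apply]
        change ζ ^ ℓ y ≠ 1
        intro h
        have h2 := orderOf_dvd_iff_zpow_eq_one.2 h
        rw [hζo] at h2
        have h3 := Int.natAbs_dvd_natAbs.2 h2
        rw [Int.natAbs_natCast] at h3
        have h4 := Nat.le_of_dvd (Int.natAbs_pos.2 (hℓ y)) h3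
        have := hℓp y
        omega
    intro hd
    have h2 := hd.trans (orderOf_dvd_of_pow_eq_one h1)
    rcases hp.dvd_mul.1 h2 with h3 | h3
    · have h4 := Nat.le_of_dvd (orderOf_pos _) h3
      have h5 : orderOf (φ u) ≤ Nat.card Q := orderOf_le_card
      omega
    · have := Nat.le_of_dvd (by have := hp.two_le; omega) h3
      have := hp.two_le
      omega
  · set m := orderOf (cocHom φ f v) with hm
    have hkv : φ (v ^ orderOf (φ v)) = 1 := by rw [map_pow, pow_orderOf_eq_one]
    have h1 : cv φ f (v ^ orderOf (φ v)) 1 = cv φ f (FreeGroup.mk [lv]) 1 := by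
      apply cv_simple φ f Lv Tv lv hLTv hLv hpv 1
      intro j L1 l L2 hdec hne
      simp only [f, if_neg hne]
      have hin := (estart_endpoints φ l (1 * φ (FreeGroup.mk Lv) ^ j * φ (FreeGroup.mk L1)) C).2 (by
        constructor
        · have := hCv j L1 _ hdec
          rwa [one_mul]
        · have := hCv j (L1 ++ [l]) L2 (by rw [hdec]; simp)
          rw [one_mul, mul_assoc, ← map_mul, FreeGroup.mul_mk]
          exact this)
      rw [hc0 _ _ hin.1 hin.2]; simp
    have h2 : cv φ f (FreeGroup.mk [lv]) 1 ^ m = 1 := by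
      rw [← h1, ← cv_pow_of _ _ _ _ hkv, ← pow_mul, mul_comm, pow_mul, cv, map_pow, map_pow, hm,
        pow_orderOf_eq_one, one_pow]
      rfl
    rw [cv_letter] at h2
    have hft : f lv.1 (estart φ lv 1) = t := if_pos ⟨rfl, rfl⟩
    rw [hft] at h2
    rw [← hot]
    apply orderOf_dvd_of_pow_eq_one
    split_ifs at h2
    · exact h2
    · rwa [inv_pow, inv_eq_one] at h2

theorem case_a (Lu Lv : List (α × Bool)) (hu0 : Lu ≠ []) (hv0 : Lv ≠ [])
    (hLu : FreeGroup.IsCyclicallyReduced Lu) (hLv : FreeGroup.IsCyclicallyReduced Lv)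
    (hru : ∀ x, Commute x (FreeGroup.mk Lu) → x ∈ zpowers (FreeGroup.mk Lu))
    (hrv : ∀ x, Commute x (FreeGroup.mk Lv) → x ∈ zpowers (FreeGroup.mk Lv))
    (hind : ∀ (g : FreeGroup α) (n : ℕ), 0 < n →
      ¬ Commute (g * FreeGroup.mk Lu ^ n * g⁻¹) (FreeGroup.mk Lv)) (B : ℕ) :
    ∃ p : ℕ, p.Prime ∧ B < p ∧ ∃ (R : Type) (_ : Group R) (_ : Finite R)
      (ψ : FreeGroup α →* R), ¬ p ∣ orderOf (ψ (FreeGroup.mk Lu)) ∧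
        p ∣ orderOf (ψ (FreeGroup.mk Lv)) := by
  obtain ⟨Q, _, _, φ, h1, h2, h3⟩ := sep_setup Lu Lv hLu hLv hru hrv hind
  obtain ⟨lu, Tu, hu⟩ := List.exists_cons_of_ne_nil hu0
  obtain ⟨lv, Tv, hv⟩ := List.exists_cons_of_ne_nil hv0
  exact case_a_aux φ Lu Lv Tu Tv lu lv hu hv hLu hLv h1 h2 h3 B

end CaseA

theorem order_zpow_natAbs {G : Type} [Group G] (x : G) (s : ℤ) :
    orderOf (x ^ s) = orderOf (x ^ s.natAbs) := by
  rcases Int.natAbs_eq s with h | h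
  · conv_lhs => rw [h, zpow_natCast]
  · conv_lhs => rw [h, zpow_neg, orderOf_inv, zpow_natCast]

theorem order_conj {G : Type} [Group G] (g x : G) : orderOf (g * x * g⁻¹) = orderOf x := by
  have := orderOf_injective (MulAut.conj g).toMonoidHom (MulAut.conj g).injective x
  simpa using this

theorem case_b {α : Type} (w : FreeGroup α) (hw : w ≠ 1) (s t : ℕ) (hst : s ≠ t) :
    ∃ (Q : Type) (_ : Group Q) (_ : Finite Q) (φ : FreeGroup α →* Q),
      orderOf (φ w ^ s) ≠ orderOf (φ w ^ t) := by
  by_cases hs : s = 0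
  · obtain ⟨Q, _, _, φ, h⟩ := fg_potent w hw (t + 1) (by omega)
    refine ⟨Q, inferInstance, inferInstance, φ, fun he => ?_⟩
    rw [hs, pow_zero, orderOf_one, eq_comm, orderOf_eq_one_iff] at he
    have := Nat.le_of_dvd (by omega) (orderOf_dvd_of_pow_eq_one he)
    omega
  by_cases ht : t = 0
  · obtain ⟨Q, _, _, φ, h⟩ := fg_potent w hw (s + 1) (by omega)
    refine ⟨Q, inferInstance, inferInstance, φ, fun he => ?_⟩
    rw [ht, pow_zero, orderOf_one, orderOf_eq_one_iff] at he
    have := Nat.le_of_dvd (by omega) (orderOf_dvd_of_pow_eq_one he)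
    omega
  · obtain ⟨Q, _, _, φ, h⟩ := fg_potent w hw (s * t) (by positivity)
    refine ⟨Q, inferInstance, inferInstance, φ, fun he => ?_⟩
    rw [orderOf_pow, orderOf_pow, h, Nat.gcd_mul_right_left, Nat.gcd_mul_left_left,
      Nat.mul_div_cancel_left _ (by omega), Nat.mul_div_cancel _ (by omega)] at he
    exact hst he.symm

theorem fg_two_order_sep {α : Type} (u v : FreeGroup α) (h1 : ¬ IsConj u v)
    (h2 : ¬ IsConj u v⁻¹) :
    ∃ (Q : Type) (_ : Group Q) (_ : Finite Q) (φ : FreeGroup α →* Q),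
      orderOf (φ u) ≠ orderOf (φ v) := by
  by_cases hB : ∃ (g w : FreeGroup α) (s t : ℤ), g * u * g⁻¹ = w ^ s ∧ v = w ^ t
  · obtain ⟨g, w, s, t, hu, hv⟩ := hB
    have hw : w ≠ 1 := by
      rintro rfl
      rw [one_zpow] at hu hv
      exact h1 (isConj_iff.2 ⟨g, by rw [hu, hv]⟩)
    have hst : s.natAbs ≠ t.natAbs := by
      intro h
      rcases Int.natAbs_eq_natAbs_iff.1 h with rfl | rfl
      · exact h1 (isConj_iff.2 ⟨g, by rw [hu, hv]⟩)
      · exact h2 (isConj_iff.2 ⟨g, by rw [hu, hv, zpow_neg]⟩)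
    obtain ⟨Q, iQ, fQ, φ, h⟩ := case_b w hw _ _ hst
    refine ⟨Q, iQ, fQ, φ, ?_⟩
    rw [← order_zpow_natAbs, ← order_zpow_natAbs, ← map_zpow, ← map_zpow, ← hu, ← hv, map_mul,
      map_mul, map_inv, order_conj] at h
    exact h
  · have hu1 : u ≠ 1 := by
      rintro rfl
      exact hB ⟨1, v, 0, 1, by simp, by simp⟩
    have hv1 : v ≠ 1 := by
      rintro rfl
      exact hB ⟨1, u, 1, 0, by simp, by simp⟩
    obtain ⟨Lu, g, k, hk, hLu0, hLu, hu, hru⟩ := fg_root u hu1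
    obtain ⟨Lv, h, l, hl, hLv0, hLv, hv, hrv⟩ := fg_root v hv1
    have hind : ∀ (g : FreeGroup α) (n : ℕ), 0 < n →
        ¬ Commute (g * FreeGroup.mk Lu ^ n * g⁻¹) (FreeGroup.mk Lv) := by
      intro g' n hn hc
      have hz : g' * FreeGroup.mk Lu ^ n * g'⁻¹ ≠ 1 := by
        intro he
        rw [conj_eq_one_iff, pow_eq_one_iff_left (by omega)] at he
        rw [he, one_zpow, mul_one, mul_inv_cancel] at hu
        exact hu1 hu
      obtain ⟨w, hw⟩ := fg_centralizer _ hz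
      obtain ⟨j, hj⟩ := hw _ hc.symm
      obtain ⟨i, hi⟩ := hw (g' * FreeGroup.mk Lu * g'⁻¹) (by
        rw [← conj_pow]; exact Commute.self_pow _ _)
      apply hB
      refine ⟨h * g' * g⁻¹, h * w * h⁻¹, i * k, j * l, ?_, ?_⟩
      · simp only at hi
        rw [conj_zpow, zpow_mul, hi, conj_zpow, hu]
        group
      · simp only at hj
        rw [conj_zpow, zpow_mul, hj, hv]
    obtain ⟨p, hp, hlp, Q, iQ, fQ, ψ, hpu, hpv⟩ :=
      case_a Lu Lv hLu0 hLv0 hLu hLv hru hrv hind l.natAbs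
    refine ⟨Q, iQ, fQ, ψ, fun he => ?_⟩
    rw [hu, hv, map_mul, map_mul, map_mul, map_mul, map_inv, map_inv, order_conj, order_conj,
      map_zpow, map_zpow] at he
    have hd1 : ¬ p ∣ orderOf (ψ (FreeGroup.mk Lu) ^ k) := by
      rw [order_zpow_natAbs]
      exact fun hd => hpu (hd.trans (orderOf_pow_dvd _))
    apply hd1
    rw [he, order_zpow_natAbs]
    set y := ψ (FreeGroup.mk Lv) with hy
    have h3 : orderOf y ∣ l.natAbs * orderOf (y ^ l.natAbs) := by
      apply orderOf_dvd_of_pow_eq_one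
      rw [pow_mul, pow_orderOf_eq_one]
    rcases hp.dvd_mul.1 (hpv.trans h3) with h4 | h4
    · have := Nat.le_of_dvd (Int.natAbs_pos.2 hl) h4
      omega
    · exact h4

theorem semireg_cycleType {X : Type} [Fintype X] [DecidableEq X] (σ : Equiv.Perm X)
    (h1 : σ ≠ 1) (h : ∀ (m : ℕ) x, (σ ^ m) x = x → σ ^ m = 1) :
    ∃ r, σ.cycleType = Multiset.replicate r (orderOf σ) ∧ r * orderOf σ = Fintype.card X := by
  have hm : ∀ m ∈ σ.cycleType, m = orderOf σ := by
    intro m hm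
    have hd := Equiv.Perm.dvd_of_mem_cycleType hm
    rw [Equiv.Perm.cycleType_def, Multiset.mem_map] at hm
    obtain ⟨c, hc, rfl⟩ := hm
    have hc' : c ∈ σ.cycleFactorsFinset := hc
    obtain ⟨hcyc, hcs⟩ := Equiv.Perm.mem_cycleFactorsFinset_iff.1 hc'
    obtain ⟨x, hx, -⟩ := hcyc
    have hxs : x ∈ c.support := Equiv.Perm.mem_support.2 hx
    have e := Equiv.Perm.cycle_is_cycleOf hxs hc'
    apply Nat.dvd_antisymm hd
    apply orderOf_dvd_of_pow_eq_one
    apply h _ x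
    rw [← Equiv.Perm.cycleOf_pow_apply_self, ← e]
    simp only [Function.comp]
    rw [← (Equiv.Perm.mem_cycleFactorsFinset_iff.1 hc').1.orderOf, pow_orderOf_eq_one]
    rfl
  have hr := Multiset.eq_replicate_of_mem hm
  refine ⟨_, hr, ?_⟩
  have hs := σ.sum_cycleType
  rw [hr, Multiset.sum_replicate, smul_eq_mul] at hs
  rw [hs, ← Finset.card_univ]
  congr 1
  ext x
  simp only [Equiv.Perm.mem_support, Finset.mem_univ, iff_true]
  intro hx
  apply h1
  have := h 1 x (by rw [pow_one]; exact hx)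
  rwa [pow_one] at this

theorem semireg_conj {X : Type} [Finite X] (σ τ : Equiv.Perm X)
    (ho : orderOf σ = orderOf τ)
    (hσ : ∀ (m : ℕ) x, (σ ^ m) x = x → σ ^ m = 1)
    (hτ : ∀ (m : ℕ) x, (τ ^ m) x = x → τ ^ m = 1) : IsConj σ τ := by
  classical
  have := Fintype.ofFinite X
  by_cases h1 : σ = 1
  · have h2 : τ = 1 := by rw [← orderOf_eq_one_iff, ← ho, h1, orderOf_one]
    rw [h1, h2]
  · have h2 : τ ≠ 1 := by
      intro h
      apply h1
      rw [← orderOf_eq_one_iff, ho, h, orderOf_one]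
    rw [Equiv.Perm.isConj_iff_cycleType_eq]
    obtain ⟨r, hr, hr'⟩ := semireg_cycleType σ h1 hσ
    obtain ⟨s, hs, hs'⟩ := semireg_cycleType τ h2 hτ
    have : r = s := by
      apply Nat.eq_of_mul_eq_mul_right (orderOf_pos τ)
      rw [hs', ← hr', ho]
    rw [hr, hs, this, ho]

theorem perm_semireg {X : Type} [Group X] (g : X) (m : ℕ) (x : X)
    (h : (MulAction.toPermHom X X g ^ m) x = x) : MulAction.toPermHom X X g ^ m = 1 := by
  rw [← map_pow] at h ⊢
  have h' : g ^ m * x = x := h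
  rw [mul_eq_right] at h'
  rw [h', map_one]

theorem glue {Q₁ Q₂ : Type} [Group Q₁] [Group Q₂] [Finite Q₁] [Finite Q₂] (x : Q₁) (y : Q₂)
    (h : orderOf x = orderOf y) :
    ∃ (P : Type) (_ : Group P) (_ : Finite P) (f₁ : Q₁ →* P) (f₂ : Q₂ →* P),
      Function.Injective f₁ ∧ f₁ x = f₂ y := by
  let X := Q₁ × Q₂
  have hinj : Function.Injective (MulAction.toPermHom X X) := MulAction.toPerm_injective
  have hin : Function.Injective (MonoidHom.inl Q₁ Q₂) := fun a b hab => congrArg Prod.fst hab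
  have hir : Function.Injective (MonoidHom.inr Q₁ Q₂) := fun a b hab => congrArg Prod.snd hab
  have hc := semireg_conj (MulAction.toPermHom X X (MonoidHom.inr Q₁ Q₂ y))
    (MulAction.toPermHom X X (MonoidHom.inl Q₁ Q₂ x))
    (by rw [orderOf_injective _ hinj, orderOf_injective _ hinj, orderOf_injective _ hin,
      orderOf_injective _ hir, h])
    (perm_semireg _) (perm_semireg _)
  obtain ⟨c, hc⟩ := isConj_iff.1 hc
  refine ⟨Equiv.Perm X, inferInstance, inferInstance,
    (MulAction.toPermHom X X).comp (MonoidHom.inl Q₁ Q₂),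
    (MulAut.conj c).toMonoidHom.comp ((MulAction.toPermHom X X).comp (MonoidHom.inr Q₁ Q₂)),
    hinj.comp hin, ?_⟩
  exact hc.symm

theorem stmt11 {α β : Type} (a : FreeGroup α) (b : FreeGroup β)
    (ha : a ≠ 1) (hb : b ≠ 1)
    (u v : FreeGroup α)
    (h1 : ¬ IsConj u v) (h2 : ¬ IsConj u v⁻¹) :
    ∃ (Q : Type) (_ : Group Q) (_ : Finite Q)
      (φ : PushoutI (amalMaps a b) →* Q),
      Function.Surjective φ ∧
      orderOf (φ (PushoutI.of (φ := amalMaps a b) true u)) ≠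
        orderOf (φ (PushoutI.of (φ := amalMaps a b) true v)) := by
  obtain ⟨Q₁, _, _, φ₁, hne⟩ := fg_two_order_sep u v h1 h2
  obtain ⟨Q₂, _, _, φ₂, hord⟩ := fg_potent b hb (orderOf (φ₁ a)) (orderOf_pos _)
  obtain ⟨P, _, _, f₁, f₂, hinj, hf⟩ := glue (φ₁ a) (φ₂ b) hord.symm
  let f : ∀ i : Bool, fam α β i →* P := fun i =>
    match i with
    | true => f₁.comp φ₁
    | false => f₂.comp φ₂
  let Φ : PushoutI (amalMaps a b) →* P :=
    PushoutI.lift f (FreeGroup.lift fun _ => f₁ (φ₁ a)) (by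
      intro i
      cases i
      · apply FreeGroup.ext_hom
        intro s
        change f₂ (φ₂ (FreeGroup.lift (fun _ => b) (FreeGroup.of s))) =
          FreeGroup.lift (fun _ => f₁ (φ₁ a)) (FreeGroup.of s)
        rw [FreeGroup.lift_apply_of, FreeGroup.lift_apply_of, hf]
      · apply FreeGroup.ext_hom
        intro s
        change f₁ (φ₁ (FreeGroup.lift (fun _ => a) (FreeGroup.of s))) =
          FreeGroup.lift (fun _ => f₁ (φ₁ a)) (FreeGroup.of s)
        rw [FreeGroup.lift_apply_of, FreeGroup.lift_apply_of])
  have hΦ : ∀ w : FreeGroup α, Φ (PushoutI.of (φ := amalMaps a b) true w) = f₁ (φ₁ w) :=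
    fun w => PushoutI.lift_of (φ := amalMaps a b) f _ _ (i := true) w
  have hr : ∀ w : FreeGroup α,
      orderOf (Φ.rangeRestrict (PushoutI.of (φ := amalMaps a b) true w)) = orderOf (φ₁ w) := by
    intro w
    rw [← orderOf_injective Φ.range.subtype Subtype.val_injective]
    change orderOf (Φ (PushoutI.of (φ := amalMaps a b) true w)) = _
    rw [hΦ, orderOf_injective _ hinj]
  refine ⟨Φ.range, inferInstance, inferInstance, Φ.rangeRestrict,
    Φ.rangeRestrict_surjective, ?_⟩
  rw [hr, hr]
  exact hne
end
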